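/- arXiv:1708.02529 — 3 statements merged into one kernel-verified Lean document; each statement's English description precedes it below -/
import Mathlib

section
/- Let f be a minimal volume-preserving homeomorphism of T², isotopic to the identity, regularly semi-conjugate to the translation T_ω̄ with ω̄ ∈ ℝ²/ℤ² totally irrational, and let G⁰_f be the set of centralizers of f in Homeo(T², Vol) ∩ Homeo_*(T²). Then G⁰_f is isomorphic (as a group) to a subgroup of ℝ²/ℤ², and G⁰_f is compact in the C⁰ topology if and only if f is topologically linearizable. -/
open Filter Topology MeasureTheory

noncomputable section

/-- The plane ℝ². -/
abbrev R2 : Type := ℝ × ℝ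

/-- The Euclidean norm on ℝ². -/
def enorm2 (v : R2) : ℝ := Real.sqrt (v.1 ^ 2 + v.2 ^ 2)

/-- The two-torus 𝕋² = ℝ²/ℤ². -/
abbrev T2 : Type := AddCircle (1 : ℝ) × AddCircle (1 : ℝ)

/-- The covering projection π : ℝ² → 𝕋². -/
def pr2 (v : R2) : T2 := ((v.1 : AddCircle (1 : ℝ)), (v.2 : AddCircle (1 : ℝ)))

/-- The integer vector (v₁, v₂) regarded as a point of ℝ². -/
def intVec (v : ℤ × ℤ) : R2 := ((v.1 : ℝ), (v.2 : ℝ))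

/-- The distance on 𝕋² induced by the Euclidean metric on ℝ². -/
def distT2 (x y : T2) : ℝ :=
  sInf {r | ∃ a b : R2, pr2 a = x ∧ pr2 b = y ∧ r = enorm2 (a - b)}

/-- The C⁰ distance between two maps of 𝕋². -/
def dC0 (f g : T2 → T2) : ℝ := ⨆ x : T2, distT2 (f x) (g x)

/-- `F : ℝ² → ℝ²` is a lift of `f : 𝕋² → 𝕋²`, i.e. π ∘ F = f ∘ π. -/
def IsLift (F : R2 → R2) (f : T2 → T2) : Prop := ∀ z : R2, pr2 (F z) = f (pr2 z)

/-- `F` commutes with the deck transformations of π : ℝ² → 𝕋². -/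
def Equivariant (F : R2 → R2) : Prop :=
  ∀ (z : R2) (v : ℤ × ℤ), F (z + intVec v) = F z + intVec v

/-- `f` is a homeomorphism of 𝕋² isotopic to the identity (equivalently, admitting an
equivariant lift to ℝ²). -/
def IsotopicToId (f : T2 → T2) : Prop :=
  IsHomeomorph f ∧ ∃ F : R2 → R2, IsHomeomorph F ∧ IsLift F f ∧ Equivariant F

/-- The Misiurewicz–Ziemian rotation set of a lift `F`. -/
def rotSet (F : R2 → R2) : Set R2 :=
  {v | ∃ (z : ℕ → R2) (n : ℕ → ℕ), Tendsto n atTop atTop ∧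
      Tendsto (fun i => ((n i : ℝ))⁻¹ • (F^[n i] (z i) - z i)) atTop (𝓝 v)}

/-- Bounded mean motion, with bound κ, for a lift `F` with rotation vector `ω`:
‖Fⁿ(z) − z − nω‖ ≤ κ for all z and n. -/
def BoundedMeanMotion (F : R2 → R2) (ω : R2) (κ : ℝ) : Prop :=
  ∀ (z : R2) (n : ℕ), enorm2 (F^[n] z - z - (n : ℝ) • ω) ≤ κ

/-- The standard scalar product on ℝ². -/
def inner2 (u v : R2) : ℝ := u.1 * v.1 + u.2 * v.2

/-- v^⊥ = (−v₂, v₁)/‖v‖. -/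
def perp2 (v : R2) : R2 := (-v.2 / enorm2 v, v.1 / enorm2 v)

/-- Bounded deviation parallel to `v`, with bound κ, for a lift `F` with rotation vector `ω`:
|⟨Fⁿ(z) − z − nω, v^⊥⟩| ≤ κ for all z and n. -/
def BoundedDeviation (F : R2 → R2) (ω : R2) (v : R2) (κ : ℝ) : Prop :=
  ∀ (z : R2) (n : ℕ), |inner2 (F^[n] z - z - (n : ℝ) • ω) (perp2 v)| ≤ κ

/-- ‖ω‖_{𝕋²} = min over integer vectors z of ‖ω − z‖. -/
def normT2 (ω : R2) : ℝ := ⨅ v : ℤ × ℤ, enorm2 (ω - intVec v)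

/-- The super-Liouvillean condition: liminf_{n→∞} n⁻¹ ln ‖nω‖_{𝕋²} = −∞. -/
def SuperLiouville (ω : R2) : Prop :=
  ∀ M : ℝ, ∃ᶠ n : ℕ in atTop, (n : ℝ)⁻¹ * Real.log (normT2 ((n : ℝ) • ω)) < M

/-- The strong super-Liouvillean condition: liminf_{n→∞} n⁻¹ aⁿ ln ‖nω‖_{𝕋²} = −∞. -/
def StrongSuperLiouville (a : ℝ) (ω : R2) : Prop :=
  ∀ M : ℝ, ∃ᶠ n : ℕ in atTop, (n : ℝ)⁻¹ * a ^ n * Real.log (normT2 ((n : ℝ) • ω)) < M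

/-- ω ∈ ℝ² is irrational if ω ∉ ℚ². -/
def IrrationalVec (ω : R2) : Prop := ¬ ∃ q : ℚ × ℚ, ω = ((q.1 : ℝ), (q.2 : ℝ))

/-- ω is totally irrational if ω₁, ω₂, 1 are rationally independent. -/
def TotallyIrrationalVec (ω : R2) : Prop :=
  ∀ d1 d2 e : ℤ, (d1 : ℝ) * ω.1 + (d2 : ℝ) * ω.2 + (e : ℝ) = 0 → d1 = 0 ∧ d2 = 0 ∧ e = 0

/-- ω is semi-irrational: irrational but not totally irrational. -/
def SemiIrrationalVec (ω : R2) : Prop := IrrationalVec ω ∧ ¬ TotallyIrrationalVec ω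

/-- `v` is a character vector of the semi-irrational vector ω. -/
def IsCharacterVector (ω : R2) (v : R2) : Prop :=
  ∃ c d : ℤ, Int.gcd c d = 1 ∧ (∃ e : ℚ, (c : ℝ) * ω.1 + (d : ℝ) * ω.2 + (e : ℝ) = 0) ∧
    v = ((d : ℝ), (-c : ℝ))

/-- `f` is Hölder continuous with exponent `a`. -/
def HolderMap (a : ℝ) (f : T2 → T2) : Prop :=
  ∃ C : ℝ, ∀ x y : T2, distT2 (f x) (f y) ≤ C * distT2 x y ^ a

/-- C⁰-rigidity: liminf_{n→∞} d_{C⁰}(fⁿ, Id) = 0. -/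
def C0Rigid (f : T2 → T2) : Prop :=
  ∀ ε : ℝ, 0 < ε → ∃ᶠ n : ℕ in atTop, dC0 (f^[n]) id < ε

/-- `f` is a C^r diffeomorphism of 𝕋², expressed via a C^r lift with a C^r inverse. -/
def IsCrDiffeo (r : ℕ∞) (f : T2 → T2) : Prop :=
  ∃ F G : R2 → R2, IsLift F f ∧ Function.LeftInverse G F ∧ Function.RightInverse G F ∧
    ContDiff ℝ r F ∧ ContDiff ℝ r G

/-- C^k-rigidity: some sequence of iterates f^{n_j}, n_j → ∞, converges to the identity in the
C^k topology, i.e. admits lifts converging to the identity uniformly together with all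
derivatives of order ≤ k. -/
def CkRigid (k : ℕ∞) (f : T2 → T2) : Prop :=
  ∃ n : ℕ → ℕ, Tendsto n atTop atTop ∧
    ∃ F : ℕ → R2 → R2, (∀ j, IsLift (F j) (f^[n j])) ∧
      ∀ i : ℕ, (i : ℕ∞) ≤ k →
        Tendsto (fun j => ⨆ z : R2, ‖iteratedFDeriv ℝ i (fun w => F j w - w) z‖)
          atTop (𝓝 0)

/-- ‖x‖_𝕋 : the distance from x ∈ ℝ to the nearest integer. -/
def dT (x : ℝ) : ℝ := |x - round x|

/-- `q` is the sequence of denominators of the best rational approximations of β. -/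
def BestDenomSeq (β : ℝ) (q : ℕ → ℕ) : Prop :=
  q 0 = 1 ∧ ∀ n : ℕ,
    q n < q (n + 1) ∧
    (∀ m : ℕ, 1 ≤ m → m < q (n + 1) → dT ((q n : ℝ) * β) ≤ dT ((m : ℝ) * β)) ∧
    dT ((q n : ℝ) * β) < 1 / (q (n + 1) : ℝ)

/-- β is of non-Brjuno type: Σ_n (ln q_{n+1})/q_n = ∞. -/
def NonBrjunoNum (β : ℝ) : Prop :=
  ∀ q : ℕ → ℕ, BestDenomSeq β q → ¬ Summable fun n => Real.log (q (n + 1) : ℝ) / (q n : ℝ)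

/-- Character data of a semi-irrational vector ω: (c,d) ∈ ℤ² with gcd(c,d)=1 and
e = p/q ∈ ℚ in lowest terms with q > 0 such that c ω₁ + d ω₂ + p/q = 0. -/
def IsCharData (ω : R2) (c d p q : ℤ) : Prop :=
  Int.gcd c d = 1 ∧ Int.gcd p q = 1 ∧ 0 < q ∧
    (c : ℝ) * ω.1 + (d : ℝ) * ω.2 + (p : ℝ) / (q : ℝ) = 0

/-- ω is of strong non-Brjuno type: its character frequency 𝓕(ω̄) is of non-Brjuno type. -/
def StrongNonBrjuno (ω : R2) : Prop :=
  ∃ c d p q a b : ℤ, IsCharData ω c d p q ∧ a * d - b * c = 1 ∧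
    NonBrjunoNum (dT ((q : ℝ) * ((a : ℝ) * ω.1 + (b : ℝ) * ω.2)))

/-- The linear action of the integer matrix [[a,b],[c,d]] on ℝ². -/
def AactZ (a b c d : ℤ) (z : R2) : R2 :=
  ((a : ℝ) * z.1 + (b : ℝ) * z.2, (c : ℝ) * z.1 + (d : ℝ) * z.2)

/-- The operator norm (w.r.t. the Euclidean norm) of the matrix [[a,b],[c,d]]. -/
def AOpNormZ (a b c d : ℤ) : ℝ :=
  sSup {r | ∃ u : R2, enorm2 u ≤ 1 ∧
    r = enorm2 ((a : ℝ) * u.1 + (b : ℝ) * u.2, (c : ℝ) * u.1 + (d : ℝ) * u.2)}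

/-- Membership in the class 𝒞_{κ,ω̄}: pseudo-rotations with rotation vector ω̄ mod ℤ²
having bounded mean motion with bound κ. -/
def MemC (κ : ℝ) (w : T2) (f : T2 → T2) : Prop :=
  IsotopicToId f ∧ ∃ (F : R2 → R2) (ω : R2),
    IsLift F f ∧ rotSet F = {ω} ∧ pr2 ω = w ∧ BoundedMeanMotion F ω κ

/-- Membership in the class 𝒟_{κ,ω̄,v}: pseudo-rotations with rotation vector ω̄ mod ℤ²
having bounded deviation parallel to v with bound κ. -/
def MemD (κ : ℝ) (w : T2) (v : R2) (f : T2 → T2) : Prop :=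
  IsotopicToId f ∧ ∃ (F : R2 → R2) (ω : R2),
    IsLift F f ∧ rotSet F = {ω} ∧ pr2 ω = w ∧ BoundedDeviation F ω v κ

/-- `h : 𝕋² → 𝕋²` is homotopic to the identity (characterised by admitting an equivariant
continuous lift). -/
def HomotopicToIdMap (h : T2 → T2) : Prop :=
  ∃ H : R2 → R2, Continuous H ∧ IsLift H h ∧ Equivariant H

/-- `f` is regularly semi-conjugate to the translation T_w : x ↦ x + w, i.e. semi-conjugate via
a continuous surjection homotopic to the identity. -/
def RegSemiConj (f : T2 → T2) (w : T2) : Prop :=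
  ∃ h : T2 → T2, Continuous h ∧ Function.Surjective h ∧ HomotopicToIdMap h ∧
    ∀ x : T2, h (f x) = h x + w

/-- `f` is topologically conjugate to a translation of 𝕋². -/
def TopLinearizable (f : T2 → T2) : Prop :=
  ∃ (w : T2) (h : T2 → T2), IsHomeomorph h ∧ ∀ x : T2, h (f x) = h x + w

/-- `f` is minimal: every orbit is dense. -/
def MinimalMap (f : T2 → T2) : Prop :=
  ∀ x : T2, Dense (Set.range fun n : ℕ => f^[n] x)

/-- The open ball in 𝕋² for the Euclidean-induced distance. -/
def ballT2 (z : T2) (r : ℝ) : Set T2 := {y | distT2 z y < r}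

/-- The diameter of a subset of 𝕋² for the Euclidean-induced distance. -/
def diamT2 (S : Set T2) : ℝ := sSup {r | ∃ x ∈ S, ∃ y ∈ S, r = distT2 x y}

/-- The Euclidean diameter of a subset of ℝ². -/
def diamE (S : Set R2) : ℝ := sSup {r | ∃ x ∈ S, ∃ y ∈ S, r = enorm2 (x - y)}

/-- `F` is a bounded (measurable) fundamental domain for the ℤ²-action on ℝ². -/
def IsBoundedFundDom (F : Set R2) : Prop :=
  MeasurableSet F ∧ Bornology.IsBounded F ∧
    (∀ x : R2, ∃ v : ℤ × ℤ, x - intVec v ∈ F) ∧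
    ∀ v : ℤ × ℤ, v ≠ 0 → F ∩ ((fun x => x + intVec v) '' F) = ∅

/-- `D` is an open topological disc in 𝕋². -/
def IsTopDisc (D : Set T2) : Prop :=
  IsOpen D ∧ Nonempty (D ≃ₜ Metric.ball (0 : R2) 1)

/-- `D` is simple with respect to the fundamental domain `F`: some connected component of
π⁻¹(D) is contained in `F`. -/
def IsSimpleDisc (D : Set T2) (F : Set R2) : Prop :=
  ∃ x ∈ pr2 ⁻¹' D, connectedComponentIn (pr2 ⁻¹' D) x ⊆ F

/-- `u` is the rotation vector of `g`, defined as the mean displacement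
∫_{𝕋²} (g̃(x̃) − x̃) dλ(x) mod ℤ² of an equivariant lift `G` of `g`. -/
def IsRotOf (g : T2 → T2) (u : T2) : Prop :=
  ∃ (G : R2 → R2) (Φ : T2 → R2), Continuous G ∧ IsLift G g ∧ Equivariant G ∧
    (∀ z : R2, Φ (pr2 z) = G z - z) ∧ u = pr2 (∫ x : T2, Φ x)

/-- The set Γ = ((ℚ×ℝ)/ℤ²) ∪ ((ℝ×ℚ)/ℤ²) of points of 𝕋² with at least one rational
coordinate. -/
def GammaSet : Set T2 :=
  {x | (∃ q : ℚ, x.1 = ((q : ℝ) : AddCircle (1 : ℝ))) ∨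
       (∃ q : ℚ, x.2 = ((q : ℝ) : AddCircle (1 : ℝ)))}


theorem log_lift {E : Type*} [NormedAddCommGroup E] [NormedSpace ℝ E] {K : Set E}
    (hK : Convex ℝ K) (u : E → ℂ) (hu : ContinuousOn u K) (h0 : ∀ x ∈ K, u x ≠ 0) :
    ∃ L : E → ℂ, ContinuousOn L K ∧ ∀ x ∈ K, Complex.exp (L x) = u x := by
  classical
  rcases K.eq_empty_or_nonempty with rfl | ⟨k, hk⟩
  · exact ⟨fun _ => 0, by simp, by simp⟩
  have hmem : ∀ p : unitInterval × K, k + (p.1 : ℝ) • ((p.2 : E) - k) ∈ K := fun p =>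
    hK.add_smul_sub_mem hk p.2.2 p.1.2
  let H : C(unitInterval × K, {z : ℂ // z ≠ 0}) :=
    ⟨fun p => ⟨u (k + (p.1 : ℝ) • ((p.2 : E) - k)), h0 _ (hmem p)⟩, by
      refine Continuous.subtype_mk ?_ _
      exact hu.comp_continuous (by fun_prop) hmem⟩
  let f : C(K, ℂ) := ContinuousMap.const K (Complex.log (u k))
  have H0 : ∀ a, H (0, a) = (fun z : ℂ ↦ (⟨_, z.exp_ne_zero⟩ : {z : ℂ // z ≠ 0})) (f a) := by
    intro a
    apply Subtype.ext
    simp [H, f, Complex.exp_log (h0 k hk)]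
  let M := Complex.isCoveringMap_exp.liftHomotopy H f H0
  have hM := Complex.isCoveringMap_exp.liftHomotopy_lifts H f H0
  refine ⟨fun x => if hx : x ∈ K then M (1, ⟨x, hx⟩) else 0, ?_, ?_⟩
  · rw [continuousOn_iff_continuous_domRestrict]
    have : K.domRestrict (fun x => if hx : x ∈ K then M (1, ⟨x, hx⟩) else 0) = fun x : K => M (1, x) := by
      ext x; simp [Set.domRestrict]
    rw [this]
    fun_prop
  · intro x hx
    have := congrFun hM (1, ⟨x, hx⟩)
    have := congrArg Subtype.val this
    simp only [Function.comp, H, ContinuousMap.coe_mk] at this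
    simp only [hx, dif_pos]
    rw [this]; simp

theorem int_const {E : Type*} [TopologicalSpace E] {K : Set E} (hK : IsPreconnected K)
    {R : E → ℝ} (hR : ContinuousOn R K) (hm : Set.MapsTo R K (Set.range ((↑) : ℤ → ℝ)))
    {x y : E} (hx : x ∈ K) (hy : y ∈ K) : R x = R y := by
  have hd : IsDiscrete (Set.range ((↑) : ℤ → ℝ)) := by
    constructor
    exact Int.isClosedEmbedding_coe_real.isEmbedding.toHomeomorph.discreteTopology
  exact hK.constant_of_mapsTo hd hR hm hx hy

theorem const_of_exp {E : Type*} [TopologicalSpace E] {K : Set E} (hK : IsPreconnected K)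
    {L : E → ℂ} (hL : ContinuousOn L K) {ζ : ℂ} (h : ∀ x ∈ K, Complex.exp (L x) = ζ)
    {x y : E} (hx : x ∈ K) (hy : y ∈ K) : L x = L y := by
  have key : ∀ p ∈ K, ∃ n : ℤ, L p = L x + n * (2 * Real.pi * Complex.I) := by
    intro p hp
    exact Complex.exp_eq_exp_iff_exists_int.1 ((h p hp).trans (h x hx).symm)
  let R : E → ℝ := fun p => ((L p - L x) / (2 * Real.pi * Complex.I)).re
  have hne := Complex.two_pi_I_ne_zero
  have hR : ContinuousOn R K := by
    refine Complex.continuous_re.comp_continuousOn ?_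
    exact (hL.sub continuousOn_const).div_const _
  have hm : Set.MapsTo R K (Set.range ((↑) : ℤ → ℝ)) := by
    intro p hp
    obtain ⟨n, hn⟩ := key p hp
    refine ⟨n, ?_⟩
    simp only [R, hn, add_sub_cancel_left, mul_div_cancel_right₀ _ hne]
    simp
  have := int_const hK hR hm hx hy
  obtain ⟨n, hn⟩ := key y hy
  simp only [R, hn, add_sub_cancel_left, mul_div_cancel_right₀ _ hne, sub_self, zero_div] at this
  simp at this
  have h0 : n = 0 := by exact_mod_cast this.symm
  rw [hn, h0]; simp

/-- Angle cocycle. -/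
theorem exists_W (G : ℂ → ℂ) (hG : Continuous G) (hinj : Function.Injective G) (C : ℝ)
    (hC : ∀ x, ‖G x - x‖ ≤ C) :
    ∃ W : ℂ → ℂ → ℂ, Continuous (fun p : ℂ × ℂ => W p.1 p.2) ∧
      (∀ x u, Complex.exp (W x u) = (G (x + Complex.exp u) - G x) / Complex.exp u) ∧
      (∀ x u u', Complex.exp u = Complex.exp u' → W x u = W x u') ∧
      (∀ x u, W (x + Complex.exp u) (u + Real.pi * Complex.I) = W x u) := by
  obtain ⟨L, hL, hexp⟩ := log_lift (E := ℂ × ℂ) (K := Set.univ) convex_univ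
    (fun p => (G (p.1 + Complex.exp p.2) - G p.1) / Complex.exp p.2)
    (Continuous.continuousOn (by
      refine Continuous.div (by fun_prop) (by fun_prop) (fun p => Complex.exp_ne_zero _)))
    (by
      intro p _
      refine div_ne_zero (sub_ne_zero.2 ?_) (Complex.exp_ne_zero _)
      intro h
      have := hinj h
      simp at this)
  have hLc : Continuous L := continuousOn_univ.1 hL
  have hexp' : ∀ x u, Complex.exp (L (x, u)) = (G (x + Complex.exp u) - G x) / Complex.exp u :=
    fun x u => hexp (x, u) trivial
  have hC0 : 0 ≤ C := (norm_nonneg _).trans (hC 0)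
  -- periodicity
  have hper : ∀ x u, L (x, u + 2 * Real.pi * Complex.I) = L (x, u) := by
    have h1 : ∀ p q : ℂ × ℂ, L (p.1, p.2 + 2 * Real.pi * Complex.I) - L p
        = L (q.1, q.2 + 2 * Real.pi * Complex.I) - L q := by
      intro p q
      refine const_of_exp (K := Set.univ) (ζ := 1)
        (L := fun p : ℂ × ℂ => L (p.1, p.2 + 2 * Real.pi * Complex.I) - L p) isPreconnected_univ
        (by fun_prop) ?_ trivial trivial
      rintro ⟨x, u⟩ -
      simp only [Complex.exp_sub, hexp', Complex.exp_add, Complex.exp_two_pi_mul_I, mul_one]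
      rw [← hexp', div_self (Complex.exp_ne_zero _)]
    -- far region
    let R : ℝ := Real.log (2 * C + 1)
    have hfar : ∀ u : ℂ, R < u.re →
        (G (0 + Complex.exp u) - G 0) / Complex.exp u ∈ Complex.slitPlane := by
      intro u hu
      left
      have hn : 2 * C < ‖Complex.exp u‖ := by
        rw [Complex.norm_exp]
        have : 2 * C + 1 < Real.exp u.re := (Real.log_lt_iff_lt_exp (by linarith)).1 hu
        linarith
      have hpos : 0 < ‖Complex.exp u‖ := by linarith
      set v := Complex.exp u
      have hv : v ≠ 0 := Complex.exp_ne_zero u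
      have e : (G (0 + v) - G 0) / v = 1 + ((G (0 + v) - (0 + v)) - (G 0 - 0)) / v := by
        field_simp; ring
      rw [e]
      have hb : ‖((G (0 + v) - (0 + v)) - (G 0 - 0)) / v‖ < 1 := by
        rw [norm_div, div_lt_one hpos]
        calc _ ≤ ‖G (0 + v) - (0 + v)‖ + ‖G 0 - 0‖ := norm_sub_le _ _
          _ ≤ C + C := add_le_add (hC _) (hC _)
          _ < _ := by linarith
      have := (abs_le.1 (Complex.abs_re_le_norm (((G (0 + v) - (0 + v)) - (G 0 - 0)) / v))).1
      simp only [Complex.add_re, Complex.one_re]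
      linarith
    let K : Set ℂ := {u | R < u.re}
    have hKp : IsPreconnected K := (convex_halfSpace_re_gt R).isPreconnected
    have h2 : ∀ u ∈ K, ∀ u' ∈ K,
        L (0, u) - Complex.log ((G (0 + Complex.exp u) - G 0) / Complex.exp u)
        = L (0, u') - Complex.log ((G (0 + Complex.exp u') - G 0) / Complex.exp u') := by
      intro u hu u' hu'
      refine const_of_exp (K := K) (ζ := 1) (L := fun u =>
        L (0, u) - Complex.log ((G (0 + Complex.exp u) - G 0) / Complex.exp u)) hKp
        ?_ ?_ hu hu'
      · refine ContinuousOn.sub (Continuous.continuousOn (by fun_prop)) ?_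
        refine ContinuousOn.clog ?_ hfar
        exact Continuous.continuousOn (Continuous.div (by fun_prop) (by fun_prop)
          (fun p => Complex.exp_ne_zero _))
      · intro u hu
        rw [Complex.exp_sub, Complex.exp_log, hexp', ← hexp', div_self (Complex.exp_ne_zero _)]
        exact Complex.slitPlane_ne_zero (hfar u hu)
    have hk : ((R + 1 : ℝ) : ℂ) ∈ K := by simp [K]
    have hk' : ((R + 1 : ℝ) : ℂ) + 2 * Real.pi * Complex.I ∈ K := by simp [K]
    have h3 := h2 _ hk _ hk'
    rw [Complex.exp_add, Complex.exp_two_pi_mul_I, mul_one] at h3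
    intro x u
    have h4 := h1 (x, u) (0, ((R + 1 : ℝ) : ℂ))
    simp only at h4
    have h5 : L (0, ((R + 1 : ℝ) : ℂ)) = L (0, ((R + 1 : ℝ) : ℂ) + 2 * Real.pi * Complex.I) := by
      linear_combination h3
    rw [h5, sub_self] at h4
    linear_combination h4
  have hper' : ∀ x u u', Complex.exp u = Complex.exp u' → L (x, u) = L (x, u') := by
    intro x u u' h
    obtain ⟨n, hn⟩ := Complex.exp_eq_exp_iff_exists_int.1 h
    have hp : Function.Periodic (fun u => L (x, u)) (2 * Real.pi * Complex.I) := fun u => hper x u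
    have := hp.int_mul n u'
    rw [hn]; exact this
  refine ⟨fun x u => L (x, u), by simpa using hLc, hexp', hper', ?_⟩
  have hD : ∀ p q : ℂ × ℂ, L (p.1 + Complex.exp p.2, p.2 + Real.pi * Complex.I) - L p
        = L (q.1 + Complex.exp q.2, q.2 + Real.pi * Complex.I) - L q := by
    intro p q
    refine const_of_exp (K := Set.univ) (ζ := 1)
      (L := fun p : ℂ × ℂ => L (p.1 + Complex.exp p.2, p.2 + Real.pi * Complex.I) - L p)
      isPreconnected_univ (by fun_prop) ?_ trivial trivial
    rintro ⟨x, u⟩ -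
    simp only [Complex.exp_sub, hexp', Complex.exp_add, Complex.exp_pi_mul_I, mul_neg, mul_one,
      add_neg_cancel_right, div_neg]
    rw [← neg_div, neg_sub, ← hexp', div_self (Complex.exp_ne_zero _)]
  intro x u
  have h1 := hD (x, u) (x + Complex.exp u, u + Real.pi * Complex.I)
  simp only [Complex.exp_add, Complex.exp_pi_mul_I, mul_neg, mul_one, add_neg_cancel_right] at h1
  have h2 : L (x, u + Real.pi * Complex.I + Real.pi * Complex.I) = L (x, u) := by
    rw [← hper x u]; congr 2; ring
  rw [h2] at h1
  linear_combination h1 / 2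


theorem brouwer_core (G : ℂ → ℂ) (hG : Continuous G) (hinj : Function.Injective G) (C : ℝ)
    (hC : ∀ x, ‖G x - x‖ ≤ C) (hfix : ∀ x, G x ≠ x) (γ : ℝ → ℂ) (hγ : Continuous γ)
    (hγG : ∀ t, γ (t + 1) = G (γ t)) (hγi : ∀ s t, 0 < t - s → t - s ≤ 1 → γ s ≠ γ t) :
    ∀ s t, s < t → γ s ≠ γ t := by
  intro s₀ t₀ hst₀ heq₀
  have hd₀ : 1 ≤ t₀ - s₀ := by
    by_contra h
    exact hγi s₀ t₀ (by linarith) (by linarith) heq₀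
  -- minimal coincidence
  let K : Set (ℝ × ℝ) := {p | s₀ ≤ p.1 ∧ p.2 ≤ t₀ ∧ 1 ≤ p.2 - p.1 ∧ γ p.1 = γ p.2}
  have hKc : IsCompact K := by
    refine (isCompact_Icc (a := ((s₀, s₀) : ℝ × ℝ)) (b := (t₀, t₀))).of_isClosed_subset ?_ ?_
    · have c1 : IsClosed {p : ℝ × ℝ | s₀ ≤ p.1} := isClosed_le (by fun_prop) (by fun_prop)
      have c2 : IsClosed {p : ℝ × ℝ | p.2 ≤ t₀} := isClosed_le (by fun_prop) (by fun_prop)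
      have c3 : IsClosed {p : ℝ × ℝ | 1 ≤ p.2 - p.1} := isClosed_le (by fun_prop) (by fun_prop)
      have c4 : IsClosed {p : ℝ × ℝ | γ p.1 = γ p.2} := isClosed_eq (by fun_prop) (by fun_prop)
      exact c1.inter (c2.inter (c3.inter c4))
    · rintro ⟨a, b⟩ ⟨h1, h2, h3, -⟩
      simp only at h1 h2 h3
      exact ⟨⟨h1, by linarith⟩, ⟨by linarith, h2⟩⟩
  obtain ⟨⟨S, T⟩, ⟨hS, hT, hd1, hST⟩, hmin⟩ := hKc.exists_isMinOn ⟨(s₀, t₀), le_rfl, le_rfl, hd₀, heq₀⟩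
    (f := fun p => p.2 - p.1) (Continuous.continuousOn (by fun_prop))
  simp only at hS hT hd1 hST
  have hd : 1 < T - S := by
    rcases hd1.lt_or_eq with h | h
    · exact h
    · exfalso
      apply hγi S T (by linarith) (by linarith) hST
  have hnc : ∀ s t, S ≤ s → t ≤ T → 0 < t - s → t - s < T - S → γ s ≠ γ t := by
    intro s t h1 h2 h3 h4 h5
    by_cases h6 : t - s ≤ 1
    · exact hγi s t h3 h6 h5
    · have := hmin (a := (s, t)) ⟨by simp only; linarith, by simp only; linarith, by simp only; linarith, h5⟩
      simp only [Set.mem_ofPred_eq] at this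
      linarith
  clear hmin
  -- logs
  obtain ⟨W, hWc, hWe, hWp, hWs⟩ := exists_W G hG hinj C hC
  obtain ⟨θ, hθ, hθe⟩ := log_lift (K := (Set.univ : Set ℂ)) convex_univ (fun x => G x - x)
    (by fun_prop) (fun x _ => sub_ne_zero.2 (hfix x))
  have hθc : Continuous θ := continuousOn_univ.1 hθ
  replace hθe : ∀ x, Complex.exp (θ x) = G x - x := fun x => hθe x trivial
  have lin1 : IsLinearMap ℝ (fun p : ℝ × ℝ => p.1) := ⟨fun p q => by simp, fun a p => by simp⟩
  have lin2 : IsLinearMap ℝ (fun p : ℝ × ℝ => p.2) := ⟨fun p q => by simp, fun a p => by simp⟩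
  have lin3 : IsLinearMap ℝ (fun p : ℝ × ℝ => p.2 - p.1) :=
    ⟨fun p q => by simp; ring, fun a p => by simp; ring⟩
  have hpos : Convex ℝ {p : ℝ × ℝ | 0 < p.2 - p.1} := convex_halfSpace_gt lin3 0
  let Δ : Set (ℝ × ℝ) := {p | S ≤ p.1 ∧ p.2 ≤ T ∧ 0 < p.2 - p.1 ∧ p.2 - p.1 < T - S}
  have hΔ : Convex ℝ Δ := (convex_halfSpace_ge lin1 S).inter ((convex_halfSpace_le lin2 T).inter
    (hpos.inter (convex_halfSpace_lt lin3 (T - S))))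
  obtain ⟨A, hA, hAe⟩ := log_lift hΔ (fun p => γ p.2 - γ p.1) (by fun_prop)
    (by rintro ⟨s, t⟩ ⟨h1, h2, h3, h4⟩; exact sub_ne_zero.2 (hnc s t h1 h2 h3 h4).symm)
  replace hAe : ∀ s t, S ≤ s → t ≤ T → 0 < t - s → t - s < T - S →
      Complex.exp (A (s, t)) = γ t - γ s := fun s t h1 h2 h3 h4 => hAe (s, t) ⟨h1, h2, h3, h4⟩
  -- relation (3)
  have h3 : ∀ x y, W x (θ x) - (θ (G x) - θ x) = W y (θ y) - (θ (G y) - θ y) := by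
    intro x y
    refine const_of_exp (K := Set.univ) (ζ := 1) (L := fun x => W x (θ x) - (θ (G x) - θ x))
      isPreconnected_univ ?_ ?_ trivial trivial
    · refine Continuous.continuousOn (Continuous.sub ?_ (by fun_prop))
      exact hWc.comp (continuous_id.prodMk hθc)
    · intro x _
      have e1 := sub_ne_zero.2 (hfix x)
      have e2 := sub_ne_zero.2 (hfix (G x))
      rw [Complex.exp_sub, hWe, Complex.exp_sub, hθe, hθe, add_sub_cancel, div_self]
      exact div_ne_zero e2 e1
  -- relation (2)
  have h2 : ∀ t t', S ≤ t → t ≤ T - 1 → S ≤ t' → t' ≤ T - 1 →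
      θ (γ t) - A (t, t + 1) = θ (γ t') - A (t', t' + 1) := by
    intro t t' a1 a2 a3 a4
    refine const_of_exp (K := Set.Icc S (T - 1)) (ζ := 1) (L := fun t => θ (γ t) - A (t, t + 1))
      isPreconnected_Icc ?_ ?_ ⟨a1, a2⟩ ⟨a3, a4⟩
    · refine ContinuousOn.sub (by fun_prop) ?_
      refine hA.comp (by fun_prop) ?_
      rintro t ⟨b1, b2⟩
      exact ⟨b1, by simp only; linarith, by simp, by simpa using hd⟩
    · rintro t ⟨b1, b2⟩
      rw [Complex.exp_sub, hθe, hAe t (t + 1) b1 (by linarith) (by simp) (by simpa using hd), hγG,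
        div_self (sub_ne_zero.2 (hfix _))]
  have h2W : ∀ t, S ≤ t → t ≤ T - 1 → W (γ t) (θ (γ t)) = W (γ t) (A (t, t + 1)) := by
    intro t b1 b2
    apply hWp
    rw [hθe, hAe t (t + 1) b1 (by linarith) (by simp) (by simpa using hd), hγG]
  -- relation (4)
  have h4 : A (S + 1, T) - A (S, S + 1) = A (T - 1, T) - A (S, T - 1) := by
    refine const_of_exp (K := Set.Ioo S T) (ζ := -1) (L := fun u => A (u, T) - A (S, u))
      isPreconnected_Ioo ?_ ?_ ⟨by linarith, by linarith⟩ ⟨by linarith, by linarith⟩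
    · refine ContinuousOn.sub (hA.comp (by fun_prop) ?_) (hA.comp (by fun_prop) ?_)
      · rintro u ⟨b1, b2⟩
        exact ⟨b1.le, le_rfl, by simp only; linarith, by simp only; linarith⟩
      · rintro u ⟨b1, b2⟩
        exact ⟨le_rfl, b2.le, by simp only; linarith, by simp only; linarith⟩
    · rintro u ⟨b1, b2⟩
      have e := sub_ne_zero.2 (hnc S u le_rfl b2.le (by linarith) (by linarith)).symm
      rw [Complex.exp_sub, hAe u T b1.le le_rfl (by linarith) (by linarith),
        hAe S u le_rfl b2.le (by linarith) (by linarith), ← hST]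
      field_simp
      ring
  have h4e : Complex.exp (A (S + 1, T) - A (S, S + 1)) = -1 := by
    have e := sub_ne_zero.2 (hnc S (S + 1) le_rfl (by linarith) (by linarith) (by linarith)).symm
    rw [Complex.exp_sub, hAe (S + 1) T (by linarith) le_rfl (by linarith) (by linarith),
        hAe S (S + 1) le_rfl (by linarith) (by linarith) (by linarith), ← hST]
    field_simp
    ring
  -- key relation
  have key : W (γ S) (A (S, T - 1)) - (A (S + 1, T) - A (S, T - 1)) =
      W (γ S) (θ (γ S)) - (θ (G (γ S)) - θ (γ S)) := by
    by_cases hd2 : 2 ≤ T - S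
    · have h1 : W (γ S) (A (S, T - 1)) - (A (S + 1, (T - 1) + 1) - A (S, T - 1)) =
          W (γ S) (A (S, S + 1)) - (A (S + 1, (S + 1) + 1) - A (S, S + 1)) := by
        refine const_of_exp (K := Set.Icc (S + 1) (T - 1)) (ζ := 1)
          (L := fun t => W (γ S) (A (S, t)) - (A (S + 1, t + 1) - A (S, t))) isPreconnected_Icc
          ?_ ?_ ⟨by linarith, le_rfl⟩ ⟨le_rfl, by linarith⟩
        · have c1 : ContinuousOn (fun t => A (S, t)) (Set.Icc (S + 1) (T - 1)) := by
            refine hA.comp (by fun_prop) ?_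
            rintro t ⟨b1, b2⟩
            exact ⟨le_rfl, by simp only; linarith, by simp only; linarith, by simp only; linarith⟩
          have c2 : ContinuousOn (fun t => A (S + 1, t + 1)) (Set.Icc (S + 1) (T - 1)) := by
            refine hA.comp (by fun_prop) ?_
            rintro t ⟨b1, b2⟩
            exact ⟨by simp only; linarith, by simp only; linarith, by simp only; linarith,
              by simp only; linarith⟩
          refine ContinuousOn.sub ?_ (c2.sub c1)
          exact hWc.comp_continuousOn (continuousOn_const.prodMk c1)
        · rintro t ⟨b1, b2⟩
          have e := sub_ne_zero.2 (hnc S t le_rfl (by linarith) (by linarith) (by linarith)).symm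
          have e' := sub_ne_zero.2 (hnc (S + 1) (t + 1) (by linarith) (by linarith) (by linarith)
            (by linarith)).symm
          rw [Complex.exp_sub, hWe, Complex.exp_sub,
            hAe S t le_rfl (by linarith) (by linarith) (by linarith),
            hAe (S + 1) (t + 1) (by linarith) (by linarith) (by linarith) (by linarith),
            add_sub_cancel, ← hγG, ← hγG, div_self (div_ne_zero e' e)]
      rw [sub_add_cancel, ← h2W S le_rfl (by linarith)] at h1
      have h5 := h2 S (S + 1) le_rfl (by linarith) (by linarith) (by linarith)
      rw [h1, ← hγG]
      linear_combination -h5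
    · push Not at hd2
      let B₀ : Set (ℝ × ℝ) := {p | 0 < p.2 - p.1 ∧ p.2 - p.1 ≤ 1}
      have hB₀ : Convex ℝ B₀ := hpos.inter (convex_halfSpace_le lin3 1)
      obtain ⟨B, hB, hBe⟩ := log_lift hB₀ (fun p => γ p.2 - γ p.1) (by fun_prop)
        (by rintro ⟨s, t⟩ ⟨h3, h4⟩; exact sub_ne_zero.2 (hγi s t h3 h4).symm)
      replace hBe : ∀ s t, 0 < t - s → t - s ≤ 1 →
        Complex.exp (B (s, t)) = γ t - γ s := fun s t h3 h4 => hBe (s, t) ⟨h3, h4⟩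
      have hAB : ∀ p ∈ Δ ∩ B₀, ∀ q ∈ Δ ∩ B₀, A p - B p = A q - B q := by
        intro p hp q hq
        refine const_of_exp (K := Δ ∩ B₀) (ζ := 1) (L := fun p => A p - B p)
          (hΔ.inter hB₀).isPreconnected ?_ ?_ hp hq
        · exact (hA.mono Set.inter_subset_left).sub (hB.mono Set.inter_subset_right)
        · rintro ⟨s, t⟩ ⟨⟨a1, a2, a3, a4⟩, ⟨b1, b2⟩⟩
          rw [Complex.exp_sub, hAe s t a1 a2 a3 a4, hBe s t b1 b2,
            div_self (sub_ne_zero.2 (hγi s t b1 b2).symm)]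
      have h1 : W (γ S) (B (S, T - 1)) - (B (S + 1, (T - 1) + 1) - B (S, T - 1)) =
          W (γ S) (B (S, S + 1)) - (B (S + 1, (S + 1) + 1) - B (S, S + 1)) := by
        refine const_of_exp (K := Set.Icc (T - 1) (S + 1)) (ζ := 1)
          (L := fun t => W (γ S) (B (S, t)) - (B (S + 1, t + 1) - B (S, t))) isPreconnected_Icc
          ?_ ?_ ⟨le_rfl, by linarith⟩ ⟨by linarith, le_rfl⟩
        · have c1 : ContinuousOn (fun t => B (S, t)) (Set.Icc (T - 1) (S + 1)) := by
            refine hB.comp (by fun_prop) ?_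
            rintro t ⟨b1, b2⟩
            exact ⟨by simp only; linarith, by simp only; linarith⟩
          have c2 : ContinuousOn (fun t => B (S + 1, t + 1)) (Set.Icc (T - 1) (S + 1)) := by
            refine hB.comp (by fun_prop) ?_
            rintro t ⟨b1, b2⟩
            exact ⟨by simp only; linarith, by simp only; linarith⟩
          refine ContinuousOn.sub ?_ (c2.sub c1)
          exact hWc.comp_continuousOn (continuousOn_const.prodMk c1)
        · rintro t ⟨b1, b2⟩
          have e := sub_ne_zero.2 (hγi S t (by linarith) (by linarith)).symm
          have e' := sub_ne_zero.2 (hγi (S + 1) (t + 1) (by linarith) (by linarith)).symm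
          rw [Complex.exp_sub, hWe, Complex.exp_sub,
            hBe S t (by linarith) (by linarith),
            hBe (S + 1) (t + 1) (by linarith) (by linarith),
            add_sub_cancel, ← hγG, ← hγG, div_self (div_ne_zero e' e)]
      have h5 : θ (γ S) - B (S, S + 1) = θ (γ (S + 1)) - B (S + 1, S + 1 + 1) := by
        refine const_of_exp (K := Set.univ) (ζ := 1) (L := fun t => θ (γ t) - B (t, t + 1))
          isPreconnected_univ ?_ ?_ trivial trivial
        · refine ContinuousOn.sub (by fun_prop) ?_
          refine hB.comp (by fun_prop) ?_
          rintro t -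
          exact ⟨by simp, by simp⟩
        · rintro t -
          rw [Complex.exp_sub, hθe, hBe t (t + 1) (by simp) (by simp), hγG,
            div_self (sub_ne_zero.2 (hfix _))]
      have h6 : W (γ S) (θ (γ S)) = W (γ S) (B (S, S + 1)) := by
        apply hWp
        rw [hθe, hBe S (S + 1) (by simp) (by simp), hγG]
      have h7 : W (γ S) (A (S, T - 1)) = W (γ S) (B (S, T - 1)) := by
        apply hWp
        rw [hAe S (T - 1) le_rfl (by linarith) (by linarith) (by linarith),
          hBe S (T - 1) (by linarith) (by linarith)]
      have h8 := hAB (S + 1, T)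
        ⟨⟨by simp only; linarith, by simp only; linarith, by simp only; linarith,
          by simp only; linarith⟩, ⟨by simp only; linarith, by simp only; linarith⟩⟩ (S, T - 1)
        ⟨⟨by simp only; linarith, by simp only; linarith, by simp only; linarith,
          by simp only; linarith⟩, ⟨by simp only; linarith, by simp only; linarith⟩⟩
      rw [sub_add_cancel, ← h6, ← h7] at h1
      rw [← hγG]
      linear_combination h1 - h8 - h5
  -- final contradiction
  have hTS : G (γ (T - 1)) = γ S := by rw [← hγG, sub_add_cancel, hST]
  have f1 := h3 (γ (T - 1)) (γ S)
  rw [hTS] at f1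
  have f2 := hWs (γ S) (A (S, T - 1))
  have f3 : γ S + Complex.exp (A (S, T - 1)) = γ (T - 1) := by
    rw [hAe S (T - 1) le_rfl (by linarith) (by linarith) (by linarith)]; ring
  rw [f3] at f2
  have f4 : W (γ (T - 1)) (A (S, T - 1) + Real.pi * Complex.I) = W (γ (T - 1)) (θ (γ (T - 1))) := by
    apply hWp
    rw [Complex.exp_add, Complex.exp_pi_mul_I, hθe, hTS,
      hAe S (T - 1) le_rfl (by linarith) (by linarith) (by linarith)]
    ring
  have f5 := h2 S (T - 1) le_rfl (by linarith) (by linarith) le_rfl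
  rw [sub_add_cancel] at f5
  have f6 : A (S + 1, T) - A (S, S + 1) = 0 := by
    linear_combination (f1 - key + f4 - f2 + f5 + h4) / 2
  rw [f6] at h4e
  norm_num at h4e


/-- concatenation of the images of an arc -/
theorem exists_gamma (G : ℂ ≃ₜ ℂ) (α : ℝ → ℂ) (hα : Continuous α) (h01 : G (α 0) = α 1) :
    ∃ γ : ℝ → ℂ, Continuous γ ∧ (∀ t, γ (t + 1) = G (γ t)) ∧
      (∀ (n : ℤ) t, 0 ≤ t → t ≤ 1 → γ (t + n) = (G ^ n) (α t)) := by
  let γ : ℝ → ℂ := fun t => (G ^ ⌊t⌋) (α (Int.fract t))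
  have hform : ∀ (n : ℤ) t, 0 ≤ t → t ≤ 1 → γ (t + n) = (G ^ n) (α t) := by
    intro n t h0 h1
    rcases h1.lt_or_eq with h | rfl
    · have : ⌊t + n⌋ = n := by
        rw [Int.floor_add_intCast, Int.floor_eq_zero_iff.2 ⟨h0, h⟩, zero_add]
      simp only [γ, this, Int.fract_add_intCast, Int.fract_eq_self.2 ⟨h0, h⟩]
    · have : ⌊(1 : ℝ) + n⌋ = n + 1 := by
        rw [Int.floor_add_intCast]; simp [add_comm]
      simp only [γ, this, Int.fract_add_intCast, Int.fract_one, zpow_add_one, Homeomorph.mul_apply,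
        h01]
  have hon : ∀ n : ℤ, ContinuousOn γ (Set.Icc (n : ℝ) (n + 1)) := by
    intro n
    have : ContinuousOn (fun t : ℝ => (G ^ n) (α (t - n))) (Set.Icc (n : ℝ) (n + 1)) :=
      Continuous.continuousOn (by fun_prop)
    refine this.congr ?_
    rintro t ⟨h1, h2⟩
    have := hform n (t - n) (by linarith) (by linarith)
    rwa [sub_add_cancel] at this
  refine ⟨γ, ?_, ?_, hform⟩
  · rw [continuous_iff_continuousAt]
    intro t
    rw [continuousAt_iff_continuous_left_right]
    constructor
    · have h1 : ((⌈t⌉ - 1 : ℤ) : ℝ) < t := by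
        push_cast; linarith [Int.ceil_lt_add_one t]
      have h2 : t ≤ ((⌈t⌉ - 1 : ℤ) : ℝ) + 1 := by
        push_cast; linarith [Int.le_ceil t]
      refine (hon (⌈t⌉ - 1) t ⟨h1.le, h2⟩).mono_of_mem_nhdsWithin ?_
      have : Set.Icc ((⌈t⌉ - 1 : ℤ) : ℝ) t ∈ 𝓝[≤] t := Icc_mem_nhdsLE h1
      exact Filter.mem_of_superset this (Set.Icc_subset_Icc_right h2)
    · refine (hon ⌊t⌋ t ⟨Int.floor_le t, (Int.lt_floor_add_one t).le⟩).mono_of_mem_nhdsWithin ?_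
      have : Set.Icc t ((⌊t⌋ : ℝ) + 1) ∈ 𝓝[≥] t := Icc_mem_nhdsGE (Int.lt_floor_add_one t)
      exact Filter.mem_of_superset this (Set.Icc_subset_Icc_left (Int.floor_le t))
  · intro t
    simp only [γ, Int.floor_add_one, Int.fract_add_one]
    rw [add_comm, zpow_one_add, Homeomorph.mul_apply]

theorem brouwer_ball (G : ℂ ≃ₜ ℂ) (C : ℝ) (hC : ∀ x, ‖G x - x‖ ≤ C) (hfix : ∀ x, G x ≠ x)
    (z : ℂ) : ∃ r > 0, ∀ n : ℕ, 1 ≤ n → (G ^ (n : ℤ)) z ∉ Metric.ball z r := by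
  -- touching ball
  let F : ℂ → ℝ := fun a => max ‖a - z‖ ‖G a - z‖
  have hF : Continuous F := by fun_prop
  have hFt : Tendsto F (cocompact ℂ) atTop := by
    refine tendsto_atTop_mono (fun a => le_max_left _ _) ?_
    have := tendsto_norm_cocompact_atTop (E := ℂ)
    refine this.comp ?_
    exact (Homeomorph.subRight z).isClosedEmbedding.tendsto_cocompact
  obtain ⟨y', hy'⟩ := hF.exists_forall_le hFt
  set r := F y' with hr
  have hrpos : 0 < r := by
    rcases (le_max_of_le_left (norm_nonneg _) : 0 ≤ F y').lt_or_eq with h | h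
    · exact h
    · exfalso
      have h1 : ‖y' - z‖ ≤ 0 := h ▸ le_max_left _ _
      have h2 : ‖G y' - z‖ ≤ 0 := h ▸ le_max_right _ _
      rw [norm_le_zero_iff, sub_eq_zero] at h1 h2
      exact hfix y' (h2.trans h1.symm)
  have hfree : ∀ a, ‖a - z‖ < r → ‖G a - z‖ < r → False := fun a h1 h2 =>
    absurd (hy' a) (not_le.2 (max_lt h1 h2))
  have hcl : ∀ a, ‖a - z‖ ≤ r → a ∈ closure {b | ‖b - z‖ < r} := by
    intro a ha
    have : {b | ‖b - z‖ < r} = Metric.ball z r := by ext b; simp [dist_eq_norm]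
    rw [this, closure_ball z hrpos.ne']
    simpa [dist_eq_norm] using ha
  have hy1 : ‖y' - z‖ = r := by
    refine le_antisymm (le_max_left _ _) (not_lt.1 fun h => ?_)
    have ho : IsOpen (G.symm ⁻¹' {b | ‖b - z‖ < r}) :=
      (isOpen_lt (by fun_prop) (by fun_prop)).preimage G.symm.continuous
    obtain ⟨b, hb1, hb2⟩ := mem_closure_iff.1 (hcl (G y') (le_max_right _ _)) _ ho (by simpa using h)
    exact hfree (G.symm b) hb1 (by simpa using hb2)
  have hy2 : ‖G y' - z‖ = r := by
    refine le_antisymm (le_max_right _ _) (not_lt.1 fun h => ?_)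
    have ho : IsOpen (G ⁻¹' {b | ‖b - z‖ < r}) :=
      (isOpen_lt (by fun_prop) (by fun_prop)).preimage G.continuous
    obtain ⟨b, hb1, hb2⟩ := mem_closure_iff.1 (hcl y' (le_max_left _ _)) _ ho h
    exact hfree b hb2 hb1
  clear_value r
  set y := G y' with hy
  have hyy : y ≠ y' := hfix y'
  refine ⟨r, hrpos, ?_⟩
  intro n hn hmem
  set q := (G ^ (n : ℤ)) z with hq
  have hq' : ‖q - z‖ < r := by simpa [dist_eq_norm] using hmem
  have hyz : y - z ≠ 0 := by rw [← norm_pos_iff, hy2]; exact hrpos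
  -- the arc
  let ρ : ℝ := ‖q - z‖ / r
  have hρ0 : 0 ≤ ρ := by positivity
  have hρ1 : ρ < 1 := (div_lt_one hrpos).2 hq'
  let κ : ℝ := Complex.arg ((q - z) / (y - z)) / (1 - ρ)
  let leg : ℝ → ℂ := fun t => (max (1 - 2 * t) 0 : ℝ) * (y' - z) + (max (2 * t - 1) 0 : ℝ) * (y - z)
  let α : ℝ → ℂ := fun t => z + Complex.exp ((κ * (1 - |2 * t - 1|) : ℝ) * Complex.I) * leg t
  have hα : Continuous α := by fun_prop
  have leg1 : ∀ t ≤ 1 / 2, leg t = ((1 - 2 * t : ℝ) : ℂ) * (y' - z) := by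
    intro t ht
    simp only [leg]
    rw [max_eq_left (by linarith), max_eq_right (by linarith)]; simp
  have leg2 : ∀ t, 1 / 2 ≤ t → leg t = ((2 * t - 1 : ℝ) : ℂ) * (y - z) := by
    intro t ht
    simp only [leg]
    rw [max_eq_right (by linarith), max_eq_left (by linarith)]; simp
  have hnorm : ∀ t, ‖α t - z‖ = |2 * t - 1| * r := by
    intro t
    simp only [α, add_sub_cancel_left, norm_mul, Complex.norm_exp_ofReal_mul_I, one_mul]
    rcases le_total t (1 / 2) with h | h
    · rw [leg1 t h, norm_mul, hy1, Complex.norm_real, Real.norm_eq_abs, abs_sub_comm]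
    · rw [leg2 t h, norm_mul, hy2, Complex.norm_real, Real.norm_eq_abs]
  have hin : ∀ t, 0 < t → t < 1 → ‖α t - z‖ < r := by
    intro t h0 h1
    rw [hnorm]
    have : |2 * t - 1| < 1 := by rw [abs_lt]; constructor <;> linarith
    nlinarith
  have hα0 : α 0 = y' := by
    simp only [α]; rw [leg1 0 (by norm_num)]; simp
  have hα1 : α 1 = y := by
    simp only [α]; rw [leg2 1 (by norm_num)]; norm_num
  have hinj : ∀ s t, 0 ≤ s → s < t → t ≤ 1 → α s ≠ α t := by
    intro s t h0 hst h1 he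
    have hn := hnorm s
    rw [he, hnorm t] at hn
    have habs : |2 * t - 1| = |2 * s - 1| := mul_right_cancel₀ hrpos.ne' hn
    have hts : 2 * t - 1 = 1 - 2 * s := by
      rcases abs_eq_abs.1 habs with h | h <;> linarith
    have hs : s < 1 / 2 := by linarith
    simp only [α, habs, add_right_inj] at he
    have := mul_left_cancel₀ (Complex.exp_ne_zero _) he
    rw [leg1 s hs.le, leg2 t (by linarith), hts] at this
    have h3 : ((1 - 2 * s : ℝ) : ℂ) ≠ 0 := by
      rw [Complex.ofReal_ne_zero]; linarith
    have := mul_left_cancel₀ h3 this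
    exact hyy (sub_left_injective this).symm
  obtain ⟨γ, hγ, hγG, hγf⟩ := exists_gamma G α hα (by rw [hα0, hα1])
  have hγi : ∀ s t, 0 < t - s → t - s ≤ 1 → γ s ≠ γ t := by
    intro s t h1 h2 he
    rcases h2.lt_or_eq with h2 | h2
    swap
    · have : t = s + 1 := by linarith
      rw [this, hγG] at he
      exact hfix _ he.symm
    have f0 := Int.floor_le s
    have f1 := Int.lt_floor_add_one s
    have e1 := hγf ⌊s⌋ (s - ⌊s⌋) (by linarith) (by linarith)
    rw [sub_add_cancel] at e1
    by_cases h3 : t - ⌊s⌋ ≤ 1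
    · have e2 := hγf ⌊s⌋ (t - ⌊s⌋) (by linarith) h3
      rw [sub_add_cancel] at e2
      rw [e1, e2] at he
      exact hinj _ _ (by linarith) (by linarith) h3 ((G ^ ⌊s⌋).injective he)
    · push Not at h3
      have e2 := hγf (⌊s⌋ + 1) (t - (⌊s⌋ + 1 : ℤ)) (by push_cast; linarith) (by push_cast; linarith)
      rw [sub_add_cancel, zpow_add_one, Homeomorph.mul_apply] at e2
      rw [e1, e2] at he
      have := (G ^ ⌊s⌋).injective he
      refine hfree (α (t - (⌊s⌋ + 1 : ℤ))) (hin _ (by push_cast; linarith) (by push_cast; linarith)) ?_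
      rw [← this]
      exact hin _ (by push_cast at *; linarith) (by linarith)
  -- coincidence
  have hc1 : γ ((1 / 2 : ℝ) + (n : ℤ)) = q := by
    rw [hγf n (1 / 2) (by norm_num) (by norm_num), hq]
    congr 1
    simp only [α]
    rw [leg1 _ le_rfl]; norm_num
  have hc2 : γ ((1 + ρ) / 2) = q := by
    have := hγf 0 ((1 + ρ) / 2) (by linarith) (by linarith)
    simp only [Int.cast_zero, add_zero, zpow_zero, Homeomorph.one_apply] at this
    rw [this]
    simp only [α]
    rw [leg2 _ (by linarith)]
    have e1 : 2 * ((1 + ρ) / 2) - 1 = ρ := by ring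
    have e2 : κ * (1 - ρ) = Complex.arg ((q - z) / (y - z)) :=
      div_mul_cancel₀ _ (by linarith)
    rw [e1, abs_of_nonneg hρ0, e2]
    have e3 : ρ = ‖(q - z) / (y - z)‖ := by rw [norm_div, hy2]
    have e4 := Complex.norm_mul_exp_arg_mul_I ((q - z) / (y - z))
    rw [← mul_assoc, e3, mul_comm (Complex.exp _), e4, div_mul_cancel₀ _ hyz]
    ring
  refine brouwer_core G G.continuous G.injective C hC hfix γ hγ hγG hγi ((1 + ρ) / 2)
    ((1 / 2 : ℝ) + (n : ℤ)) ?_ (hc2.trans hc1.symm)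
  have : (1 : ℝ) ≤ n := by exact_mod_cast hn
  push_cast
  linarith


theorem pr2_cont : Continuous pr2 := by
  unfold pr2
  exact ((AddCircle.continuous_mk' 1).comp continuous_fst).prodMk
    ((AddCircle.continuous_mk' 1).comp continuous_snd)

theorem pr2_surj (x : T2) : ∃ z, pr2 z = x := by
  obtain ⟨x, y⟩ := x
  obtain ⟨a, rfl⟩ := QuotientAddGroup.mk_surjective x
  obtain ⟨b, rfl⟩ := QuotientAddGroup.mk_surjective y
  exact ⟨(a, b), rfl⟩

theorem pr2_add (a b : R2) : pr2 (a + b) = pr2 a + pr2 b := by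
  simp [pr2]

theorem pr2_eq_iff (a b : R2) : pr2 a = pr2 b ↔ ∃ v : ℤ × ℤ, a = b + intVec v := by
  constructor
  · intro h
    simp only [pr2, Prod.mk.injEq] at h
    obtain ⟨h1, h2⟩ := h
    rw [eq_comm, QuotientAddGroup.eq, AddSubgroup.mem_zmultiples_iff] at h1 h2
    obtain ⟨m, hm⟩ := h1
    obtain ⟨n, hn⟩ := h2
    refine ⟨(m, n), ?_⟩
    simp only [smul_eq_mul, zsmul_eq_mul, mul_one] at hm hn
    ext <;> simp [intVec] <;> linarith
  · rintro ⟨v, rfl⟩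
    rw [pr2_add]
    have : pr2 (intVec v) = 0 := by
      simp only [pr2, intVec]
      ext <;> simp [AddCircle.coe_eq_zero_iff]
    rw [this, add_zero]

theorem pr2_open : IsOpenMap pr2 := by
  have : pr2 = Prod.map ((↑) : ℝ → AddCircle (1:ℝ)) ((↑) : ℝ → AddCircle (1:ℝ)) := rfl
  rw [this]
  exact QuotientAddGroup.isOpenMap_coe.prodMap QuotientAddGroup.isOpenMap_coe

theorem intVec_inj {u v : ℤ × ℤ} (h : intVec u = intVec v) : u = v := by
  simp only [intVec, Prod.mk.injEq, Int.cast_inj] at h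
  exact Prod.ext h.1 h.2

theorem intVec_add (u v : ℤ × ℤ) : intVec (u + v) = intVec u + intVec v := by
  simp [intVec]

theorem intVec_neg (u : ℤ × ℤ) : intVec (-u) = - intVec u := by
  simp [intVec]

/-- two continuous lifts of the same map differ by a constant integer vector -/
theorem lift_diff_const {A B : R2 → R2} (hA : Continuous A) (hB : Continuous B)
    (h : ∀ z, pr2 (A z) = pr2 (B z)) : ∃ v : ℤ × ℤ, ∀ z, A z = B z + intVec v := by
  have h' : ∀ z, ∃ v : ℤ × ℤ, A z = B z + intVec v := fun z => (pr2_eq_iff _ _).1 (h z)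
  obtain ⟨v, hv⟩ := h' 0
  refine ⟨v, fun z => ?_⟩
  have e1 : (A z - B z).1 = (A 0 - B 0).1 := by
    refine int_const (K := Set.univ) (R := fun z => (A z - B z).1) isPreconnected_univ
      (by fun_prop) ?_ (Set.mem_univ z) (Set.mem_univ 0)
    intro x _
    obtain ⟨u, hu⟩ := h' x
    exact ⟨u.1, by simp [hu, intVec]⟩
  have e2 : (A z - B z).2 = (A 0 - B 0).2 := by
    refine int_const (K := Set.univ) (R := fun z => (A z - B z).2) isPreconnected_univ
      (by fun_prop) ?_ (Set.mem_univ z) (Set.mem_univ 0)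
    intro x _
    obtain ⟨u, hu⟩ := h' x
    exact ⟨u.2, by simp [hu, intVec]⟩
  have : A z - B z = intVec v := by
    rw [Prod.ext e1 e2, hv]; simp
  rw [← this]; simp

theorem equivariant_bounded {F : R2 → R2} (hF : Continuous F) (hE : Equivariant F) :
    ∃ C, ∀ x, ‖F x - x‖ ≤ C := by
  obtain ⟨C, hC⟩ := (isCompact_Icc (a := (0 : R2)) (b := 1)).exists_bound_of_continuousOn
    (f := fun x => F x - x) (by fun_prop)
  refine ⟨C, fun x => ?_⟩
  let v : ℤ × ℤ := (⌊x.1⌋, ⌊x.2⌋)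
  let y : R2 := (Int.fract x.1, Int.fract x.2)
  have hxy : x = y + intVec v := by
    ext <;> simp [y, intVec, v]
  have := hC y ⟨⟨Int.fract_nonneg _, Int.fract_nonneg _⟩,
    ⟨(Int.fract_lt_one _).le, (Int.fract_lt_one _).le⟩⟩
  rw [hxy, hE]
  simpa using this

theorem brouwer_R2 (G : R2 ≃ₜ R2) (C : ℝ) (hC : ∀ x, ‖G x - x‖ ≤ C) (hfix : ∀ x, G x ≠ x) (z : R2) :
    ∃ r > 0, ∀ n : ℕ, 1 ≤ n → (G^[n]) z ∉ Metric.ball z r := by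
  let e : ℂ ≃L[ℝ] R2 := Complex.equivRealProdCLM
  let G' : ℂ ≃ₜ ℂ := (e.toHomeomorph.trans G).trans e.symm.toHomeomorph
  have hG' : ∀ x, G' x = e.symm (G (e x)) := fun x => rfl
  have hpow : ∀ n : ℕ, ∀ x, (G' ^ (n : ℤ)) x = e.symm (G^[n] (e x)) := by
    intro n
    induction n with
    | zero => intro x; simp
    | succ n ih =>
      intro x
      rw [Function.iterate_succ_apply', zpow_natCast, pow_succ', Homeomorph.mul_apply, hG',
        ← zpow_natCast, ih]
      simp
  obtain ⟨r, hr, h⟩ := brouwer_ball G' (‖(e.symm : R2 →L[ℝ] ℂ)‖ * C) (by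
    intro x
    rw [hG']
    have : e.symm (G (e x)) - x = (e.symm : R2 →L[ℝ] ℂ) (G (e x) - e x) := by simp
    rw [this]
    exact (ContinuousLinearMap.le_opNorm _ _).trans
      (mul_le_mul_of_nonneg_left (hC _) (norm_nonneg _))) (by
    intro x hx
    rw [hG'] at hx
    exact hfix (e x) (e.symm_apply_eq.1 hx)) (e.symm z)
  have hc : ContinuousAt e.symm z := e.symm.continuous.continuousAt
  obtain ⟨s, hs, hs'⟩ := Metric.continuousAt_iff.1 hc r hr
  refine ⟨s, hs, fun n hn hmem => h n hn ?_⟩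
  rw [hpow]
  simp only [ContinuousLinearEquiv.apply_symm_apply]
  exact hs' hmem

theorem fixed_point {k : T2 → T2} {K : R2 → R2} (hK : IsHomeomorph K) (hl : IsLift K k)
    (hE : Equivariant K) (hm : MeasurePreserving k (volume : Measure T2) volume)
    {h : T2 → T2} {H : R2 → R2} (hH : Continuous H) (hHl : IsLift H h) (hHE : Equivariant H)
    (hk : ∀ x, h (k x) = h x) : ∃ x, k x = x := by
  obtain ⟨v, hv⟩ := lift_diff_const (A := fun z => H (K z)) (B := H) (hH.comp hK.continuous) hH
    (fun z => by rw [hHl, hl, hk, hHl])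
  let G : R2 ≃ₜ R2 := hK.homeomorph.trans (Homeomorph.addRight (-intVec v))
  have hG : ∀ x, G x = K x + intVec (-v) := fun x => by rw [intVec_neg]; rfl
  have hGE : Equivariant G := by
    intro z u
    rw [hG, hG, hE]; abel
  have hGl : IsLift G k := by
    intro z
    rw [hG, ← hl, pr2_eq_iff]
    exact ⟨-v, rfl⟩
  have hHG : ∀ z, H (G z) = H z := by
    intro z
    rw [hG, hHE, hv, intVec_neg]; abel
  by_contra! hno
  have hfix : ∀ x, G x ≠ x := by
    intro x hx
    apply hno (pr2 x)
    rw [← hGl, hx]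
  obtain ⟨C, hC⟩ := equivariant_bounded G.continuous hGE
  have hrec := (hm.conservative).ae_frequently_mem_of_mem_nhds
  obtain ⟨x, hx⟩ := hrec.exists
  obtain ⟨z, rfl⟩ := pr2_surj x
  obtain ⟨r, hr, hb⟩ := brouwer_R2 G C hC hfix z
  obtain ⟨s, hs, hs'⟩ := Metric.continuousAt_iff.1 (hH.continuousAt (x := z)) 1 one_pos
  have hnh : pr2 '' (Metric.ball z (min r s)) ∈ 𝓝 (pr2 z) :=
    pr2_open.image_mem_nhds (Metric.ball_mem_nhds _ (lt_min hr hs))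
  obtain ⟨n, hn, hn1⟩ := ((hx _ hnh).and_eventually (eventually_ge_atTop 1)).exists
  obtain ⟨u, hu, hun⟩ := hn
  have hit : ∀ n : ℕ, ∀ z, pr2 (G^[n] z) = k^[n] (pr2 z) ∧ H (G^[n] z) = H z := by
    intro n
    induction n with
    | zero => intro z; simp
    | succ n ih =>
      intro z
      rw [Function.iterate_succ_apply', Function.iterate_succ_apply', hGl, (ih z).1, hHG, (ih z).2]
      exact ⟨rfl, rfl⟩
  rw [← (hit n z).1, eq_comm, pr2_eq_iff] at hun
  obtain ⟨q, hq⟩ := hun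
  have h1 := (hit n z).2
  rw [hq, hHE] at h1
  have h2 := hs' (lt_of_lt_of_le (Metric.mem_ball.1 hu) (min_le_right _ _))
  rw [dist_eq_norm, ← h1] at h2
  have h3 : ‖intVec q‖ < 1 := by
    have : H u - (H u + intVec q) = - intVec q := by abel
    rwa [this, norm_neg] at h2
  rw [Prod.norm_def, max_lt_iff] at h3
  simp only [intVec, Real.norm_eq_abs] at h3
  have q1 : q.1 = 0 := by
    have := h3.1; rw [← Int.cast_abs] at this
    exact Int.abs_lt_one_iff.1 (by exact_mod_cast this)
  have q2 : q.2 = 0 := by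
    have := h3.2; rw [← Int.cast_abs] at this
    exact Int.abs_lt_one_iff.1 (by exact_mod_cast this)
  have hq0 : intVec q = 0 := by simp [intVec, q1, q2]
  rw [hq0, add_zero] at hq
  apply hb n hn1
  rw [hq]
  exact Metric.ball_subset_ball (min_le_left _ _) hu


/-- a continuous `f`-invariant function is constant. -/
theorem const_of_minimal {f : T2 → T2} (hmin : MinimalMap f) {u : T2 → T2} (hu : Continuous u)
    (hinv : ∀ x, u (f x) = u x) (x y : T2) : u x = u y := by
  have hcl : IsClosed {z | u z = u y} := isClosed_eq hu continuous_const
  have hsub : (Set.range fun n : ℕ => f^[n] y) ⊆ {z | u z = u y} := by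
    rintro _ ⟨n, rfl⟩
    show u (f^[n] y) = u y
    induction n with
    | zero => rfl
    | succ n ih => rw [Function.iterate_succ_apply', hinv, ih]
  have := (hcl.closure_subset_iff.2 hsub)
  rw [(hmin y).closure_eq] at this
  exact this (Set.mem_univ x)

theorem eq_of_commute {f : T2 → T2} (hmin : MinimalMap f) {g g' : C(T2, T2)}
    (hg : ⇑g ∘ f = f ∘ ⇑g) (hg' : ⇑g' ∘ f = f ∘ ⇑g') {x : T2} (hx : g x = g' x) : g = g' := by
  have hcl : IsClosed {z | g z = g' z} := isClosed_eq g.continuous g'.continuous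
  have hsub : (Set.range fun n : ℕ => f^[n] x) ⊆ {z | g z = g' z} := by
    rintro _ ⟨n, rfl⟩
    show g (f^[n] x) = g' (f^[n] x)
    induction n with
    | zero => exact hx
    | succ n ih =>
      rw [Function.iterate_succ_apply']
      have a := congrFun hg (f^[n] x)
      have b := congrFun hg' (f^[n] x)
      simp only [Function.comp] at a b
      rw [a, b, ih]
  have := (hcl.closure_subset_iff.2 hsub)
  rw [(hmin x).closure_eq] at this
  ext1 y
  exact this (Set.mem_univ y)

/-- the group of centralizers -/
def GFset (f : T2 → T2) : Set C(T2, T2) := {g : C(T2, T2) | IsHomeomorph ⇑g ∧ IsotopicToId ⇑g ∧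
      MeasurePreserving ⇑g (volume : Measure T2) volume ∧ ⇑g ∘ f = f ∘ ⇑g}

theorem IsotopicToId.comp {g g' : T2 → T2} (h : IsotopicToId g) (h' : IsotopicToId g') :
    IsotopicToId (g ∘ g') := by
  obtain ⟨a, F, b, c, d⟩ := h
  obtain ⟨a', F', b', c', d'⟩ := h'
  refine ⟨a.comp a', F ∘ F', b.comp b', ?_, ?_⟩
  · intro z; simp only [Function.comp]; rw [c, c']
  · intro z v; simp only [Function.comp]; rw [d', d]

theorem GF_comp {f : T2 → T2} {g g' : C(T2, T2)} (h : g ∈ GFset f) (h' : g' ∈ GFset f) :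
    g.comp g' ∈ GFset f := by
  obtain ⟨a, b, c, d⟩ := h
  obtain ⟨a', b', c', d'⟩ := h'
  refine ⟨a.comp a', b.comp b', c.comp c', ?_⟩
  funext x
  have e := congrFun d (g' x)
  have e' := congrFun d' x
  simp only [Function.comp, ContinuousMap.comp_apply] at e e' ⊢
  rw [e', e]

theorem GF_id {f : T2 → T2} : ContinuousMap.id T2 ∈ GFset f :=
  ⟨IsHomeomorph.id, ⟨IsHomeomorph.id, id, IsHomeomorph.id, fun _ => rfl, fun _ _ => rfl⟩,
    MeasurePreserving.id _, rfl⟩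

theorem GF_iter {f : T2 → T2} (hiso : IsotopicToId f)
    (hmp : MeasurePreserving f (volume : Measure T2) volume) (n : ℕ) :
    (⟨f^[n], hiso.1.continuous.iterate n⟩ : C(T2, T2)) ∈ GFset f := by
  have h1 : (⟨f, hiso.1.continuous⟩ : C(T2, T2)) ∈ GFset f := ⟨hiso.1, hiso, hmp, rfl⟩
  induction n with
  | zero => exact GF_id
  | succ n ih =>
    have := GF_comp ih h1
    exact this

theorem GF_fixed {f : T2 → T2} {h : T2 → T2} {H : R2 → R2} (hH : Continuous H)
    (hHl : IsLift H h) (hHE : Equivariant H)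
    {g g' : C(T2, T2)} (hg : g ∈ GFset f) (hg' : g' ∈ GFset f) (hh : ∀ x, h (g x) = h (g' x)) :
    ∃ x, g x = g' x := by
  obtain ⟨a, ⟨-, F, b, c, d⟩, m, -⟩ := hg
  obtain ⟨a', ⟨-, F', b', c', d'⟩, m', -⟩ := hg'
  have hkey : ∃ x, g ((IsHomeomorph.homeomorph _ a').symm x) = x := by
    refine fixed_point (k := fun x => g ((IsHomeomorph.homeomorph _ a').symm x))
      (K := F ∘ (IsHomeomorph.homeomorph _ b').symm) (b.comp (IsHomeomorph.homeomorph _ b').symm.isHomeomorph) ?_ ?_ ?_ hH hHl hHE ?_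
    · intro z
      obtain ⟨y, rfl⟩ := (IsHomeomorph.homeomorph _ b').surjective z
      have e1 : (IsHomeomorph.homeomorph _ b') y = F' y := rfl
      simp only [Function.comp, Homeomorph.symm_apply_apply]
      rw [c, e1, c']
      have : g' (pr2 y) = (IsHomeomorph.homeomorph _ a') (pr2 y) := rfl
      rw [this, Homeomorph.symm_apply_apply]
    · intro z v
      simp only [Function.comp]
      rw [← d]
      congr 1
      rw [Homeomorph.symm_apply_eq]
      show _ = F' _
      rw [d']
      congr 1
      exact ((IsHomeomorph.homeomorph _ b').apply_symm_apply z).symm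
    · refine m.comp ?_
      have : MeasurePreserving (IsHomeomorph.homeomorph _ a').toMeasurableEquiv (volume : Measure T2) volume := m'
      exact this.symm
    · intro x
      rw [hh]
      congr 1
      exact (IsHomeomorph.homeomorph _ a').apply_symm_apply x
  obtain ⟨x, hx⟩ := hkey
  refine ⟨(IsHomeomorph.homeomorph _ a').symm x, ?_⟩
  rw [hx]
  exact ((IsHomeomorph.homeomorph _ a').apply_symm_apply x).symm

theorem Phi_spec {f : T2 → T2} {w : T2} (hmin : MinimalMap f) {h : T2 → T2} (hc : Continuous h)
    (hf : ∀ x, h (f x) = h x + w) {g : C(T2, T2)} (hg : ⇑g ∘ f = f ∘ ⇑g) (x : T2) :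
    h (g x) = h x + (h (g 0) - h 0) := by
  have := const_of_minimal hmin (u := fun x => h (g x) - h x) (by fun_prop) (by
    intro x
    have e := congrFun hg x
    simp only [Function.comp] at e
    simp only [e, hf]; abel) x 0
  rw [← this]; abel

theorem part_one {f : T2 → T2} {w : T2} (hmin : MinimalMap f) (hsc : RegSemiConj f w) :
    ∃ Φ : C(T2, T2) → T2, Set.InjOn Φ (GFset f) ∧
      (∀ g ∈ GFset f, ∀ g' ∈ GFset f, g.comp g' ∈ GFset f ∧ Φ (g.comp g') = Φ g + Φ g') := by
  obtain ⟨h, hc, hs, ⟨H, hH, hHl, hHE⟩, hf⟩ := hsc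
  refine ⟨fun g => h (g 0) - h 0, ?_, ?_⟩
  · intro g hg g' hg' he
    simp only at he
    obtain ⟨x, hx⟩ := GF_fixed hH hHl hHE hg hg' (fun x => by
      rw [Phi_spec hmin hc hf hg.2.2.2, Phi_spec hmin hc hf hg'.2.2.2, he])
    exact eq_of_commute hmin hg.2.2.2 hg'.2.2.2 hx
  · intro g hg g' hg'
    refine ⟨GF_comp hg hg', ?_⟩
    simp only [ContinuousMap.comp_apply]
    rw [Phi_spec hmin hc hf hg.2.2.2 (g' 0)]
    abel

theorem part_two {f : T2 → T2} {w : T2} (hiso : IsotopicToId f)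
    (hmp : MeasurePreserving f (volume : Measure T2) volume) (hmin : MinimalMap f)
    (hsc : RegSemiConj f w) (hK : IsCompact (GFset f)) : TopLinearizable f := by
  obtain ⟨h, hc, hs, ⟨H, hH, hHl, hHE⟩, hf⟩ := hsc
  have hev : Continuous (fun g : C(T2, T2) => g 0) := ContinuousEvalConst.continuous_eval_const 0
  have hcl : IsClosed ((fun g : C(T2, T2) => g 0) '' GFset f) := (hK.image hev).isClosed
  have hall : ∀ x, ∃ g ∈ GFset f, g 0 = x := by
    intro x
    have hsub : (Set.range fun n : ℕ => f^[n] 0) ⊆ ((fun g : C(T2, T2) => g 0) '' GFset f) := by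
      rintro _ ⟨n, rfl⟩
      exact ⟨_, GF_iter hiso hmp n, rfl⟩
    have := (hcl.closure_subset_iff.2 hsub)
    rw [(hmin 0).closure_eq] at this
    exact this (Set.mem_univ x)
  have hinj : Function.Injective h := by
    intro x y hxy
    obtain ⟨g, hg, rfl⟩ := hall x
    obtain ⟨g', hg', rfl⟩ := hall y
    obtain ⟨x, hx⟩ := GF_fixed hH hHl hHE hg hg' (fun x => by
      rw [Phi_spec hmin hc hf hg.2.2.2, Phi_spec hmin hc hf hg'.2.2.2, hxy])
    rw [eq_of_commute hmin hg.2.2.2 hg'.2.2.2 hx]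
  exact ⟨w, h, isHomeomorph_iff_continuous_bijective.2 ⟨hc, hinj, hs⟩, hf⟩


theorem lift_diff_const' {X : Type*} [TopologicalSpace X] [PreconnectedSpace X] (x₀ : X)
    {A B : X → R2} (hA : Continuous A) (hB : Continuous B)
    (h : ∀ z, pr2 (A z) = pr2 (B z)) (z : X) : A z - B z = A x₀ - B x₀ := by
  have h' : ∀ z, ∃ v : ℤ × ℤ, A z = B z + intVec v := fun z => (pr2_eq_iff _ _).1 (h z)
  have e1 : (A z - B z).1 = (A x₀ - B x₀).1 := by
    refine int_const (K := Set.univ) (R := fun z => (A z - B z).1) isPreconnected_univ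
      (by fun_prop) ?_ (Set.mem_univ z) (Set.mem_univ x₀)
    intro x _
    obtain ⟨u, hu⟩ := h' x
    exact ⟨u.1, by simp [hu, intVec]⟩
  have e2 : (A z - B z).2 = (A x₀ - B x₀).2 := by
    refine int_const (K := Set.univ) (R := fun z => (A z - B z).2) isPreconnected_univ
      (by fun_prop) ?_ (Set.mem_univ z) (Set.mem_univ x₀)
    intro x _
    obtain ⟨u, hu⟩ := h' x
    exact ⟨u.2, by simp [hu, intVec]⟩
  exact Prod.ext e1 e2

/-- conjugated translation -/
def Ktr (e : T2 ≃ₜ T2) (a x : T2) : T2 := e.symm (e x + a)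

theorem Ktr_cont (e : T2 ≃ₜ T2) : Continuous (fun p : T2 × T2 => Ktr e p.1 p.2) := by
  unfold Ktr
  have := e.continuous
  have := e.symm.continuous
  fun_prop

theorem Ktr_comp (e : T2 ≃ₜ T2) (a b x : T2) : Ktr e a (Ktr e b x) = Ktr e (b + a) x := by
  simp [Ktr, add_assoc]

theorem Ktr_zero (e : T2 ≃ₜ T2) (x : T2) : Ktr e 0 x = x := by
  simp [Ktr]

theorem pr2_zero : pr2 0 = 0 := rfl

theorem Ktr_lift (e : T2 ≃ₜ T2) (b : R2) :
    ∃ E : R2 → R2, Continuous E ∧ IsLift E (Ktr e (pr2 b)) ∧ Equivariant E := by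
  have hJ : Continuous (fun p : unitInterval × R2 => Ktr e (pr2 ((p.1 : ℝ) • b)) (pr2 p.2)) := by
    refine (Ktr_cont e).comp (Continuous.prodMk (pr2_cont.comp ?_) (pr2_cont.comp continuous_snd))
    fun_prop
  let cov := AddCircle.isCoveringMap_coe (1 : ℝ)
  let H1 : C(unitInterval × R2, AddCircle (1:ℝ)) := ⟨_, hJ.fst⟩
  let H2 : C(unitInterval × R2, AddCircle (1:ℝ)) := ⟨_, hJ.snd⟩
  have h1 : ∀ a : R2, H1 (0, a) = (((⟨Prod.fst, continuous_fst⟩ : C(R2, ℝ)) a : ℝ) : AddCircle (1:ℝ)) := by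
    intro a
    simp [H1, pr2_zero, Ktr_zero]
    rfl
  have h2 : ∀ a : R2, H2 (0, a) = (((⟨Prod.snd, continuous_snd⟩ : C(R2, ℝ)) a : ℝ) : AddCircle (1:ℝ)) := by
    intro a
    simp [H2, pr2_zero, Ktr_zero]
    rfl
  let L : unitInterval × R2 → R2 := fun p =>
    (cov.liftHomotopy H1 _ h1 p, cov.liftHomotopy H2 _ h2 p)
  have hLc : Continuous L := (map_continuous _).prodMk (map_continuous _)
  have hLl : ∀ p, pr2 (L p) = Ktr e (pr2 ((p.1 : ℝ) • b)) (pr2 p.2) := by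
    intro p
    exact Prod.ext (congrFun (cov.liftHomotopy_lifts H1 _ h1) p)
      (congrFun (cov.liftHomotopy_lifts H2 _ h2) p)
  have hL0 : ∀ z, L (0, z) = z := by
    intro z
    exact Prod.ext (cov.liftHomotopy_zero H1 _ h1 z) (cov.liftHomotopy_zero H2 _ h2 z)
  refine ⟨fun z => L (1, z), hLc.comp (by fun_prop), ?_, ?_⟩
  · intro z
    rw [hLl]; simp
  · intro z v
    have := lift_diff_const' (X := unitInterval) 0 (A := fun t => L (t, z + intVec v))
      (B := fun t => L (t, z)) (hLc.comp (by fun_prop)) (hLc.comp (by fun_prop)) (by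
        intro t
        rw [hLl, hLl]
        congr 1
        exact (pr2_eq_iff _ _).2 ⟨v, rfl⟩) 1
    simp only [hL0] at this
    rw [sub_eq_iff_eq_add] at this
    simp only [this]
    abel

theorem Ktr_homeo (e : T2 ≃ₜ T2) (a : T2) : IsHomeomorph (Ktr e a) := by
  let E : T2 ≃ₜ T2 :=
    { toFun := Ktr e a
      invFun := Ktr e (-a)
      left_inv := fun x => by rw [Ktr_comp]; simp [Ktr_zero]
      right_inv := fun x => by rw [Ktr_comp]; simp [Ktr_zero]
      continuous_toFun := (Ktr_cont e).comp (by fun_prop : Continuous fun x : T2 => (a, x))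
      continuous_invFun := (Ktr_cont e).comp (by fun_prop : Continuous fun x : T2 => (-a, x)) }
  exact E.isHomeomorph

theorem Ktr_isotopic (e : T2 ≃ₜ T2) (a : T2) : IsotopicToId (Ktr e a) := by
  refine ⟨Ktr_homeo e a, ?_⟩
  obtain ⟨b, rfl⟩ := pr2_surj a
  obtain ⟨E, hc, hl, hE⟩ := Ktr_lift e b
  obtain ⟨E', hc', hl', hE'⟩ := Ktr_lift e (-b)
  have hb : pr2 b + pr2 (-b) = 0 := by rw [← pr2_add, add_neg_cancel, pr2_zero]
  obtain ⟨v, hv⟩ := lift_diff_const (A := fun z => E' (E z)) (B := id) (hc'.comp hc) continuous_id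
    (fun z => by rw [hl', hl, Ktr_comp, hb, Ktr_zero]; rfl)
  obtain ⟨v', hv'⟩ := lift_diff_const (A := fun z => E (E' z)) (B := id) (hc.comp hc') continuous_id
    (fun z => by rw [hl, hl', Ktr_comp, add_comm, hb, Ktr_zero]; rfl)
  simp only [id] at hv hv'
  have hvv : intVec v = intVec v' := by
    have h1 := hv (E' 0)
    rw [hv', hE'] at h1
    exact (add_left_cancel h1).symm
  let F : R2 ≃ₜ R2 :=
    { toFun := E
      invFun := fun z => E' z + intVec (-v)
      left_inv := fun x => by simp only [hv, intVec_neg]; abel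
      right_inv := fun x => by simp only []; rw [hE, hv', intVec_neg, hvv]; abel
      continuous_toFun := hc
      continuous_invFun := by fun_prop }
  exact ⟨E, F.isHomeomorph, hl, hE⟩

theorem iter_eq_Ktr {f : T2 → T2} (e : T2 ≃ₜ T2) {w : T2} (hf : ∀ x, e (f x) = e x + w) (n : ℕ)
    (x : T2) : f^[n] x = Ktr e (n • w) x := by
  rw [Ktr, Homeomorph.eq_symm_apply]
  induction n with
  | zero => simp
  | succ n ih => rw [Function.iterate_succ_apply', hf, ih, succ_nsmul]; abel

theorem Ktr_mp {f : T2 → T2} (hmp : MeasurePreserving f (volume : Measure T2) volume)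
    (hmin : MinimalMap f) (e : T2 ≃ₜ T2) {w : T2} (hf : ∀ x, e (f x) = e x + w) (a : T2) :
    MeasurePreserving (Ktr e a) (volume : Measure T2) volume := by
  have hm : Measurable (Ktr e a) := (Ktr_homeo e a).continuous.measurable
  refine ⟨hm, ?_⟩
  have : IsFiniteMeasure (Measure.map (Ktr e a) (volume : Measure T2)) := inferInstance
  refine ext_of_forall_integral_eq_of_IsFiniteMeasure fun φ => ?_
  rw [integral_map hm.aemeasurable φ.continuous.aestronglyMeasurable]
  have hcl : IsClosed {a | ∫ x, φ (Ktr e a x) = ∫ x, φ x} := by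
    refine isClosed_eq ?_ continuous_const
    have := continuous_parametric_integral_of_continuous (μ := (volume : Measure T2))
      (f := fun a x => φ (Ktr e a x)) (φ.continuous.comp (Ktr_cont e)) (s := Set.univ)
      isCompact_univ
    simpa using this
  have hsub : (Set.range fun n : ℕ => f^[n] (e.symm 0)) ⊆
      e ⁻¹' {a | ∫ x, φ (Ktr e a x) = ∫ x, φ x} := by
    rintro _ ⟨n, rfl⟩
    show ∫ x, φ (Ktr e (e (f^[n] (e.symm 0))) x) = ∫ x, φ x
    have h1 : e (f^[n] (e.symm 0)) = n • w := by
      rw [iter_eq_Ktr e hf]; simp [Ktr]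
    have hn : MeasurePreserving (f^[n]) (volume : Measure T2) volume := hmp.iterate n
    simp only [h1, ← iter_eq_Ktr e hf]
    rw [← integral_map hn.measurable.aemeasurable φ.continuous.aestronglyMeasurable, hn.map_eq]
  have := ((hcl.preimage e.continuous).closure_subset_iff.2 hsub)
  rw [(hmin _).closure_eq] at this
  have := this (Set.mem_univ (e.symm a))
  simpa using this

theorem part_three {f : T2 → T2}
    (hmp : MeasurePreserving f (volume : Measure T2) volume) (hmin : MinimalMap f)
    (hL : TopLinearizable f) : IsCompact (GFset f) := by
  obtain ⟨w, h, hh, hf⟩ := hL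
  let e : T2 ≃ₜ T2 := IsHomeomorph.homeomorph h hh
  have he : ∀ x, e (f x) = e x + w := hf
  let K : C(T2, C(T2, T2)) := ContinuousMap.curry ⟨_, Ktr_cont e⟩
  have hK : ∀ a x, K a x = Ktr e a x := fun a x => rfl
  have hfK : ∀ x, f x = Ktr e w x := fun x => by
    rw [Ktr, Homeomorph.eq_symm_apply, he]
  have : GFset f = Set.range K := by
    ext g
    constructor
    · rintro ⟨-, -, -, hg⟩
      refine ⟨e (g 0) - e 0, ?_⟩
      ext1 x
      rw [hK, Ktr, Homeomorph.symm_apply_eq]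
      exact (Phi_spec hmin e.continuous he hg x).symm
    · rintro ⟨a, rfl⟩
      refine ⟨Ktr_homeo e a, Ktr_isotopic e a, Ktr_mp hmp hmin e he a, ?_⟩
      funext x
      simp only [Function.comp, hK, hfK, Ktr_comp, add_comm]
  rw [this]
  exact isCompact_range K.continuous

/-- **Theorem 1.5.** Let f be a minimal volume-preserving homeomorphism of 𝕋², isotopic to the
identity, regularly semi-conjugate to the translation T_ω̄ with ω̄ totally irrational, and let
G⁰_f be its centralizers in Homeo(𝕋², Vol) ∩ Homeo_*(𝕋²). Then G⁰_f is isomorphic to a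
subgroup of ℝ²/ℤ², and G⁰_f is C⁰-compact iff f is topologically linearizable. -/
theorem centralizers_of_minimal_semi_conjugate_pseudo_rotation
    (f : T2 → T2) (ω : R2) (w : T2)
    (hw : pr2 ω = w)
    (hti : TotallyIrrationalVec ω)
    (hiso : IsotopicToId f)
    (hmp : MeasurePreserving f (volume : Measure T2) volume)
    (hmin : MinimalMap f)
    (hsc : RegSemiConj f w)
    (GF : Set C(T2, T2))
    (hGF : GF = {g : C(T2, T2) | IsHomeomorph ⇑g ∧ IsotopicToId ⇑g ∧
      MeasurePreserving ⇑g (volume : Measure T2) volume ∧ ⇑g ∘ f = f ∘ ⇑g}) :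
    (∃ Φ : C(T2, T2) → T2,
        Set.InjOn Φ GF ∧
        (∀ g ∈ GF, ∀ g' ∈ GF, g.comp g' ∈ GF ∧ Φ (g.comp g') = Φ g + Φ g')) ∧
      (IsCompact GF ↔ TopLinearizable f) := by
  subst hGF
  exact ⟨part_one hmin hsc, part_two hiso hmp hmin hsc, part_three hmp hmin⟩
end
end

section
/- For any integer d ≥ 2, there exists a C^∞ area-preserving and minimal diffeomorphism f: T^d → T^d which is semi-conjugate to a translation of T^d by a continuous surjective map homotopic to the identity, but which is not topologically conjugate to any translation of T^d. Moreover, f can be chosen so that its rotation vector is super-Liouvillean. -/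
open Filter Topology MeasureTheory

noncomputable section

/-- The d-dimensional Euclidean space ℝ^d. -/
abbrev RD (d : ℕ) : Type := Fin d → ℝ

/-- The d-dimensional torus 𝕋^d = ℝ^d/ℤ^d. -/
abbrev TD (d : ℕ) : Type := Fin d → AddCircle (1 : ℝ)

/-- The covering projection π : ℝ^d → 𝕋^d. -/
def prD {d : ℕ} (v : RD d) : TD d := fun i => (v i : AddCircle (1 : ℝ))

/-- An integer vector regarded as a point of ℝ^d. -/
def intVecD {d : ℕ} (v : Fin d → ℤ) : RD d := fun i => (v i : ℝ)

/-- `F : ℝ^d → ℝ^d` is a lift of `f : 𝕋^d → 𝕋^d`. -/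
def IsLiftD {d : ℕ} (F : RD d → RD d) (f : TD d → TD d) : Prop :=
  ∀ z : RD d, prD (F z) = f (prD z)

/-- `F` commutes with the deck transformations. -/
def EquivariantD {d : ℕ} (F : RD d → RD d) : Prop :=
  ∀ (z : RD d) (v : Fin d → ℤ), F (z + intVecD v) = F z + intVecD v

/-- ‖ω‖_{𝕋^d} = min over integer vectors z of ‖ω − z‖. -/
def normTD {d : ℕ} (ω : RD d) : ℝ := ⨅ v : Fin d → ℤ, ‖ω - intVecD v‖

/-- The super-Liouvillean condition in dimension d. -/
def SuperLiouvilleD {d : ℕ} (ω : RD d) : Prop :=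
  ∀ M : ℝ, ∃ᶠ n : ℕ in atTop, (n : ℝ)⁻¹ * Real.log (normTD ((n : ℝ) • ω)) < M


/-! ## Basics on the covering projection -/

lemma prD_isOpenQuotientMap {d : ℕ} : IsOpenQuotientMap (prD : RD d → TD d) := by
  have h : IsOpenQuotientMap (fun x : ℝ => (x : AddCircle (1 : ℝ))) :=
    ⟨QuotientAddGroup.mk_surjective, AddCircle.continuous_mk' 1,
      QuotientAddGroup.isOpenMap_coe⟩
  exact IsOpenQuotientMap.piMap (fun _ : Fin d => h)

lemma prD_continuous {d : ℕ} : Continuous (prD : RD d → TD d) :=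
  prD_isOpenQuotientMap.continuous

lemma prD_surjective {d : ℕ} : Function.Surjective (prD : RD d → TD d) :=
  prD_isOpenQuotientMap.surjective

lemma prD_add {d : ℕ} (a b : RD d) : prD (a + b) = prD a + prD b := by
  ext i; simp [prD]

lemma prD_intVecD {d : ℕ} (v : Fin d → ℤ) : prD (intVecD v) = 0 := by
  ext i
  simp only [prD, intVecD, Pi.zero_apply]
  rw [AddCircle.coe_eq_zero_iff]
  exact ⟨v i, by simp⟩

lemma prD_eq_iff {d : ℕ} (a b : RD d) : prD a = prD b ↔ ∃ v : Fin d → ℤ, a = b + intVecD v := by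
  constructor
  · intro h
    have : ∀ i, ∃ n : ℤ, a i = b i + n := by
      intro i
      have hi := congrFun h i
      simp only [prD] at hi
      rw [← sub_eq_zero, ← AddCircle.coe_sub, AddCircle.coe_eq_zero_iff] at hi
      obtain ⟨n, hn⟩ := hi
      exact ⟨n, by simp at hn; linarith⟩
    choose v hv using this
    exact ⟨v, funext hv⟩
  · rintro ⟨v, rfl⟩
    rw [prD_add, prD_intVecD, add_zero]

/-- The torus map induced by a map of the Euclidean space. -/
def desc {d : ℕ} (F : RD d → RD d) : TD d → TD d := fun x =>
  prD (F (Function.surjInv prD_surjective x))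

lemma desc_prD {d : ℕ} {F : RD d → RD d} (hF : EquivariantD F) (z : RD d) :
    desc F (prD z) = prD (F z) := by
  obtain ⟨v, hv⟩ := (prD_eq_iff _ z).1 (Function.surjInv_eq prD_surjective (prD z))
  simp only [desc]
  rw [hv, hF, prD_add, prD_intVecD, add_zero]

lemma desc_continuous {d : ℕ} {F : RD d → RD d} (hF : EquivariantD F) (hc : Continuous F) :
    Continuous (desc F) := by
  rw [prD_isOpenQuotientMap.isQuotientMap.continuous_iff]
  have : desc F ∘ prD = prD ∘ F := funext fun z => desc_prD hF z
  rw [this]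
  exact prD_continuous.comp hc

lemma desc_comp {d : ℕ} {F G : RD d → RD d} (hF : EquivariantD F) (hG : EquivariantD G) :
    desc (F ∘ G) = desc F ∘ desc G := by
  funext x
  obtain ⟨z, rfl⟩ := prD_surjective x
  have hFG : EquivariantD (F ∘ G) := fun z v => by simp [hG z v, hF _ v]
  simp [desc_prD hFG, desc_prD hF, desc_prD hG]

lemma equivariant_inv {d : ℕ} {F G : RD d → RD d} (hF : EquivariantD F)
    (h1 : Function.LeftInverse G F) (h2 : Function.RightInverse G F) : EquivariantD G := by
  intro z v
  apply h1.injective.eq_iff.1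
  rw [h2, hF, h2]

instance prob_circle : IsProbabilityMeasure (volume : Measure (AddCircle (1 : ℝ))) :=
  ⟨by simp [AddCircle.measure_univ]⟩

/-- Smooth volume preserving equivariant diffeomorphisms of the Euclidean space. -/
structure TDiff (d : ℕ) where
  toFun : RD d → RD d
  invFun : RD d → RD d
  left_inv : Function.LeftInverse invFun toFun
  right_inv : Function.RightInverse invFun toFun
  smooth : ContDiff ℝ (⊤ : ℕ∞) toFun
  smooth_inv : ContDiff ℝ (⊤ : ℕ∞) invFun
  equi : EquivariantD toFun
  mp : MeasurePreserving (desc toFun) volume volume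

namespace TDiff

variable {d : ℕ}

lemma equi_inv (H : TDiff d) : EquivariantD H.invFun :=
  equivariant_inv H.equi H.left_inv H.right_inv

/-- Composition. -/
def comp (A B : TDiff d) : TDiff d where
  toFun := A.toFun ∘ B.toFun
  invFun := B.invFun ∘ A.invFun
  left_inv := A.left_inv.comp B.left_inv
  right_inv := A.right_inv.comp B.right_inv
  smooth := A.smooth.comp B.smooth
  smooth_inv := B.smooth_inv.comp A.smooth_inv
  equi := fun z v => by simp [B.equi z v, A.equi _ v]
  mp := by rw [desc_comp A.equi B.equi]; exact A.mp.comp B.mp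

/-- Translations. -/
def trans (a : RD d) : TDiff d where
  toFun := fun z => z + a
  invFun := fun z => z - a
  left_inv := fun z => by simp
  right_inv := fun z => by simp
  smooth := by fun_prop
  smooth_inv := by fun_prop
  equi := fun z v => add_right_comm _ _ _
  mp := by
    have : desc (fun z : RD d => z + a) = fun x => x + prD a := by
      funext x
      obtain ⟨z, rfl⟩ := prD_surjective x
      rw [desc_prD (fun z v => add_right_comm _ _ _), prD_add]
    rw [this]
    exact measurePreserving_add_right _ _

/-- The inverse diffeomorphism. -/
def symm (A : TDiff d) : TDiff d where
  toFun := A.invFun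
  invFun := A.toFun
  left_inv := A.right_inv
  right_inv := A.left_inv
  smooth := A.smooth_inv
  smooth_inv := A.smooth
  equi := A.equi_inv
  mp := by
    have h1 : desc A.invFun ∘ desc A.toFun = id := by
      rw [← desc_comp A.equi_inv A.equi]
      funext x
      obtain ⟨z, rfl⟩ := prD_surjective x
      rw [desc_prD (fun z v => by simp [A.equi z v, A.equi_inv _ v])]
      simp [A.left_inv z]
    have hm : Measurable (desc A.invFun) :=
      (desc_continuous A.equi_inv A.smooth_inv.continuous).measurable
    refine ⟨hm, ?_⟩
    conv_lhs => rw [← A.mp.map_eq]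
    rw [Measure.map_map hm A.mp.measurable, h1, Measure.map_id]

end TDiff

/-- Shears on the torus preserve the volume. -/
lemma mp_shear_torus {n : ℕ} (i j : Fin (n + 1)) (hij : j ≠ i)
    (φ : AddCircle (1 : ℝ) → AddCircle (1 : ℝ)) (hφ : Measurable φ) :
    MeasurePreserving (fun x : TD (n + 1) => x + Pi.single i (φ (x j))) volume volume := by
  obtain ⟨k, rfl⟩ := Fin.exists_succAbove_eq hij
  have e := volume_preserving_piFinSuccAbove (fun _ : Fin (n + 1) => AddCircle (1 : ℝ)) i
  have s : MeasurePreserving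
      (fun p : (Fin n → AddCircle (1 : ℝ)) × AddCircle (1 : ℝ) => (id p.1, p.2 + φ (p.1 k)))
      (volume.prod volume) (volume.prod volume) := by
    refine (MeasurePreserving.id _).skew_product (g := fun (y : Fin n → AddCircle (1 : ℝ)) (a : AddCircle (1 : ℝ)) => a + φ (y k)) ?_ ?_
    · simp only [Function.uncurry_def]; fun_prop
    · exact ae_of_all _ fun y => (measurePreserving_add_right volume (φ (y k))).map_eq
  have sw : MeasurePreserving
      (Prod.swap : AddCircle (1 : ℝ) × (Fin n → AddCircle (1 : ℝ)) → _)
      (volume.prod volume) (volume.prod volume) := Measure.measurePreserving_swap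
  have sw' : MeasurePreserving
      (Prod.swap : (Fin n → AddCircle (1 : ℝ)) × AddCircle (1 : ℝ) → _)
      (volume.prod volume) (volume.prod volume) := Measure.measurePreserving_swap
  have := (e.symm _).comp (sw'.comp (s.comp (sw.comp e)))
  have hfun : (fun x : TD (n + 1) => x + Pi.single i (φ (x (i.succAbove k)))) =
      ((MeasurableEquiv.piFinSuccAbove (fun _ : Fin (n + 1) => AddCircle (1 : ℝ)) i).symm ∘
      Prod.swap ∘ (fun p : (Fin n → AddCircle (1 : ℝ)) × AddCircle (1 : ℝ) =>
        (id p.1, p.2 + φ (p.1 k))) ∘ Prod.swap ∘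
        (MeasurableEquiv.piFinSuccAbove (fun _ : Fin (n + 1) => AddCircle (1 : ℝ)) i)) := by
    funext x
    simp only [Function.comp_apply]
    rw [MeasurableEquiv.eq_symm_apply]
    ext l
    · simp [MeasurableEquiv.piFinSuccAbove, Fin.insertNthEquiv, Fin.removeNth]
    · simp [MeasurableEquiv.piFinSuccAbove, Fin.insertNthEquiv, Fin.removeNth]
  rw [hfun]
  exact this

/-- The shear `z ↦ z + φ(z_j) e_i`. -/
def shearFun {d : ℕ} (i j : Fin d) (φ : ℝ → ℝ) (z : RD d) : RD d := z + Pi.single i (φ (z j))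

lemma shear_equi {d : ℕ} (i j : Fin d) (φ : ℝ → ℝ) (hp : Function.Periodic φ 1) :
    EquivariantD (shearFun i j φ) := by
  intro z v
  have : φ (z j + (v j : ℝ)) = φ (z j) := by
    have := hp.int_mul (v j) (z j)
    simpa using this
  simp only [shearFun, Pi.add_apply, intVecD] at *
  rw [this]; abel

lemma shear_inv {d : ℕ} (i j : Fin d) (hij : j ≠ i) (φ : ℝ → ℝ) (z : RD d) :
    shearFun i j (fun t => - φ t) (shearFun i j φ z) = z := by
  simp [shearFun, hij, add_assoc, ← Pi.single_add]

lemma shear_smooth {d : ℕ} (i j : Fin d) (φ : ℝ → ℝ) (hs : ContDiff ℝ (⊤ : ℕ∞) φ) :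
    ContDiff ℝ (⊤ : ℕ∞) (shearFun i j φ) := by
  rw [contDiff_pi]
  intro k
  by_cases h : k = i
  · subst h; simp only [shearFun, Pi.add_apply, Pi.single_eq_same]; fun_prop
  · simp only [shearFun, Pi.add_apply, Pi.single_eq_of_ne h]; fun_prop

/-- The shear as a volume preserving diffeomorphism. -/
def shear {n : ℕ} (i j : Fin (n + 1)) (hij : j ≠ i) (φ : ℝ → ℝ) (hp : Function.Periodic φ 1)
    (hs : ContDiff ℝ (⊤ : ℕ∞) φ) : TDiff (n + 1) where
  toFun := shearFun i j φ
  invFun := shearFun i j (fun t => - φ t)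
  left_inv := shear_inv i j hij φ
  right_inv := fun z => by
    have := shear_inv i j hij (fun t => - φ t) z
    simpa using this
  smooth := shear_smooth i j φ hs
  smooth_inv := shear_smooth i j _ hs.neg
  equi := shear_equi i j φ hp
  mp := by
    have hc : Continuous (hp.lift : AddCircle (1 : ℝ) → ℝ) := by
      have hq : IsQuotientMap (fun x : ℝ => (x : AddCircle (1 : ℝ))) := isQuotientMap_quotient_mk'
      rw [hq.continuous_iff]
      exact hs.continuous
    have : desc (shearFun i j φ) =
        fun x : TD (n + 1) => x + Pi.single i ((hp.lift (x j) : ℝ) : AddCircle (1 : ℝ)) := by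
      funext x
      obtain ⟨z, rfl⟩ := prD_surjective x
      rw [desc_prD (shear_equi i j φ hp), shearFun, prD_add]
      congr 1
      ext k
      by_cases h : k = i
      · subst h; simp [prD]
      · simp [prD, h]
    rw [this]
    exact mp_shear_torus i j hij (fun t => ((hp.lift t : ℝ) : AddCircle (1 : ℝ)))
      ((AddCircle.continuous_mk' 1).comp hc).measurable

/-! ## Smooth closeness and limits -/

lemma conj_close {d : ℕ} (H : TDiff d) (a0 : RD d) (k : ℕ) {ε : ℝ} (hε : 0 < ε) :
    ∀ᶠ a in 𝓝 a0, ∀ z, ‖iteratedFDeriv ℝ k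
      (fun z => H.toFun (H.invFun z + a) - H.toFun (H.invFun z + a0)) z‖ < ε := by
  set Ψ : RD d × RD d → RD d := fun p =>
    H.toFun (H.invFun p.2 + p.1) - H.toFun (H.invFun p.2 + a0) with hΨ
  have hΨs : ContDiff ℝ (⊤ : ℕ∞) Ψ := by
    have h1 := H.smooth
    have h2 := H.smooth_inv
    apply ContDiff.sub
    · exact h1.comp ((h2.comp contDiff_snd).add contDiff_fst)
    · exact h1.comp ((h2.comp contDiff_snd).add contDiff_const)
  have hslice : ∀ a z, iteratedFDeriv ℝ k (fun z => Ψ (a, z)) z =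
      (iteratedFDeriv ℝ k Ψ (a, z)).compContinuousLinearMap
        (fun _ => ContinuousLinearMap.inr ℝ (RD d) (RD d)) := by
    intro a z
    have e1 : (fun z => Ψ (a, z)) =
        (fun p => Ψ ((a, 0) + p)) ∘ (ContinuousLinearMap.inr ℝ (RD d) (RD d)) := by
      funext z; simp
    have hs : ContDiff ℝ (⊤ : ℕ∞) (fun p => Ψ ((a, 0) + p)) :=
      hΨs.comp (contDiff_const.add contDiff_id)
    rw [e1, ContinuousLinearMap.iteratedFDeriv_comp_right _ hs z (i := k)
      (by exact_mod_cast le_top), iteratedFDeriv_comp_add_left]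
    simp
  have hcont : Continuous (fun p : RD d × RD d => iteratedFDeriv ℝ k (fun z => Ψ (p.1, z)) p.2) := by
    simp only [hslice]
    have h1 : Continuous (iteratedFDeriv ℝ k Ψ) :=
      hΨs.continuous_iteratedFDeriv (by exact_mod_cast le_top)
    exact (map_continuous (ContinuousMultilinearMap.compContinuousLinearMapL (𝕜 := ℝ)
      (F := RD d) (fun _ : Fin k => ContinuousLinearMap.inr ℝ (RD d) (RD d)))).comp h1
  have hzero : ∀ z, iteratedFDeriv ℝ k (fun z => Ψ (a0, z)) z = 0 := by
    intro z
    have : (fun z => Ψ (a0, z)) = fun _ => 0 := by funext z; simp [hΨ]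
    rw [this]
    simp
  have hper : ∀ a z (v : Fin d → ℤ), iteratedFDeriv ℝ k (fun z => Ψ (a, z)) (z + intVecD v) =
      iteratedFDeriv ℝ k (fun z => Ψ (a, z)) z := by
    intro a z v
    rw [← iteratedFDeriv_comp_add_right]
    congr 1
    funext z
    simp only [hΨ]
    rw [H.equi_inv, add_right_comm, H.equi, add_right_comm, H.equi]
    abel
  have hK : IsCompact (Set.Icc (0 : RD d) 1) := isCompact_Icc
  have key : ∀ᶠ a in 𝓝 a0, ∀ z ∈ Set.Icc (0 : RD d) 1,
      ‖iteratedFDeriv ℝ k (fun z => Ψ (a, z)) z‖ < ε := by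
    apply hK.eventually_forall_of_forall_eventually
    intro z _
    have := (hcont.norm.tendsto (a0, z))
    simp only [hzero, norm_zero] at this
    exact this.eventually (gt_mem_nhds hε)
  filter_upwards [key] with a ha z
  have hz : z = (fun i => Int.fract (z i)) + intVecD (fun i => ⌊z i⌋) := by
    funext i; simp [intVecD]
  rw [hz]
  have := hper a (fun i => Int.fract (z i)) (fun i => ⌊z i⌋)
  simp only [hΨ] at this
  rw [this]
  exact ha _ ⟨fun i => Int.fract_nonneg _, fun i => (Int.fract_lt_one _).le⟩

lemma smooth_limit {d : ℕ} (E : ℕ → RD d → RD d) (hE : ∀ n, ContDiff ℝ (⊤ : ℕ∞) (E n))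
    (hb : ∀ n k, k ≤ n → ∀ z, ‖iteratedFDeriv ℝ k (fun z => E (n + 1) z - E n z) z‖ ≤
      (1 / 2 : ℝ) ^ n) :
    ∃ F : RD d → RD d, ContDiff ℝ (⊤ : ℕ∞) F ∧ TendstoUniformly E F atTop := by
  have h0 : ∀ n z, ‖E (n + 1) z - E n z‖ ≤ (1 / 2 : ℝ) ^ n := by
    intro n z
    have := hb n 0 (Nat.zero_le _) z
    simpa using this
  have hsum : Summable (fun n : ℕ => (1 / 2 : ℝ) ^ n) := summable_geometric_two
  refine ⟨fun z => E 0 z + ∑' n, (E (n + 1) z - E n z), ?_, ?_⟩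
  · apply (hE 0).add
    refine contDiff_tsum_of_eventually (v := fun _ n => (1 / 2 : ℝ) ^ n)
      (fun n => (hE (n + 1)).sub (hE n)) (fun k _ => hsum) ?_
    intro k _
    rw [Nat.cofinite_eq_atTop]
    filter_upwards [eventually_ge_atTop k] with n hn z
    exact hb n k hn z
  · have := tendstoUniformly_tsum_nat hsum h0
    have h2 : ∀ N z, ∑ n ∈ Finset.range N, (E (n + 1) z - E n z) = E N z - E 0 z := by
      intro N z
      exact Finset.sum_range_sub (fun n => E n z) N
    simp only [h2] at this
    rw [Metric.tendstoUniformly_iff] at this ⊢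
    intro ε hε
    filter_upwards [this ε hε] with n hn z
    have := hn z
    rw [dist_eq_norm] at this ⊢
    convert this using 2
    abel

/-- A line of slope `(1, K, K², …)` is `1/K`-dense. -/
lemma line_dense (K : ℕ) (hK : 0 < K) (d : ℕ) (θ : ℕ → ℝ) :
    ∃ t : ℝ, ∀ i < d, ∃ m : ℤ, |t * (K : ℝ) ^ i - θ i - m| ≤ 1 / K := by
  induction d generalizing θ with
  | zero => exact ⟨0, by simp⟩
  | succ d ih =>
    obtain ⟨t', ht'⟩ := ih (fun i => θ (i + 1))
    have hK' : (0 : ℝ) < K := by exact_mod_cast hK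
    refine ⟨(t' + ⌊K * θ 0 - t'⌋) / K, ?_⟩
    intro i hi
    cases i with
    | zero =>
      refine ⟨0, ?_⟩
      have h1 := Int.floor_le (K * θ 0 - t')
      have h2 := Int.lt_floor_add_one (K * θ 0 - t')
      have : (t' + ⌊K * θ 0 - t'⌋) / K * (K : ℝ) ^ 0 - θ 0 - (0 : ℤ) =
          (t' + ⌊K * θ 0 - t'⌋ - K * θ 0) / K := by field_simp; simp
      rw [this, abs_div, abs_of_pos hK']
      gcongr
      rw [abs_le]; constructor <;> linarith
    | succ i =>
      obtain ⟨m, hm⟩ := ht' i (by omega)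
      refine ⟨m + ⌊K * θ 0 - t'⌋ * (K : ℤ) ^ i, ?_⟩
      have : (t' + ⌊K * θ 0 - t'⌋) / K * (K : ℝ) ^ (i + 1) - θ (i + 1) -
          ((m + ⌊K * θ 0 - t'⌋ * (K : ℤ) ^ i : ℤ) : ℝ) = t' * (K : ℝ) ^ i - θ (i + 1) - m := by
        push_cast
        field_simp
        ring
      rw [this]; exact hm

/-- Choice of the next rational translation vector. -/
lemma alpha_step {d : ℕ} (a : RD d) (q : ℕ) (hq : 0 < q)
    (ha : ∃ v : Fin d → ℤ, (q : ℝ) • a = intVecD v) {δ : ℝ} (hδ : 0 < δ) {S : Set (RD d)}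
    (hS : S ∈ 𝓝 a) (M : ℕ) :
    ∃ (q' : ℕ) (a' : RD d), M ≤ q' ∧ q ≤ q' ∧ a' ∈ S ∧ (∃ v : Fin d → ℤ, (q' : ℝ) • a' = intVecD v) ∧
      ∀ θ : RD d, ∃ m : ℕ, m < q' ∧ ∃ v : Fin d → ℤ, ‖(m : ℝ) • a' - θ - intVecD v‖ ≤ δ := by
  obtain ⟨va, hva⟩ := ha
  obtain ⟨K, hK⟩ := exists_nat_gt (2 / δ)
  have hK0 : (0 : ℝ) < K := lt_trans (by positivity) hK
  have hKpos : 0 < K := by exact_mod_cast hK0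
  have hKδ : 1 / (K : ℝ) ≤ δ / 2 := by
    rw [div_le_div_iff₀ hK0 two_pos]
    rw [div_lt_iff₀ hδ] at hK
    linarith
  have hq0 : (0 : ℝ) < q := by exact_mod_cast hq
  set kv : RD d := fun i => (K : ℝ) ^ (i : ℕ) with hkv
  have htend : Tendsto (fun m : ℕ => a + (((q : ℝ) * m)⁻¹) • kv) atTop (𝓝 a) := by
    have h1 : Tendsto (fun m : ℕ => ((q : ℝ) * m)⁻¹) atTop (𝓝 0) :=
      tendsto_inv_atTop_zero.comp (tendsto_natCast_atTop_atTop.const_mul_atTop hq0)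
    have := (h1.smul_const kv).const_add a
    simpa using this
  have htend2 : Tendsto (fun m : ℕ => (K : ℝ) ^ d * (m : ℝ)⁻¹) atTop (𝓝 0) := by
    have := (tendsto_inv_atTop_zero.comp (tendsto_natCast_atTop_atTop (R := ℝ))).const_mul
      ((K : ℝ) ^ d)
    simpa using this
  obtain ⟨m, hmS, hmK, hm1⟩ := ((htend.eventually hS).and
    ((htend2.eventually (gt_mem_nhds (half_pos hδ))).and (eventually_ge_atTop (M + 1)))).exists
  have hm0 : (0 : ℝ) < m := by
    have : 0 < m := by omega
    exact_mod_cast this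
  set a' : RD d := a + (((q : ℝ) * m)⁻¹) • kv with ha'
  have hintg : ∀ j : ℤ, ((j : ℝ) * q) • a' =
      intVecD (fun i => j * va i) + ((j : ℝ) / m) • kv := by
    intro j
    funext i
    have := congrFun hva i
    simp only [Pi.smul_apply, smul_eq_mul, intVecD] at this
    simp only [ha', Pi.smul_apply, Pi.add_apply, smul_eq_mul, intVecD]
    push_cast
    rw [← this]
    field_simp
  have hq'a : ∃ v : Fin d → ℤ, ((q * m : ℕ) : ℝ) • a' = intVecD v := by
    refine ⟨fun i => m * va i + K ^ (i : ℕ), ?_⟩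
    have := hintg m
    push_cast at this ⊢
    rw [mul_comm, this, div_self hm0.ne']
    funext i
    simp [intVecD, hkv]
  refine ⟨q * m, a', ?_, Nat.le_mul_of_pos_right _ (by omega), hmS, hq'a, ?_⟩
  · calc M ≤ m := by omega
      _ ≤ q * m := Nat.le_mul_of_pos_left _ hq
  intro θ
  obtain ⟨t, ht⟩ := line_dense K hKpos d (fun i => if h : i < d then θ ⟨i, h⟩ else 0)
  have ht' : ∀ i : Fin d, ∃ n : ℤ, |t * (K : ℝ) ^ (i : ℕ) - θ i - n| ≤ 1 / K := by
    intro i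
    have := ht i i.2
    simpa using this
  choose n hn using ht'
  obtain ⟨w, hw⟩ := hq'a
  set j : ℤ := ⌊t * m⌋ with hj
  set Q : ℤ := ((q * m : ℕ) : ℤ) with hQ
  have hQpos : 0 < Q := by
    have : 0 < q * m := Nat.mul_pos hq (by omega)
    rw [hQ]; exact_mod_cast this
  have hmod0 := Int.emod_nonneg (j * q) hQpos.ne'
  have hmodlt := Int.emod_lt_of_pos (j * q) hQpos
  have hdm := Int.emod_add_mul_ediv (j * q) Q
  refine ⟨((j * q) % Q).toNat, ?_, fun i => n i + j * va i - ((j * q) / Q) * w i, ?_⟩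
  · zify
    rw [Int.toNat_of_nonneg hmod0]
    exact hmodlt
  rw [pi_norm_le_iff_of_nonneg hδ.le]
  intro i
  have c1 : ((((j * q) % Q).toNat : ℕ) : ℝ) = (j : ℝ) * q - (Q : ℝ) * (((j * q) / Q : ℤ) : ℝ) := by
    have h1 : ((((j * q) % Q).toNat : ℕ) : ℝ) = (((j * q) % Q : ℤ) : ℝ) := by
      have := Int.toNat_of_nonneg hmod0
      exact_mod_cast this
    rw [h1]
    have h2 : (((j * q) % Q : ℤ) : ℝ) + ((Q * ((j * q) / Q) : ℤ) : ℝ) = ((j * q : ℤ) : ℝ) := by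
      exact_mod_cast hdm
    push_cast at h2 ⊢
    linarith
  have c2 := congrFun (hintg j) i
  have c3 := congrFun hw i
  have c4 : (Q : ℝ) = ((q * m : ℕ) : ℝ) := by rw [hQ]; norm_cast
  simp only [Pi.smul_apply, Pi.add_apply, smul_eq_mul, intVecD] at c2 c3
  simp only [Pi.smul_apply, Pi.sub_apply, smul_eq_mul, intVecD]
  have c5 : ((((j * q) % Q).toNat : ℕ) : ℝ) * a' i - θ i -
      ((n i + j * va i - ((j * q) / Q) * w i : ℤ) : ℝ) =
      (t * (K : ℝ) ^ (i : ℕ) - θ i - n i) + ((j : ℝ) / m - t) * (K : ℝ) ^ (i : ℕ) := by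
    rw [c1]
    push_cast at c2 c3 ⊢
    have c6 : (Q : ℝ) * (((j * q) / Q : ℤ) : ℝ) * a' i = (((j * q) / Q : ℤ) : ℝ) * w i := by
      rw [← c3, c4]; push_cast; ring
    have : ((j : ℝ) * q - (Q : ℝ) * (((j * q) / Q : ℤ) : ℝ)) * a' i =
      (j : ℝ) * va i + (j : ℝ) / m * kv i - (((j * q) / Q : ℤ) : ℝ) * w i := by
      rw [sub_mul, c6, c2]
    rw [this]
    simp only [hkv]
    ring
  rw [c5, Real.norm_eq_abs]
  have hfl : |(j : ℝ) / m - t| ≤ (m : ℝ)⁻¹ := by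
    have e : (j : ℝ) / m - t = (j - t * m) / m := by field_simp
    rw [e, abs_div, abs_of_pos hm0, ← one_div]
    gcongr
    have h1 := Int.floor_le (t * m)
    have h2 := Int.lt_floor_add_one (t * m)
    rw [abs_le]; constructor <;> linarith
  have hKi : (K : ℝ) ^ (i : ℕ) ≤ (K : ℝ) ^ d :=
    pow_le_pow_right₀ (by exact_mod_cast hKpos) i.2.le
  calc _ ≤ |t * (K : ℝ) ^ (i : ℕ) - θ i - n i| + |((j : ℝ) / m - t) * (K : ℝ) ^ (i : ℕ)| :=
        abs_add_le _ _
    _ ≤ 1 / K + (m : ℝ)⁻¹ * (K : ℝ) ^ d := by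
        rw [abs_mul, abs_of_pos (pow_pos hK0 _)]
        gcongr
        exact hn i
    _ ≤ δ := by
        rw [mul_comm]; linarith

/-! ## The twist maps -/

lemma circle_norm_eq (u : ℝ) : ‖(u : AddCircle (1 : ℝ))‖ = |u - round u| := by
  rw [AddCircle.norm_eq]; simp

lemma circle_norm_le (u : ℝ) : ‖(u : AddCircle (1 : ℝ))‖ ≤ |u| := by
  rw [circle_norm_eq]
  simpa using round_le u 0

lemma sin_sq_ge (u : ℝ) : 4 * ‖(u : AddCircle (1 : ℝ))‖ ^ 2 ≤ Real.sin (Real.pi * u) ^ 2 := by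
  rw [circle_norm_eq]
  have hr := abs_sub_round u
  have e : Real.sin (Real.pi * u) ^ 2 = Real.sin (Real.pi * (u - round u)) ^ 2 := by
    rw [Real.sin_sq_eq_half_sub, Real.sin_sq_eq_half_sub]
    have : 2 * (Real.pi * (u - round u)) = 2 * (Real.pi * u) - round u * (2 * Real.pi) := by ring
    rw [this, Real.cos_sub_int_mul_two_pi]
  rw [e]
  have hpi := Real.pi_pos
  have h := Real.mul_abs_le_abs_sin (x := Real.pi * (u - round u)) (by
    rw [abs_mul, abs_of_pos hpi]; nlinarith)
  rw [abs_mul, abs_of_pos hpi] at h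
  have h2 : 2 / Real.pi * (Real.pi * |u - round u|) = 2 * |u - round u| := by field_simp
  rw [h2] at h
  have h3 := pow_le_pow_left₀ (by positivity) h 2
  rw [sq_abs] at h3
  linarith [h3]

lemma sin_per (q : ℕ) (c : ℝ) (a x : ℝ) (k : ℤ) (hk : (q : ℝ) * a = k) :
    c * Real.sin (2 * Real.pi * (q * (x + a))) = c * Real.sin (2 * Real.pi * (q * x)) := by
  have : 2 * Real.pi * (q * (x + a)) = 2 * Real.pi * (q * x) + k * (2 * Real.pi) := by
    rw [← hk]; ring
  rw [this, Real.sin_add_int_mul_two_pi]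

lemma sin_sq_per (q : ℕ) (a x : ℝ) (k : ℤ) (hk : (q : ℝ) * a = k) :
    Real.sin (Real.pi * (q * (x + a))) ^ 2 = Real.sin (Real.pi * (q * x)) ^ 2 := by
  rw [Real.sin_sq_eq_half_sub, Real.sin_sq_eq_half_sub]
  have : 2 * (Real.pi * (q * (x + a))) = 2 * (Real.pi * (q * x)) + k * (2 * Real.pi) := by
    rw [← hk]; ring
  rw [this, Real.cos_add_int_mul_two_pi]

lemma twist {e : ℕ} (q : ℕ) (hq : 0 < q) (t : ℝ) (ht : Irrational t) (ht0 : 0 < t) (η : ℝ)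
    (hη : 0 < η) (hqη : q * η ≤ 1 / 16) :
    ∃ A : TDiff (e + 2),
      (∀ z, |A.toFun z 0 - z 0| ≤ 2 * η) ∧
      (∀ z, ‖A.toFun z - z‖ ≤ t + 2 * η) ∧
      (∀ z : RD (e + 2), 4 * (q * η) ≤ ‖((q * z 0 : ℝ) : AddCircle (1 : ℝ))‖ → A.toFun z = z) ∧
      A.toFun 0 = 0 ∧
      A.toFun (Pi.single 1 t) = Pi.single 1 (Int.fract (q * t) / q) ∧
      (∀ a : RD (e + 2), (∃ v : Fin (e + 2) → ℤ, (q : ℝ) • a = intVecD v) →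
        ∀ z, A.toFun (z + a) = A.toFun z + a) := by
  have hq0 : (0 : ℝ) < q := by exact_mod_cast hq
  have hpi := Real.pi_pos
  set φ : ℝ → ℝ := fun x => η * Real.sin (2 * Real.pi * (q * x)) with hφ
  have hφb : ∀ x, |φ x| ≤ η := by
    intro x
    simp only [hφ, abs_mul, abs_of_pos hη]
    exact mul_le_of_le_one_right hη.le (Real.abs_sin_le_one _)
  set w : ℝ := φ t with hw
  set c0 : ℝ := Real.sin (Real.pi * (q * w)) ^ 2 with hc0
  have hw0 : w ≠ 0 := by
    simp only [hw, hφ]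
    apply mul_ne_zero hη.ne'
    intro h0
    rw [Real.sin_eq_zero_iff] at h0
    obtain ⟨k, hk⟩ := h0
    have h1 : ((2 * q : ℕ) : ℝ) * t = (k : ℝ) := by
      have : Real.pi * k = Real.pi * (2 * q * t) := by linarith
      have := mul_left_cancel₀ hpi.ne' this
      push_cast; linarith
    have h2 := ht.natCast_mul (m := 2 * q) (by omega)
    rw [h1] at h2
    exact (Int.not_irrational k) h2
  have hqw : |q * w| ≤ q * η := by
    rw [abs_mul, abs_of_pos hq0]; gcongr; exact hφb t
  have hc0pos : 0 < c0 := by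
    have h1 : Real.sin (Real.pi * (q * w)) ≠ 0 := by
      intro h
      have hb : |Real.pi * (q * w)| < Real.pi := by
        rw [abs_mul, abs_of_pos hpi]; nlinarith
      rw [abs_lt] at hb
      rw [Real.sin_eq_zero_iff_of_lt_of_lt hb.1 hb.2] at h
      exact (mul_ne_zero hpi.ne' (mul_ne_zero hq0.ne' hw0)) h
    positivity
  have hc0le : c0 ≤ 10 * (q * η) ^ 2 := by
    have h1 : |Real.sin (Real.pi * (q * w))| ≤ |Real.pi * (q * w)| := Real.abs_sin_le_abs
    have h2 : c0 ≤ (Real.pi * (q * w)) ^ 2 := by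
      rw [hc0]; exact sq_le_sq.2 h1
    have h3 : (q * w) ^ 2 ≤ (q * η) ^ 2 := by
      rw [← sq_abs (q * w)]; gcongr
    have h4 : Real.pi ^ 2 ≤ 10 := by nlinarith [Real.pi_lt_d2]
    calc c0 ≤ Real.pi ^ 2 * (q * w) ^ 2 := by rw [← mul_pow]; exact h2
      _ ≤ _ := by gcongr
  let χ : ContDiffBump c0 := ⟨c0 / 4, c0 / 2, by positivity, by linarith⟩
  set c : ℝ := Int.fract (q * t) / q - t with hc
  have hqt : 0 ≤ (⌊q * t⌋ : ℝ) := by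
    have : 0 ≤ ⌊q * t⌋ := Int.floor_nonneg.2 (by positivity)
    exact_mod_cast this
  have hcfl : q * c = ((-⌊q * t⌋ : ℤ) : ℝ) := by
    have := Int.self_sub_floor (q * t)
    rw [hc, mul_sub, mul_div_cancel₀ _ hq0.ne', ← this]
    push_cast; ring
  have hcb : |c| ≤ t := by
    have h1 : 0 ≤ Int.fract (q * t) / q := div_nonneg (Int.fract_nonneg _) hq0.le
    have h2 : c ≤ 0 := by
      by_contra hcon
      push Not at hcon
      have : 0 < q * c := mul_pos hq0 hcon
      rw [hcfl] at this
      push_cast at this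
      linarith
    rw [abs_of_nonpos h2]; linarith
  set ψ : ℝ → ℝ := fun x => c * χ (Real.sin (Real.pi * (q * x)) ^ 2) with hψ
  have hφp : Function.Periodic φ 1 := fun x => sin_per q η 1 x q (by simp)
  have hψp : Function.Periodic ψ 1 := fun x => by
    simp only [hψ]; rw [sin_sq_per q 1 x q (by simp)]
  have hφs : ContDiff ℝ (⊤ : ℕ∞) φ := by
    simp only [hφ]; fun_prop
  have hψs : ContDiff ℝ (⊤ : ℕ∞) ψ := by
    have : ContDiff ℝ (⊤ : ℕ∞) (fun x => χ x) := χ.contDiff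
    have h2 : ContDiff ℝ (⊤ : ℕ∞) (fun x : ℝ => Real.sin (Real.pi * (q * x)) ^ 2) := by fun_prop
    exact contDiff_const.mul (this.comp h2)
  have hψb : ∀ x, |ψ x| ≤ t := by
    intro x
    simp only [hψ, abs_mul, abs_of_nonneg χ.nonneg]
    calc _ ≤ |c| * 1 := by gcongr; exact χ.le_one
      _ ≤ t := by simpa using hcb
  let Sh : TDiff (e + 2) := shear 0 1 (by simp) φ hφp hφs
  let V : TDiff (e + 2) := shear 1 0 (by simp) ψ hψp hψs
  have hA : ∀ z, (Sh.symm.comp (V.comp Sh)).toFun z =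
      shearFun 0 1 (fun x => - φ x) (shearFun 1 0 ψ (shearFun 0 1 φ z)) := fun z => rfl
  have hform : ∀ z : RD (e + 2), (Sh.symm.comp (V.comp Sh)).toFun z =
      z + Pi.single 0 (φ (z 1) - φ (z 1 + ψ (z 0 + φ (z 1)))) +
        Pi.single 1 (ψ (z 0 + φ (z 1))) := by
    intro z
    rw [hA]
    simp only [shearFun, Pi.add_apply, Pi.single_eq_same]
    simp only [sub_eq_add_neg, Pi.single_add]
    simp
    abel
  refine ⟨Sh.symm.comp (V.comp Sh), ?_, ?_, ?_, ?_, ?_, ?_⟩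
  · intro z
    rw [hform]
    simp only [Pi.add_apply, Pi.single_eq_same]
    have h1 := hφb (z 1)
    have h2 := hφb (z 1 + ψ (z 0 + φ (z 1)))
    simp only [ne_eq, zero_ne_one, not_false_eq_true, Pi.single_eq_of_ne, add_zero,
      add_sub_cancel_left]
    rw [abs_le] at *
    constructor <;> linarith
  · intro z
    rw [hform, add_assoc, add_sub_cancel_left]
    have h1 := hφb (z 1)
    have h2 := hφb (z 1 + ψ (z 0 + φ (z 1)))
    have h3 := hψb (z 0 + φ (z 1))
    refine (norm_add_le _ _).trans ?_
    rw [Pi.norm_single, Pi.norm_single, Real.norm_eq_abs, Real.norm_eq_abs]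
    have : |φ (z 1) - φ (z 1 + ψ (z 0 + φ (z 1)))| ≤ 2 * η := by
      rw [abs_le] at *
      constructor <;> linarith
    linarith
  · intro z hz
    have hψ0 : ψ (z 0 + φ (z 1)) = 0 := by
      have h1 : 3 * (q * η) ≤ ‖((q * (z 0 + φ (z 1)) : ℝ) : AddCircle (1 : ℝ))‖ := by
        have e1 : ((q * z 0 : ℝ) : AddCircle (1 : ℝ)) =
            ((q * (z 0 + φ (z 1)) : ℝ) : AddCircle (1 : ℝ)) -
              ((q * φ (z 1) : ℝ) : AddCircle (1 : ℝ)) := by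
          rw [← AddCircle.coe_sub]; congr 1; ring
        have e2 : ‖((q * φ (z 1) : ℝ) : AddCircle (1 : ℝ))‖ ≤ q * η := by
          refine (circle_norm_le _).trans ?_
          rw [abs_mul, abs_of_pos hq0]; gcongr; exact hφb _
        rw [e1] at hz
        have := hz.trans (norm_sub_le _ _)
        linarith
      have h2 := sin_sq_ge (q * (z 0 + φ (z 1)))
      have h3 : 4 * (3 * (q * η)) ^ 2 ≤ 4 * ‖((q * (z 0 + φ (z 1)) : ℝ) : AddCircle (1 : ℝ))‖ ^ 2 := by
        gcongr
      have h4 : χ (Real.sin (Real.pi * (q * (z 0 + φ (z 1)))) ^ 2) = 0 := by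
        apply χ.zero_of_le_dist
        rw [Real.dist_eq]
        refine le_trans ?_ (le_abs_self _)
        change c0 / 2 ≤ _
        have : 0 < (q * η) ^ 2 := by positivity
        nlinarith
      simp [hψ, h4]
    rw [hform, hψ0]
    simp
  · rw [hform]
    have hφ0 : φ 0 = 0 := by simp [hφ]
    have hψ0 : ψ 0 = 0 := by
      have h4 : χ 0 = 0 := by
        apply χ.zero_of_le_dist
        rw [Real.dist_eq]
        change c0 / 2 ≤ _
        rw [zero_sub, abs_neg, abs_of_pos hc0pos]
        linarith
      simp [hψ, h4]
    simp [hφ0, hψ0]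
  · rw [hform]
    have hψw : ψ w = c := by
      have h4 : χ c0 = 1 :=
        χ.one_of_mem_closedBall (Metric.mem_closedBall_self (by simp only [χ]; positivity))
      simp only [hψ]
      rw [← hc0, h4, mul_one]
    simp only [Pi.single_eq_same]
    have e0 : (Pi.single 1 t : RD (e + 2)) 0 = 0 := by simp
    rw [e0, zero_add, ← hw, hψw]
    have hper : φ (t + c) = φ t := sin_per q η c t _ hcfl
    rw [hper, ← hw, sub_self, Pi.single_zero, add_zero, ← Pi.single_add]
    congr 1
    rw [hc]; ring
  · rintro a ⟨v, hv⟩ z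
    have h0 : (q : ℝ) * a 0 = v 0 := by simpa [intVecD] using congrFun hv 0
    have h1 : (q : ℝ) * a 1 = v 1 := by simpa [intVecD] using congrFun hv 1
    have hφa : ∀ x, φ (x + a 1) = φ x := fun x => sin_per q η (a 1) x _ h1
    have hψa : ∀ x, ψ (x + a 0) = ψ x := fun x => by
      simp only [hψ]; rw [sin_sq_per q (a 0) x _ h0]
    rw [hform, hform]
    simp only [Pi.add_apply]
    rw [hφa, add_right_comm (z 0), hψa, add_right_comm (z 1), hφa]
    abel

/-! ## The inductive construction -/

/-- Conjugate of a translation. -/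
def conjF {d : ℕ} (H : TDiff d) (a : RD d) (z : RD d) : RD d := H.toFun (H.invFun z + a)

/-- The size of the horizontal perturbation. -/
def etaN (n q : ℕ) : ℝ := (1 / 2 : ℝ) ^ n / (64 * q)

/-- The data at stage `n`. -/
structure St (e n : ℕ) where
  H : TDiff (e + 2)
  q : ℕ
  a : RD (e + 2)
  t : ℝ
  hq : 0 < q
  ha : ∃ v : Fin (e + 2) → ℤ, (q : ℝ) • a = intVecD v
  ht : Irrational t
  ht0 : 0 < t
  htn : t ≤ (1 / 2 : ℝ) ^ n

/-- The relation between consecutive stages. -/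
structure StRel {e n : ℕ} (s : St e n) (s' : St e (n + 1)) : Prop where
  qle : s.q ≤ s'.q
  qn : n + 2 ≤ s'.q
  aclose : ‖s'.a - s.a‖ ≤ (1 / 2 : ℝ) ^ n * (Real.exp (-(n * s.q)) / s.q)
  dens : ∀ θ : RD (e + 2), ∃ m : ℕ, m < s'.q ∧ ∃ v : Fin (e + 2) → ℤ,
    ‖(m : ℝ) • s'.a - θ - intVecD v‖ ≤ (1 / 2 : ℝ) ^ n
  g : ∃ g : RD (e + 2) → RD (e + 2), (∀ z, s'.H.invFun z = g (s.H.invFun z)) ∧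
    (∀ z, |g z 0 - z 0| ≤ 2 * etaN n s'.q) ∧
    (∀ z, ‖g z - z‖ ≤ 2 * (1 / 2 : ℝ) ^ n) ∧
    (∀ z : RD (e + 2), 4 * (s'.q * etaN n s'.q) ≤ ‖((s'.q * z 0 : ℝ) : AddCircle (1 : ℝ))‖ →
      g z = z) ∧
    g 0 = 0 ∧ g (Pi.single 1 s.t) = Pi.single 1 s'.t
  cF : ∀ k ≤ n, ∀ z, ‖iteratedFDeriv ℝ k (fun z => conjF s'.H s'.a z - conjF s.H s.a z) z‖ ≤
    (1 / 2 : ℝ) ^ n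
  cG : ∀ k ≤ n, ∀ z, ‖iteratedFDeriv ℝ k (fun z => conjF s'.H (-s'.a) z - conjF s.H (-s.a) z) z‖ ≤
    (1 / 2 : ℝ) ^ n

lemma exists_step {e n : ℕ} (s : St e n) : ∃ s' : St e (n + 1), StRel s s' := by
  have hpow : (0 : ℝ) < (1 / 2 : ℝ) ^ n := by positivity
  have hsq : (0 : ℝ) < s.q := by exact_mod_cast s.hq
  have hF : ∀ᶠ a in 𝓝 s.a, ∀ k ∈ Finset.range (n + 1), ∀ z,
      ‖iteratedFDeriv ℝ k (fun z => conjF s.H a z - conjF s.H s.a z) z‖ < (1 / 2 : ℝ) ^ n :=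
    (Finset.eventually_all _).2 fun k _ => conj_close s.H s.a k hpow
  have hG' : ∀ᶠ a in 𝓝 (-s.a), ∀ k ∈ Finset.range (n + 1), ∀ z,
      ‖iteratedFDeriv ℝ k (fun z => conjF s.H a z - conjF s.H (-s.a) z) z‖ < (1 / 2 : ℝ) ^ n :=
    (Finset.eventually_all _).2 fun k _ => conj_close s.H (-s.a) k hpow
  have hG := (continuous_neg.tendsto s.a).eventually hG'
  have hC : ∀ᶠ a in 𝓝 s.a, ‖a - s.a‖ < (1 / 2 : ℝ) ^ n * (Real.exp (-(n * s.q)) / s.q) := by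
    have h1 : Tendsto (fun a => ‖a - s.a‖) (𝓝 s.a) (𝓝 0) := by
      have : Continuous (fun a => ‖a - s.a‖) := by fun_prop
      simpa using this.tendsto s.a
    exact h1.eventually (gt_mem_nhds (by positivity))
  obtain ⟨q', a', hM, hqq, ⟨hSF, hSG, hSC⟩, hintg, hdens⟩ :=
    alpha_step s.a s.q s.hq s.ha hpow (hF.and (hG.and hC)) (2 ^ (n + 1))
  have hq' : 0 < q' := lt_of_lt_of_le s.hq hqq
  have hq'0 : (0 : ℝ) < q' := by exact_mod_cast hq'
  have hη : 0 < etaN n q' := by unfold etaN; positivity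
  have hqη : q' * etaN n q' = (1 / 2 : ℝ) ^ n / 64 := by unfold etaN; field_simp
  have hp1 : (1 / 2 : ℝ) ^ n ≤ 1 := pow_le_one₀ (by norm_num) (by norm_num)
  obtain ⟨A, hA0, hA1, hA2, hA3, hA4, hA5⟩ := twist (e := e) q' hq' s.t s.ht s.ht0 (etaN n q') hη
    (by rw [hqη]; linarith)
  have hirr : Irrational (Int.fract (q' * s.t)) := by
    have h1 := s.ht.natCast_mul hq'.ne'
    have := h1.sub_intCast ⌊(q' : ℝ) * s.t⌋
    rwa [Int.self_sub_floor] at this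
  have hfpos : 0 < Int.fract (q' * s.t) :=
    lt_of_le_of_ne (Int.fract_nonneg _) (fun h => hirr.ne_zero h.symm)
  have hηle : 2 * etaN n q' ≤ (1 / 2 : ℝ) ^ n := by
    have h1 : (1 : ℝ) ≤ q' := by exact_mod_cast hq'
    have : etaN n q' ≤ q' * etaN n q' := le_mul_of_one_le_left hη.le h1
    rw [hqη] at this
    linarith
  have hcomm : ∀ b, (∃ v : Fin (e + 2) → ℤ, (q' : ℝ) • b = intVecD v) →
      ∀ z, conjF (s.H.comp A.symm) b z = conjF s.H b z := by
    intro b hb z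
    change s.H.toFun (A.invFun (A.toFun (s.H.invFun z) + b)) = s.H.toFun (s.H.invFun z + b)
    rw [← hA5 b hb, A.left_inv]
  have hintn : ∃ v : Fin (e + 2) → ℤ, (q' : ℝ) • (-a') = intVecD v := by
    obtain ⟨v, hv⟩ := hintg
    refine ⟨-v, ?_⟩
    rw [smul_neg, hv]
    funext i; simp [intVecD]
  refine ⟨⟨s.H.comp A.symm, q', a', Int.fract (q' * s.t) / q', hq', hintg,
    hirr.div_natCast hq'.ne', by positivity, ?_⟩, ?_⟩
  · have h2 : ((2 : ℝ) ^ (n + 1)) ≤ q' := by exact_mod_cast hM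
    rw [div_le_iff₀ hq'0]
    have h3 : (1 / 2 : ℝ) ^ (n + 1) * 2 ^ (n + 1) = 1 := by
      rw [← mul_pow]; norm_num
    calc Int.fract (q' * s.t) ≤ 1 := (Int.fract_lt_one _).le
      _ = (1 / 2 : ℝ) ^ (n + 1) * 2 ^ (n + 1) := h3.symm
      _ ≤ _ := by gcongr
  · refine ⟨hqq, le_trans (Nat.lt_two_pow_self (n := n + 1)) hM, hSC.le, hdens, ⟨A.toFun, fun z => rfl, hA0,
      fun z => (hA1 z).trans ?_, hA2, hA3, hA4⟩, ?_, ?_⟩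
    · linarith [s.htn]
    · intro k hk z
      simp only [hcomm a' hintg]
      exact (hSF k (Finset.mem_range.2 (by omega)) z).le
    · intro k hk z
      simp only [hcomm (-a') hintn]
      exact (hSG k (Finset.mem_range.2 (by omega)) z).le

/-- The initial stage. -/
def St0 (e : ℕ) : St e 0 where
  H := TDiff.trans 0
  q := 1
  a := 0
  t := Real.sqrt 2 - 1
  hq := one_pos
  ha := ⟨0, by funext i; simp [intVecD]⟩
  ht := by
    have := irrational_sqrt_two.sub_intCast 1
    simpa using this
  ht0 := by
    have : (1 : ℝ) < Real.sqrt 2 := by rw [Real.lt_sqrt] <;> norm_num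
    linarith
  htn := by
    have : Real.sqrt 2 ≤ 2 := by rw [Real.sqrt_le_left] <;> norm_num
    simp; linarith

/-- The sequence of stages. -/
def stSeq (e : ℕ) : (n : ℕ) → St e n
  | 0 => St0 e
  | n + 1 => Classical.choose (exists_step (stSeq e n))

lemma stSeq_rel (e n : ℕ) : StRel (stSeq e n) (stSeq e (n + 1)) :=
  Classical.choose_spec (exists_step (stSeq e n))

/-! ## Abstract dynamics -/

lemma mp_limit {d : ℕ} (f : TD d → TD d) (fn : ℕ → TD d → TD d) (hf : Continuous f)
    (hfn : ∀ n, MeasurePreserving (fn n) volume volume)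
    (hc : ∀ n, Continuous (fn n))
    (hlim : ∀ x, Tendsto (fun n => fn n x) atTop (𝓝 (f x))) :
    MeasurePreserving f volume volume := by
  refine ⟨hf.measurable, ?_⟩
  have : IsProbabilityMeasure (Measure.map f (volume : Measure (TD d))) :=
    Measure.isProbabilityMeasure_map hf.measurable.aemeasurable
  refine ext_of_forall_integral_eq_of_IsFiniteMeasure fun φ => ?_
  rw [integral_map hf.measurable.aemeasurable φ.continuous.aestronglyMeasurable]
  have h1 : Tendsto (fun n => ∫ x, φ (fn n x) ∂(volume : Measure (TD d))) atTop
      (𝓝 (∫ x, φ (f x) ∂volume)) := by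
    refine tendsto_integral_of_dominated_convergence (fun _ => ‖φ‖) ?_ (integrable_const _) ?_ ?_
    · intro n
      exact (φ.continuous.comp (hc n)).aestronglyMeasurable
    · intro n
      exact Eventually.of_forall fun x => φ.norm_coe_le_norm _
    · exact Eventually.of_forall fun x => (φ.continuous.tendsto _).comp (hlim x)
  have h2 : ∀ n, ∫ x, φ (fn n x) ∂(volume : Measure (TD d)) = ∫ x, φ x ∂volume := by
    intro n
    conv_rhs => rw [← (hfn n).map_eq]
    rw [integral_map (hc n).measurable.aemeasurable φ.continuous.aestronglyMeasurable]
  simp only [h2] at h1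
  exact tendsto_nhds_unique h1 tendsto_const_nhds

section Dyn

variable {d : ℕ} {f h : TD d → TD d} {w : TD d}

lemma semi_iter (hh : ∀ x, h (f x) = h x + w) (m : ℕ) (x : TD d) :
    h (f^[m] x) = h x + m • w := by
  induction m with
  | zero => simp
  | succ m ih => rw [Function.iterate_succ_apply', hh, ih, succ_nsmul, add_assoc]

lemma image_full (hc : Continuous h) (hh : ∀ x, h (f x) = h x + w)
    (hw : Dense (Set.range fun m : ℕ => m • w)) (x : TD d) (M : Set (TD d)) (hM : IsClosed M)
    (hx : ∀ m : ℕ, f^[m] x ∈ M) : h '' M = Set.univ := by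
  have hcl : IsClosed (h '' M) := (hM.isCompact.image hc).isClosed
  have hd : Dense (h '' M) := by
    have h1 : Dense ((fun y => h x + y) '' (Set.range fun m : ℕ => m • w)) :=
      (Homeomorph.addLeft (h x)).surjective.denseRange.dense_image (by fun_prop) hw
    refine h1.mono ?_
    rintro _ ⟨_, ⟨m, rfl⟩, rfl⟩
    exact ⟨_, hx m, semi_iter hh m x⟩
  rw [← hcl.closure_eq, hd.closure_eq]

lemma dyn_surj (hc : Continuous h) (hh : ∀ x, h (f x) = h x + w)
    (hw : Dense (Set.range fun m : ℕ => m • w)) : Function.Surjective h := by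
  have := image_full hc hh hw 0 Set.univ isClosed_univ (fun _ => trivial)
  rwa [Set.image_univ, Set.range_eq_univ] at this

lemma dyn_minimal (hc : Continuous h) (hh : ∀ x, h (f x) = h x + w)
    (hw : Dense (Set.range fun m : ℕ => m • w))
    (hinj : Dense {x | ∀ y, h y = h x → y = x}) (x : TD d) :
    Dense (Set.range fun n : ℕ => f^[n] x) := by
  have h1 := image_full hc hh hw x (closure (Set.range fun n : ℕ => f^[n] x)) isClosed_closure
    (fun m => subset_closure ⟨m, rfl⟩)
  have h2 : {x | ∀ y, h y = h x → y = x} ⊆ closure (Set.range fun n : ℕ => f^[n] x) := by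
    intro y hy
    have : h y ∈ h '' (closure (Set.range fun n : ℕ => f^[n] x)) := by rw [h1]; trivial
    obtain ⟨z, hz, hzy⟩ := this
    rwa [← hy z hzy]
  exact dense_closure.1 (hinj.mono h2)

lemma dyn_not_conj (hc : Continuous h) (hh : ∀ x, h (f x) = h x + w)
    (hw : Dense (Set.range fun m : ℕ => m • w))
    (hinj : Dense {x | ∀ y, h y = h x → y = x}) (a b : TD d) (hab : a ≠ b) (hhab : h a = h b) :
    ¬ ∃ (w : TD d) (k : TD d → TD d), IsHomeomorph k ∧ ∀ x : TD d, k (f x) = k x + w := by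
  rintro ⟨w', k, hk, hkf⟩
  obtain ⟨K, rfl⟩ := isHomeomorph_iff_exists_homeomorph.1 hk
  have hcl : IsClosed {x | h (K.symm (K x + (K b - K a))) = h x} := by
    refine isClosed_eq ?_ hc
    exact hc.comp (K.symm.continuous.comp (K.continuous.add continuous_const))
  have hmem : (Set.range fun n : ℕ => f^[n] a) ⊆
      {x | h (K.symm (K x + (K b - K a))) = h x} := by
    rintro _ ⟨m, rfl⟩
    have e1 : K (f^[m] a) + (K b - K a) = K (f^[m] b) := by
      rw [semi_iter (h := K) hkf, semi_iter (h := K) hkf]; abel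
    simp only [Set.mem_ofPred_eq]
    rw [e1, K.symm_apply_apply, semi_iter hh, semi_iter hh, hhab]
  have hall : ∀ x, h (K.symm (K x + (K b - K a))) = h x := by
    intro x
    have := (hcl.closure_subset_iff.2 hmem) ((dyn_minimal hc hh hw hinj a) x)
    exact this
  obtain ⟨x, hx⟩ := hinj.nonempty
  have h1 := hx _ (hall x)
  have h2 : K x + (K b - K a) = K x := K.symm_apply_eq.1 h1
  have h3 : K b - K a = 0 := by simpa using h2
  exact hab (K.injective (sub_eq_zero.1 h3)).symm

end Dyn

/-! ## Passing to the limit -/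

lemma pr0_tail {ι : Type*} [NormedAddCommGroup ι] [CompleteSpace ι] (u : ℕ → ι) (b : ℕ → ℝ)
    (hb : ∀ n, b (n + 1) ≤ b n / 2) (hu : ∀ n, ‖u (n + 1) - u n‖ ≤ b n) (l : ι)
    (hl : Tendsto u atTop (𝓝 l)) (n : ℕ) : ‖u n - l‖ ≤ 2 * b n := by
  have hbn : ∀ k, b (n + k) ≤ b n * (1 / 2) ^ k := by
    intro k
    induction k with
    | zero => simp
    | succ k ih =>
      have := hb (n + k)
      rw [← add_assoc, pow_succ]; linarith
  have h1 : ∀ k, dist (u (n + k)) (u (n + (k + 1))) ≤ b n * (1 / 2) ^ k := by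
    intro k
    rw [dist_comm, dist_eq_norm, ← add_assoc]
    exact (hu _).trans (hbn k)
  have h2 : Tendsto (fun k => u (n + k)) atTop (𝓝 l) := by
    have := (tendsto_add_atTop_iff_nat n).2 hl
    simpa [add_comm] using this
  have := dist_le_of_le_geometric_of_tendsto₀ (1 / 2) (b n) (by norm_num) h1 h2
  rw [dist_eq_norm] at this
  simp only [add_zero] at this
  refine this.trans (le_of_eq ?_)
  norm_num
  ring

lemma equi_limit {d : ℕ} (E : ℕ → RD d → RD d) (F : RD d → RD d)
    (hE : ∀ n, EquivariantD (E n)) (h : ∀ z, Tendsto (fun n => E n z) atTop (𝓝 (F z))) :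
    EquivariantD F := by
  intro z v
  refine tendsto_nhds_unique (h _) ?_
  simp only [fun n => hE n z v]
  exact (h z).add tendsto_const_nhds

lemma exists_P (e : ℕ) : ∃ P : RD (e + 2) → RD (e + 2), Continuous P ∧ EquivariantD P ∧
    TendstoUniformly (fun n => (stSeq e n).H.invFun) P atTop ∧ ∀ z, ‖P z - z‖ ≤ 4 := by
  have hstep : ∀ z n, ‖(stSeq e (n + 1)).H.invFun z - (stSeq e n).H.invFun z‖ ≤
      2 * (1 / 2 : ℝ) ^ n := by
    intro z n
    obtain ⟨g, hg1, -, hg3, -⟩ := (stSeq_rel e n).g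
    rw [hg1]
    exact hg3 _
  have hlim : ∀ z, ∃ l, Tendsto (fun n => (stSeq e n).H.invFun z) atTop (𝓝 l) := by
    intro z
    refine cauchySeq_tendsto_of_complete (cauchySeq_of_le_geometric (1 / 2) 2 (by norm_num) ?_)
    intro n
    rw [dist_comm, dist_eq_norm]
    exact hstep z n
  choose P hP using hlim
  have htail : ∀ z n, ‖(stSeq e n).H.invFun z - P z‖ ≤ 2 * (2 * (1 / 2 : ℝ) ^ n) := fun z n =>
    pr0_tail _ (fun n => 2 * (1 / 2 : ℝ) ^ n) (fun n => by simp only [pow_succ]; linarith)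
      (hstep z) _ (hP z) n
  have hu : TendstoUniformly (fun n => (stSeq e n).H.invFun) P atTop := by
    rw [Metric.tendstoUniformly_iff]
    intro ε hε
    have h0 : Tendsto (fun n : ℕ => 2 * (2 * (1 / 2 : ℝ) ^ n)) atTop (𝓝 0) := by
      have := (tendsto_pow_atTop_nhds_zero_of_lt_one (r := (1 / 2 : ℝ)) (by norm_num)
        (by norm_num)).const_mul 2 |>.const_mul 2
      simpa using this
    filter_upwards [h0.eventually (gt_mem_nhds hε)] with n hn z
    rw [dist_comm, dist_eq_norm]
    exact (htail z n).trans_lt hn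
  refine ⟨P, ?_, ?_, hu, ?_⟩
  · exact hu.continuous (Frequently.of_forall fun n => (stSeq e n).H.smooth_inv.continuous)
  · exact equi_limit _ P (fun n => (stSeq e n).H.equi_inv) hP
  · intro z
    have := htail z 0
    have h0 : (stSeq e 0).H.invFun z = z := by
      change z - 0 = z
      simp
    rw [h0, norm_sub_rev] at this
    norm_num at this
    exact this

/-- The size of the perturbation of the rotation vector. -/
def bS (e n : ℕ) : ℝ :=
  (1 / 2 : ℝ) ^ n * (Real.exp (-(n * (stSeq e n).q)) / (stSeq e n).q)

lemma q_pos (e n : ℕ) : (0 : ℝ) < (stSeq e n).q := by exact_mod_cast (stSeq e n).hq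

lemma exists_omega (e : ℕ) : ∃ ω : RD (e + 2), Tendsto (fun n => (stSeq e n).a) atTop (𝓝 ω) ∧
    ∀ n, ‖(stSeq e n).a - ω‖ ≤ 2 * bS e n := by
  have hb : ∀ n, bS e (n + 1) ≤ bS e n / 2 := by
    intro n
    have h1 : ((stSeq e n).q : ℝ) ≤ (stSeq e (n + 1)).q := by exact_mod_cast (stSeq_rel e n).qle
    have hq := q_pos e n
    have h2 : Real.exp (-((n + 1 : ℕ) * (stSeq e (n + 1)).q)) / (stSeq e (n + 1)).q ≤
        Real.exp (-(n * (stSeq e n).q)) / (stSeq e n).q := by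
      gcongr
      omega
    unfold bS
    rw [pow_succ]
    have : (0 : ℝ) < (1 / 2 : ℝ) ^ n := by positivity
    nlinarith
  have h1 : ∀ n, bS e n ≤ 1 * (1 / 2) ^ n := by
    intro n
    have hq : (1 : ℝ) ≤ (stSeq e n).q := by exact_mod_cast (stSeq e n).hq
    unfold bS
    rw [one_mul]
    have h2 : Real.exp (-(n * (stSeq e n).q)) ≤ 1 := by
      rw [Real.exp_le_one_iff]
      have : (0 : ℝ) ≤ n * (stSeq e n).q := by positivity
      linarith
    have h3 : Real.exp (-(n * (stSeq e n).q)) / (stSeq e n).q ≤ 1 := by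
      rw [div_le_one (by linarith)]; linarith
    exact mul_le_of_le_one_right (by positivity) h3
  have hc : CauchySeq (fun n => (stSeq e n).a) := by
    refine cauchySeq_of_le_geometric (1 / 2) 1 (by norm_num) ?_
    intro n
    rw [dist_comm, dist_eq_norm]
    exact (stSeq_rel e n).aclose.trans (h1 n)
  obtain ⟨ω, hω⟩ := cauchySeq_tendsto_of_complete hc
  exact ⟨ω, hω, fun n => pr0_tail _ (bS e) hb (fun n => (stSeq_rel e n).aclose) ω hω n⟩

lemma q_mul_bS (e n : ℕ) : (stSeq e n).q * bS e n =
    (1 / 2 : ℝ) ^ n * Real.exp (-(n * (stSeq e n).q)) := by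
  have := q_pos e n
  unfold bS
  field_simp

lemma prD_smul {d : ℕ} (m : ℕ) (a : RD d) : prD ((m : ℝ) • a) = m • prD a := by
  ext i
  simp [prD]

lemma q_bS_le (e n : ℕ) : (stSeq e n).q * bS e n ≤ (1 / 2 : ℝ) ^ n := by
  rw [q_mul_bS]
  refine mul_le_of_le_one_right (by positivity) ?_
  rw [Real.exp_le_one_iff]
  have : (0 : ℝ) ≤ n * (stSeq e n).q := by positivity
  linarith

lemma omega_approx {e : ℕ} {ω : RD (e + 2)} (hω : ∀ n, ‖(stSeq e n).a - ω‖ ≤ 2 * bS e n)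
    (θ : RD (e + 2)) (n : ℕ) : ∃ (m : ℕ) (v : Fin (e + 2) → ℤ),
      ‖(m : ℝ) • ω - intVecD v - θ‖ ≤ 3 * (1 / 2 : ℝ) ^ n := by
  obtain ⟨m, hm, v, hv⟩ := (stSeq_rel e n).dens θ
  refine ⟨m, v, ?_⟩
  have h1 : ‖(m : ℝ) • (ω - (stSeq e (n + 1)).a)‖ ≤ 2 * (1 / 2 : ℝ) ^ n := by
    rw [norm_smul, norm_sub_rev, Real.norm_natCast]
    have hm' : (m : ℝ) ≤ (stSeq e (n + 1)).q := by exact_mod_cast hm.le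
    calc (m : ℝ) * ‖(stSeq e (n + 1)).a - ω‖ ≤ (stSeq e (n + 1)).q * (2 * bS e (n + 1)) :=
          mul_le_mul hm' (hω _) (norm_nonneg _) (by positivity)
      _ = 2 * ((stSeq e (n + 1)).q * bS e (n + 1)) := by ring
      _ ≤ 2 * (1 / 2 : ℝ) ^ (n + 1) := by have := q_bS_le e (n + 1); linarith
      _ ≤ 2 * (1 / 2 : ℝ) ^ n := by
          rw [pow_succ]
          have : (0 : ℝ) < (1 / 2 : ℝ) ^ n := by positivity
          linarith
  have h2 : (m : ℝ) • ω - intVecD v - θ = (m : ℝ) • (ω - (stSeq e (n + 1)).a) +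
      ((m : ℝ) • (stSeq e (n + 1)).a - θ - intVecD v) := by
    rw [smul_sub]; abel
  rw [h2]
  exact (norm_add_le _ _).trans (by linarith)

lemma geom0 (c : ℝ) : Tendsto (fun n : ℕ => c * (1 / 2 : ℝ) ^ n) atTop (𝓝 0) := by
  have := (tendsto_pow_atTop_nhds_zero_of_lt_one (r := (1 / 2 : ℝ)) (by norm_num)
        (by norm_num)).const_mul c
  simpa using this

lemma omega_dense {e : ℕ} {ω : RD (e + 2)} (hω : ∀ n, ‖(stSeq e n).a - ω‖ ≤ 2 * bS e n) :
    Dense (Set.range fun m : ℕ => m • prD ω) := by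
  rw [dense_iff_inter_open]
  intro U hU hne
  obtain ⟨x, hx⟩ := hne
  obtain ⟨θ, rfl⟩ := prD_surjective x
  obtain ⟨ε, hε, hball⟩ := Metric.isOpen_iff.1 (hU.preimage prD_continuous) θ hx
  obtain ⟨n, hn⟩ := ((geom0 3).eventually (gt_mem_nhds hε)).exists
  obtain ⟨m, v, hmv⟩ := omega_approx hω θ n
  refine ⟨m • prD ω, ?_, m, rfl⟩
  have : (m : ℝ) • ω - intVecD v ∈ prD ⁻¹' U := hball (by
    rw [mem_ball_iff_norm]; exact hmv.trans_lt hn)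
  have h2 : prD ((m : ℝ) • ω - intVecD v) = m • prD ω := by
    rw [← prD_smul]
    rw [prD_eq_iff]
    refine ⟨-v, ?_⟩
    funext i; simp [intVecD, sub_eq_add_neg]
  rw [← h2]; exact this

lemma omega_not_int {e : ℕ} {ω : RD (e + 2)} (hω : ∀ n, ‖(stSeq e n).a - ω‖ ≤ 2 * bS e n)
    (q : ℕ) (hq : 0 < q) (k : ℤ) : (q : ℝ) * ω 0 ≠ k := by
  intro hk
  have hq0 : (0 : ℝ) < q := by exact_mod_cast hq
  obtain ⟨n, hn⟩ := ((geom0 3).eventually (gt_mem_nhds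
    (show (0 : ℝ) < 1 / (2 * q) by positivity))).exists
  obtain ⟨m, v, hmv⟩ := omega_approx hω (fun _ => 1 / (2 * q)) n
  have h0 := (norm_le_pi_norm ((m : ℝ) • ω - intVecD v - (fun _ => 1 / (2 * (q : ℝ)))) 0).trans hmv
  simp only [Pi.sub_apply, Pi.smul_apply, smul_eq_mul, intVecD, Real.norm_eq_abs] at h0
  have h1 := h0.trans_lt hn
  have h2 : |2 * q * (m * ω 0 - v 0 - 1 / (2 * q))| < 1 := by
    rw [abs_mul, abs_of_pos (by positivity)]
    calc 2 * q * |m * ω 0 - v 0 - 1 / (2 * q)| < 2 * q * (1 / (2 * q)) := by gcongr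
      _ = 1 := by field_simp
  have h3 : 2 * q * (m * ω 0 - v 0 - 1 / (2 * q)) = ((2 * (m * k - q * v 0) - 1 : ℤ) : ℝ) := by
    push_cast
    rw [← hk]
    field_simp
  rw [h3] at h2
  have h4 : |2 * (m * k - q * v 0) - 1| < 1 := by exact_mod_cast h2
  rw [Int.abs_lt_one_iff] at h4
  omega

lemma q_ge (e n : ℕ) : n ≤ (stSeq e n).q := by
  cases n with
  | zero => exact Nat.zero_le _
  | succ n => exact le_trans (by omega) (stSeq_rel e n).qn

lemma omega_super {e : ℕ} {ω : RD (e + 2)} (hω : ∀ n, ‖(stSeq e n).a - ω‖ ≤ 2 * bS e n) :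
    SuperLiouvilleD ω := by
  intro M
  rw [frequently_atTop]
  intro N
  obtain ⟨n, hn1, hn2, hn3⟩ : ∃ n : ℕ, N ≤ n ∧ 1 ≤ n ∧ 1 - M < n := by
    obtain ⟨n, hn⟩ := exists_nat_gt (1 - M)
    exact ⟨max n (max N 1), by simp, by simp,
      hn.trans_le (by exact_mod_cast le_max_left _ _)⟩
  refine ⟨(stSeq e n).q, hn1.trans (q_ge e n), ?_⟩
  set q := (stSeq e n).q with hqdef
  have hq0 : (0 : ℝ) < q := q_pos e n
  have hqn : 0 < q := (stSeq e n).hq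
  have hbdd : BddBelow (Set.range fun v : Fin (e + 2) → ℤ => ‖(q : ℝ) • ω - intVecD v‖) :=
    ⟨0, by rintro _ ⟨v, rfl⟩; exact norm_nonneg _⟩
  have hpos : 0 < normTD ((q : ℝ) • ω) := by
    have h1 : 0 < |(q : ℝ) * ω 0 - round ((q : ℝ) * ω 0)| := by
      rw [abs_pos, sub_ne_zero]
      exact omega_not_int hω q hqn _
    refine h1.trans_le (le_ciInf fun v => ?_)
    refine le_trans (round_le ((q : ℝ) * ω 0) (v 0)) ?_
    exact norm_le_pi_norm ((q : ℝ) • ω - intVecD v) 0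
  have hle : normTD ((q : ℝ) • ω) ≤ Real.exp (1 - n * q) := by
    obtain ⟨v, hv⟩ := (stSeq e n).ha
    refine (ciInf_le hbdd v).trans ?_
    rw [← hv, ← smul_sub, norm_smul, norm_sub_rev, Real.norm_natCast]
    calc (q : ℝ) * ‖(stSeq e n).a - ω‖ ≤ q * (2 * bS e n) := by gcongr; exact hω n
      _ = 2 * (q * bS e n) := by ring
      _ = 2 * ((1 / 2 : ℝ) ^ n * Real.exp (-(n * q))) := by rw [q_mul_bS]
      _ ≤ 2 * (1 * Real.exp (-(n * q))) := by
          gcongr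
          exact pow_le_one₀ (by norm_num) (by norm_num)
      _ ≤ Real.exp 1 * Real.exp (-(n * q)) := by
          rw [one_mul]
          gcongr
          have := Real.add_one_le_exp (1 : ℝ)
          linarith
      _ = _ := by rw [← Real.exp_add]; congr 1
  have hlog : Real.log (normTD ((q : ℝ) • ω)) ≤ 1 - n * q :=
    (Real.log_le_log hpos hle).trans (by rw [Real.log_exp])
  have hq1 : (1 : ℝ) ≤ q := by exact_mod_cast hqn
  rw [inv_mul_lt_iff₀ hq0]
  nlinarith

/-- The diffeomorphism conjugate to a translation. -/
def conjT {d : ℕ} (H : TDiff d) (a : RD d) : TDiff d := (H.comp (TDiff.trans a)).comp H.symm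

lemma conjT_eq {d : ℕ} (H : TDiff d) (a : RD d) : (conjT H a).toFun = conjF H a := rfl

lemma conjF_inv {d : ℕ} (H : TDiff d) (a z : RD d) : conjF H (-a) (conjF H a z) = z := by
  simp [conjF, H.left_inv _, H.right_inv _]

lemma limit_inv {d : ℕ} (E E' : ℕ → RD d → RD d) (F G : RD d → RD d) (hG : Continuous G)
    (hE : TendstoUniformly E F atTop) (hE' : TendstoUniformly E' G atTop)
    (h : ∀ n z, E' n (E n z) = z) : Function.LeftInverse G F := by
  intro z
  have h1 : Tendsto (fun n => E' n (E n z)) atTop (𝓝 (G (F z))) :=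
    hE'.tendsto_comp hG.continuousAt (hE.tendsto_at z)
  simp only [h] at h1
  exact tendsto_nhds_unique h1 tendsto_const_nhds

lemma exists_FG (e : ℕ) : ∃ F G : RD (e + 2) → RD (e + 2),
    TendstoUniformly (fun n => conjF (stSeq e n).H (stSeq e n).a) F atTop ∧
    Function.LeftInverse G F ∧ Function.RightInverse G F ∧
    ContDiff ℝ (⊤ : ℕ∞) F ∧ ContDiff ℝ (⊤ : ℕ∞) G ∧ EquivariantD F := by
  obtain ⟨F, hF, hFu⟩ := smooth_limit (fun n => conjF (stSeq e n).H (stSeq e n).a)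
    (fun n => (conjT (stSeq e n).H (stSeq e n).a).smooth)
    (fun n k hk z => (stSeq_rel e n).cF k hk z)
  obtain ⟨G, hG, hGu⟩ := smooth_limit (fun n => conjF (stSeq e n).H (-(stSeq e n).a))
    (fun n => (conjT (stSeq e n).H (-(stSeq e n).a)).smooth)
    (fun n k hk z => (stSeq_rel e n).cG k hk z)
  refine ⟨F, G, hFu, ?_, ?_, hF, hG, ?_⟩
  · exact limit_inv _ _ F G hG.continuous hFu hGu (fun n z => conjF_inv _ _ _)
  · refine limit_inv _ _ G F hF.continuous hGu hFu (fun n z => ?_)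
    have := conjF_inv (stSeq e n).H (-(stSeq e n).a) z
    rwa [neg_neg] at this
  · exact equi_limit _ F (fun n => (conjT (stSeq e n).H (stSeq e n).a).equi)
      (fun z => hFu.tendsto_at z)

lemma desc_mp {e : ℕ} {F : RD (e + 2) → RD (e + 2)} (hF : Continuous F) (hE : EquivariantD F)
    (hFu : TendstoUniformly (fun n => conjF (stSeq e n).H (stSeq e n).a) F atTop) :
    MeasurePreserving (desc F) volume volume := by
  refine mp_limit (desc F) (fun n => desc (conjT (stSeq e n).H (stSeq e n).a).toFun)
    (desc_continuous hE hF) (fun n => TDiff.mp _)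
    (fun n => desc_continuous (TDiff.equi _) (TDiff.smooth _).continuous) ?_
  intro x
  obtain ⟨z, rfl⟩ := prD_surjective x
  simp only [desc_prD hE, desc_prD (TDiff.equi _)]
  exact (prD_continuous.tendsto _).comp (hFu.tendsto_at z)

lemma semi_lift {e : ℕ} {F P : RD (e + 2) → RD (e + 2)} {ω : RD (e + 2)} (hP : Continuous P)
    (hFu : TendstoUniformly (fun n => conjF (stSeq e n).H (stSeq e n).a) F atTop)
    (hPu : TendstoUniformly (fun n => (stSeq e n).H.invFun) P atTop)
    (hω : Tendsto (fun n => (stSeq e n).a) atTop (𝓝 ω)) (z : RD (e + 2)) :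
    P (F z) = P z + ω := by
  have h1 : Tendsto (fun n => (stSeq e n).H.invFun (conjF (stSeq e n).H (stSeq e n).a z)) atTop
      (𝓝 (P (F z))) :=
    hPu.tendsto_comp hP.continuousAt (hFu.tendsto_at z)
  have h2 := (hPu.tendsto_at z).add hω
  refine tendsto_nhds_unique h1 (h2.congr fun n => ?_)
  simp [conjF, (stSeq e n).H.left_inv _]

lemma P_noninj {e : ℕ} {P : RD (e + 2) → RD (e + 2)}
    (hPu : TendstoUniformly (fun n => (stSeq e n).H.invFun) P atTop) :
    P 0 = P (Pi.single 1 (stSeq e 0).t) := by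
  have h1 : ∀ n, (stSeq e n).H.invFun 0 = 0 ∧
      (stSeq e n).H.invFun (Pi.single 1 (stSeq e 0).t) = Pi.single 1 (stSeq e n).t := by
    intro n
    induction n with
    | zero =>
      constructor
      · change (0 : RD (e + 2)) - 0 = 0
        simp
      · change (_ : RD (e + 2)) - 0 = _
        simp
    | succ n ih =>
      obtain ⟨g, hg, -, -, -, hg0, hg1⟩ := (stSeq_rel e n).g
      rw [hg, hg, ih.1, ih.2]
      exact ⟨hg0, hg1⟩
  have ht : Tendsto (fun n => (stSeq e n).t) atTop (𝓝 0) := by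
    refine squeeze_zero (fun n => (stSeq e n).ht0.le) (fun n => (stSeq e n).htn) ?_
    have := geom0 1
    simp only [one_mul] at this
    exact this
  have h2 : Tendsto (fun n => (Pi.single 1 (stSeq e n).t : RD (e + 2))) atTop (𝓝 0) := by
    have hc : Continuous (fun t : ℝ => (Pi.single 1 t : RD (e + 2))) :=
      continuous_single (A := fun _ : Fin (e + 2) => ℝ) 1
    have := (hc.tendsto 0).comp ht
    simpa [Function.comp_def] using this
  have h3 := hPu.tendsto_at 0
  have h4 := hPu.tendsto_at (Pi.single 1 (stSeq e 0).t)
  simp only [(h1 _).1] at h3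
  simp only [(h1 _).2] at h4
  rw [tendsto_nhds_unique h3 tendsto_const_nhds, tendsto_nhds_unique h4 h2]

lemma a_ne_b (e : ℕ) : prD (0 : RD (e + 2)) ≠ prD (Pi.single 1 (stSeq e 0).t) := by
  intro h
  obtain ⟨v, hv⟩ := (prD_eq_iff _ _).1 h
  have h1 := congrFun hv 1
  simp [intVecD] at h1
  have : (stSeq e 0).t = ((-v 1 : ℤ) : ℝ) := by push_cast; linarith
  exact (stSeq e 0).ht ⟨((-v 1 : ℤ) : ℚ), by rw [this]; simp⟩

/-! ## Injectivity points -/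

/-- The bad sets. -/
def badS (e n : ℕ) : Set (TD (e + 2)) :=
  {x | ‖(stSeq e (n + 1)).q • x 0‖ ≤ (1 / 2 : ℝ) ^ n / 8}

lemma badS_measure (e n : ℕ) : volume (badS e n) ≤ ENNReal.ofReal ((1 / 2 : ℝ) ^ n / 4) := by
  have hq : 1 < (stSeq e (n + 1)).q := lt_of_lt_of_le (by omega) (stSeq_rel e n).qn
  have h1 : MeasurePreserving (fun y : AddCircle (1 : ℝ) => (stSeq e (n + 1)).q • y) volume volume :=
    (AddCircle.ergodic_nsmul hq).toMeasurePreserving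
  have h2 : MeasurePreserving (fun x : TD (e + 2) => x 0) volume volume :=
    measurePreserving_eval (fun _ : Fin (e + 2) => (volume : Measure (AddCircle (1 : ℝ)))) 0
  have h3 := h1.comp h2
  have h4 : badS e n = (fun x : TD (e + 2) => (stSeq e (n + 1)).q • x 0) ⁻¹'
      (Metric.closedBall 0 ((1 / 2 : ℝ) ^ n / 8)) := by
    ext x; simp [badS]
  rw [h4]
  have h5 := h3.measure_preimage (Metric.isClosed_closedBall
    (x := (0 : AddCircle (1 : ℝ))) (ε := (1 / 2 : ℝ) ^ n / 8)).measurableSet.nullMeasurableSet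
  refine (le_of_eq h5).trans ?_
  rw [AddCircle.volume_closedBall]
  refine ENNReal.ofReal_le_ofReal ((min_le_right _ _).trans (le_of_eq ?_))
  ring

lemma etaN_half (e n : ℕ) : 2 * etaN (n + 1) (stSeq e (n + 2)).q ≤
    2 * etaN n (stSeq e (n + 1)).q / 2 := by
  have h1 : ((stSeq e (n + 1)).q : ℝ) ≤ (stSeq e (n + 2)).q := by
    exact_mod_cast (stSeq_rel e (n + 1)).qle
  have hq := q_pos e (n + 1)
  unfold etaN
  have h2 : (1 / 2 : ℝ) ^ (n + 1) / (64 * (stSeq e (n + 2)).q) ≤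
      (1 / 2 : ℝ) ^ (n + 1) / (64 * (stSeq e (n + 1)).q) := by gcongr
  have h3 : (1 / 2 : ℝ) ^ (n + 1) / (64 * (stSeq e (n + 1)).q) =
    (1 / 2 : ℝ) ^ n / (64 * (stSeq e (n + 1)).q) / 2 := by rw [pow_succ]; ring
  linarith

/-- A lift with limit outside of the bad sets is not moved after stage `N`. -/
lemma frozen {e : ℕ} {P : RD (e + 2) → RD (e + 2)}
    (hPu : TendstoUniformly (fun n => (stSeq e n).H.invFun) P atTop) (N : ℕ)
    (p y : RD (e + 2)) (hp : ∀ n, N ≤ n → prD p ∉ badS e n) (hy : P y = p) :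
    (stSeq e N).H.invFun y = p := by
  have hstep : ∀ n, ‖(stSeq e (n + 1)).H.invFun y 0 - (stSeq e n).H.invFun y 0‖ ≤
      2 * etaN n (stSeq e (n + 1)).q := by
    intro n
    obtain ⟨g, hg, hg0, -⟩ := (stSeq_rel e n).g
    rw [hg]; exact hg0 _
  have hlim : Tendsto (fun n => (stSeq e n).H.invFun y 0) atTop (𝓝 (p 0)) := by
    rw [← hy]
    exact (tendsto_pi_nhds.1 (hPu.tendsto_at y)) 0
  have htail := pr0_tail _ (fun n => 2 * etaN n (stSeq e (n + 1)).q) (etaN_half e) hstep _ hlim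
  have hfix : ∀ n, N ≤ n → (stSeq e (n + 1)).H.invFun y = (stSeq e n).H.invFun y := by
    intro n hn
    obtain ⟨g, hg, -, -, hg1, -⟩ := (stSeq_rel e n).g
    rw [hg]
    apply hg1
    set q := (stSeq e (n + 1)).q
    set u := (stSeq e n).H.invFun y
    have hq : (0 : ℝ) < q := q_pos e (n + 1)
    have hqη : q * etaN n q = (1 / 2 : ℝ) ^ n / 64 := by unfold etaN; field_simp
    have hb : (1 / 2 : ℝ) ^ n / 8 < ‖((q * p 0 : ℝ) : AddCircle (1 : ℝ))‖ := by
      have := hp n hn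
      simp only [badS, Set.mem_ofPred_eq, not_le, prD] at this
      have h2 : ((q * p 0 : ℝ) : AddCircle (1 : ℝ)) = q • ((p 0 : ℝ) : AddCircle (1 : ℝ)) := by
        rw [← AddCircle.coe_nsmul, nsmul_eq_mul]
      rw [h2]; exact this
    have hd : ‖((q * p 0 : ℝ) : AddCircle (1 : ℝ)) - ((q * u 0 : ℝ) : AddCircle (1 : ℝ))‖ ≤
        (1 / 2 : ℝ) ^ n / 16 := by
      rw [← AddCircle.coe_sub]
      refine (circle_norm_le _).trans ?_
      rw [← mul_sub, abs_mul, abs_of_pos hq, abs_sub_comm]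
      have := htail n
      rw [Real.norm_eq_abs] at this
      calc (q : ℝ) * |u 0 - p 0| ≤ q * (2 * (2 * etaN n q)) := by gcongr
        _ = 4 * (q * etaN n q) := by ring
        _ = _ := by rw [hqη]; ring
    have ht := norm_sub_norm_le ((q * p 0 : ℝ) : AddCircle (1 : ℝ)) ((q * u 0 : ℝ) : AddCircle (1 : ℝ))
    rw [hqη]
    linarith
  have hconst : ∀ k, (stSeq e (N + k)).H.invFun y = (stSeq e N).H.invFun y := by
    intro k
    induction k with
    | zero => rfl
    | succ k ih => rw [← ih]; exact hfix (N + k) (by omega)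
  have h1 : Tendsto (fun k => (stSeq e (k + N)).H.invFun y) atTop (𝓝 p) := by
    rw [← hy]
    exact (tendsto_add_atTop_iff_nat N).2 (hPu.tendsto_at y)
  have h2 : ∀ k, (stSeq e (k + N)).H.invFun y = (stSeq e N).H.invFun y := by
    intro k; rw [Nat.add_comm k N]; exact hconst k
  simp only [h2] at h1
  exact tendsto_nhds_unique tendsto_const_nhds h1

/-- Points outside the bad sets are fixed after stage `N`. -/
lemma frozen' {e : ℕ} {P : RD (e + 2) → RD (e + 2)}
    (hPu : TendstoUniformly (fun n => (stSeq e n).H.invFun) P atTop) (N : ℕ)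
    (p : RD (e + 2)) (hp : ∀ n, N ≤ n → prD p ∉ badS e n) :
    P ((stSeq e N).H.toFun p) = p := by
  have hfix : ∀ k, (stSeq e (k + N)).H.invFun ((stSeq e N).H.toFun p) = p := by
    intro k
    induction k with
    | zero => rw [Nat.zero_add]; exact (stSeq e N).H.left_inv p
    | succ k ih =>
      rw [Nat.add_right_comm]
      have hn : N ≤ k + N := by omega
      generalize k + N = n at ih hn
      obtain ⟨g, hg, -, -, hg1, -⟩ := (stSeq_rel e n).g
      rw [hg, ih]
      apply hg1
      have hq := q_pos e (n + 1)
      have hqη : (stSeq e (n + 1)).q * etaN n (stSeq e (n + 1)).q = (1 / 2 : ℝ) ^ n / 64 := by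
        unfold etaN; field_simp
      have := hp n hn
      simp only [badS, Set.mem_ofPred_eq, not_le, prD] at this
      have h2 : (((stSeq e (n + 1)).q * p 0 : ℝ) : AddCircle (1 : ℝ)) =
          (stSeq e (n + 1)).q • ((p 0 : ℝ) : AddCircle (1 : ℝ)) := by
        rw [← AddCircle.coe_nsmul, nsmul_eq_mul]
      rw [h2, hqη]
      have : (0 : ℝ) < (1 / 2 : ℝ) ^ n := by positivity
      linarith
  have h1 := (tendsto_add_atTop_iff_nat N).2 (hPu.tendsto_at ((stSeq e N).H.toFun p))
  simp only [hfix] at h1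
  exact tendsto_nhds_unique h1 tendsto_const_nhds

lemma inj_dense {e : ℕ} {P : RD (e + 2) → RD (e + 2)} (hPe : EquivariantD P)
    (hPu : TendstoUniformly (fun n => (stSeq e n).H.invFun) P atTop) :
    Dense {x | ∀ y, desc P y = desc P x → y = x} := by
  rw [dense_iff_inter_open]
  intro U hU hne
  have hμU : 0 < volume U := hU.measure_pos volume hne
  obtain ⟨r, hr0, hrU⟩ : ∃ r : ℝ, 0 < r ∧ ENNReal.ofReal r < volume U := by
    obtain ⟨r, hr, hr'⟩ := ENNReal.lt_iff_exists_real_btwn.1 hμU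
    refine ⟨r, ?_, hr'.2⟩
    exact ENNReal.ofReal_pos.1 hr'.1
  obtain ⟨N, hN⟩ := ((geom0 1).eventually (gt_mem_nhds hr0)).exists
  set V := desc (stSeq e N).H.toFun ⁻¹' U
  have hV : volume V = volume U :=
    (stSeq e N).H.mp.measure_preimage hU.measurableSet.nullMeasurableSet
  have hB : volume (⋃ k, badS e (k + N)) ≤ ENNReal.ofReal r := by
    refine (measure_iUnion_le _).trans ?_
    refine (ENNReal.tsum_le_tsum fun k => badS_measure e (k + N)).trans ?_
    have hs : HasSum (fun k : ℕ => (1 / 2 : ℝ) ^ (k + N) / 4) ((1 / 2 : ℝ) ^ N / 2) := by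
      have := (hasSum_geometric_two).mul_right ((1 / 2 : ℝ) ^ N / 4)
      have e1 : (fun k : ℕ => (1 / 2 : ℝ) ^ (k + N) / 4) =
          fun k : ℕ => (1 / 2 : ℝ) ^ k * ((1 / 2 : ℝ) ^ N / 4) := by
        funext k; rw [pow_add]; ring
      have e2 : (1 / 2 : ℝ) ^ N / 2 = 2 * ((1 / 2 : ℝ) ^ N / 4) := by ring
      rw [e1, e2]
      exact this
    rw [← ENNReal.ofReal_tsum_of_nonneg (fun k => by positivity) hs.summable, hs.tsum_eq]
    refine ENNReal.ofReal_le_ofReal ?_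
    have : (0 : ℝ) < (1 / 2 : ℝ) ^ N := by positivity
    linarith
  obtain ⟨x, hxV, hxB⟩ : ∃ x ∈ V, x ∉ ⋃ k, badS e (k + N) := by
    by_contra hcon
    push Not at hcon
    have : volume V ≤ volume (⋃ k, badS e (k + N)) := measure_mono hcon
    rw [hV] at this
    exact absurd (this.trans hB) (not_le.2 hrU)
  obtain ⟨p, rfl⟩ := prD_surjective x
  have hp : ∀ n, N ≤ n → prD p ∉ badS e n := by
    intro n hn hmem
    refine hxB (Set.mem_iUnion.2 ⟨n - N, ?_⟩)
    rwa [Nat.sub_add_cancel hn]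
  have hxU : prD ((stSeq e N).H.toFun p) ∈ U := by
    rw [← desc_prD (stSeq e N).H.equi]; exact hxV
  refine ⟨_, hxU, ?_⟩
  intro y hy
  obtain ⟨y, rfl⟩ := prD_surjective y
  rw [desc_prD hPe, desc_prD hPe, frozen' hPu N p hp] at hy
  obtain ⟨v, hv⟩ := (prD_eq_iff _ _).1 hy
  have h1 : P (y + intVecD (-v)) = p := by
    rw [hPe, hv]
    funext i; simp [intVecD]
  have h2 := frozen hPu N p _ hp h1
  rw [← h2, (stSeq e N).H.right_inv, prD_add, prD_intVecD, add_zero]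

lemma rot_vec {d : ℕ} {F P : RD d → RD d} {ω : RD d} (hP : ∀ z, ‖P z - z‖ ≤ 4)
    (h : ∀ z, P (F z) = P z + ω) (z : RD d) :
    Tendsto (fun n : ℕ => (n : ℝ)⁻¹ • (F^[n] z - z)) atTop (𝓝 ω) := by
  have hit : ∀ n : ℕ, P (F^[n] z) = P z + (n : ℝ) • ω := by
    intro n
    induction n with
    | zero => simp
    | succ n ih =>
      rw [Function.iterate_succ_apply', h, ih]
      push_cast
      rw [add_smul, one_smul, add_assoc]
  rw [tendsto_iff_norm_sub_tendsto_zero]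
  have h8 : Tendsto (fun n : ℕ => 8 * (n : ℝ)⁻¹) atTop (𝓝 0) := by
    have := (tendsto_inv_atTop_nhds_zero_nat (𝕜 := ℝ)).const_mul 8
    simpa using this
  refine squeeze_zero' (Eventually.of_forall fun n => norm_nonneg _) ?_ h8
  filter_upwards [eventually_gt_atTop 0] with n hn
  have hn0 : (0 : ℝ) < n := by exact_mod_cast hn
  have h1 : (n : ℝ)⁻¹ • (F^[n] z - z) - ω =
      (n : ℝ)⁻¹ • ((P z - z) - (P (F^[n] z) - F^[n] z)) := by
    rw [hit n]
    have : ω = (n : ℝ)⁻¹ • ((n : ℝ) • ω) := by rw [smul_smul, inv_mul_cancel₀ hn0.ne', one_smul]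
    nth_rewrite 1 [this]
    rw [← smul_sub]
    congr 1
    abel
  rw [h1, norm_smul, norm_inv, Real.norm_natCast, mul_comm]
  have h2 := norm_sub_le (P z - z) (P (F^[n] z) - F^[n] z)
  have h3 := hP z
  have h4 := hP (F^[n] z)
  gcongr
  linarith

/-- **Theorem 1.6.** For any d ≥ 2 there is a C^∞ area-preserving minimal diffeomorphism of
𝕋^d, semi-conjugate to a translation via a continuous surjection homotopic to the identity,
which is not topologically conjugate to any translation; moreover it can be chosen to be a
pseudo-rotation with super-Liouvillean rotation vector. -/
theorem negative_answer_to_Norton_Sullivan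
    (d : ℕ) (hd : 2 ≤ d) :
    ∃ (f : TD d → TD d) (F : RD d → RD d) (ω : RD d),
      IsHomeomorph f ∧
      (∃ G : RD d → RD d, Function.LeftInverse G F ∧ Function.RightInverse G F ∧
        ContDiff ℝ (⊤ : ℕ∞) F ∧ ContDiff ℝ (⊤ : ℕ∞) G) ∧
      IsLiftD F f ∧ EquivariantD F ∧
      MeasurePreserving f (volume : Measure (TD d)) volume ∧
      (∀ x : TD d, Dense (Set.range fun n : ℕ => f^[n] x)) ∧
      (∃ (w : TD d) (h : TD d → TD d), Continuous h ∧ Function.Surjective h ∧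
        (∃ H : RD d → RD d, Continuous H ∧ IsLiftD H h ∧ EquivariantD H) ∧
        ∀ x : TD d, h (f x) = h x + w) ∧
      (¬ ∃ (w : TD d) (h : TD d → TD d), IsHomeomorph h ∧ ∀ x : TD d, h (f x) = h x + w) ∧
      (∀ z : RD d, Tendsto (fun n : ℕ => (n : ℝ)⁻¹ • (F^[n] z - z)) atTop (𝓝 ω)) ∧
      SuperLiouvilleD ω := by
  obtain ⟨e, rfl⟩ : ∃ e, d = e + 2 := ⟨d - 2, by omega⟩
  obtain ⟨F, G, hFu, hGF, hFG, hFs, hGs, hFe⟩ := exists_FG e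
  obtain ⟨P, hPc, hPe, hPu, hPb⟩ := exists_P e
  obtain ⟨ω, hωl, hω⟩ := exists_omega e
  have hsemi : ∀ z, P (F z) = P z + ω := semi_lift hPc hFu hPu hωl
  have hGe : EquivariantD G := equivariant_inv hFe hGF hFG
  have hh : ∀ x, desc P (desc F x) = desc P x + prD ω := by
    intro x
    obtain ⟨z, rfl⟩ := prD_surjective x
    rw [desc_prD hFe, desc_prD hPe, desc_prD hPe, hsemi, prD_add]
  have hc : Continuous (desc P) := desc_continuous hPe hPc
  have hw := omega_dense hω
  have hinj := inj_dense hPe hPu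
  refine ⟨desc F, F, ω, ?_, ⟨G, hGF, hFG, hFs, hGs⟩, fun z => (desc_prD hFe z).symm, hFe,
    desc_mp hFs.continuous hFe hFu, dyn_minimal hc hh hw hinj,
    ⟨prD ω, desc P, hc, dyn_surj hc hh hw, ⟨P, hPc, fun z => (desc_prD hPe z).symm, hPe⟩, hh⟩,
    dyn_not_conj hc hh hw hinj (prD 0) (prD (Pi.single 1 (stSeq e 0).t)) (a_ne_b e) ?_,
    rot_vec hPb hsemi, omega_super hω⟩
  · refine isHomeomorph_iff_exists_homeomorph.2 ⟨⟨⟨desc F, desc G, ?_, ?_⟩, ?_, ?_⟩, rfl⟩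
    · intro x
      obtain ⟨z, rfl⟩ := prD_surjective x
      rw [desc_prD hFe, desc_prD hGe, hGF]
    · intro x
      obtain ⟨z, rfl⟩ := prD_surjective x
      rw [desc_prD hGe, desc_prD hFe, hFG]
    · exact desc_continuous hFe hFs.continuous
    · exact desc_continuous hGe hGs.continuous
  · rw [desc_prD hPe, desc_prD hPe, P_noninj hPu]
end
end

section
/- Let ω = (ω₁,ω₂) ∈ ℝ² be semi-irrational. Then: (i) the data (c,d) ∈ ℤ²∖{(0,0)} with gcd(c,d)=1 and e ∈ ℚ satisfying cω₁+dω₂+e=0 is unique up to simultaneous change of sign; in particular the set of character vectors {±(d,−c)} and the character number q (the positive denominator of e in lowest terms) are uniquely determined by ω, and they depend only on ω mod ℤ²; (ii) given a character vector v = (d,−c), the value α mod ℤ, where α = q(aω₁+bω₂) for any a,b ∈ ℤ with [[a,b],[c,d]] ∈ SL(2,ℤ), is independent of the choice of a,b; (iii) the character frequency 𝓕(ω̄) := ‖α‖_𝕋 is independent of the choice of character vector, and α ∉ ℚ. -/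
open Filter Topology MeasureTheory

noncomputable section

theorem cd_rational (ω : R2) (h : IrrationalVec ω) (a b c d : ℤ) (r s : ℚ)
    (h1 : (a : ℝ) * ω.1 + (b : ℝ) * ω.2 = (r : ℝ))
    (h2 : (c : ℝ) * ω.1 + (d : ℝ) * ω.2 = (s : ℝ)) : a * d - b * c = 0 := by
  by_contra hD
  apply h
  have hR : (a : ℝ) * d - b * c ≠ 0 := by exact_mod_cast hD
  refine ⟨((d * r - b * s) / (a * d - b * c), (a * s - c * r) / (a * d - b * c)), ?_⟩
  ext
  · push_cast
    rw [eq_div_iff hR]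
    linear_combination (d : ℝ) * h1 - b * h2
  · push_cast
    rw [eq_div_iff hR]
    linear_combination (a : ℝ) * h2 - c * h1

theorem cd_unique (ω : R2) (h : IrrationalVec ω) (c d c' d' : ℤ) (e e' : ℚ)
    (hg : Int.gcd c d = 1) (hg' : Int.gcd c' d' = 1)
    (h1 : (c : ℝ) * ω.1 + (d : ℝ) * ω.2 + (e : ℝ) = 0)
    (h2 : (c' : ℝ) * ω.1 + (d' : ℝ) * ω.2 + (e' : ℝ) = 0) :
    (c' = c ∧ d' = d ∧ e' = e) ∨ (c' = -c ∧ d' = -d ∧ e' = -e) := by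
  have hD := cd_rational ω h c d c' d' (-e) (-e')
    (by push_cast; linarith) (by push_cast; linarith)
  obtain ⟨x, y, hxy⟩ := Int.isCoprime_iff_gcd_eq_one.mpr hg
  have hc : c' = c * (c' * x + d' * y) := by
    linear_combination -c' * hxy - y * hD
  have hd : d' = d * (c' * x + d' * y) := by
    linear_combination -d' * hxy + x * hD
  generalize c' * x + d' * y = t at hc hd
  have ht : IsUnit t := by
    apply (Int.isCoprime_iff_gcd_eq_one.mpr hg').isUnit_of_dvd' (x := t)
    · exact ⟨c, by rw [hc]; ring⟩
    · exact ⟨d, by rw [hd]; ring⟩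
  rcases Int.isUnit_iff.mp ht with rfl | rfl
  · left
    refine ⟨by omega, by omega, ?_⟩
    subst hc hd
    push_cast at h2
    have : (e' : ℝ) = e := by linarith
    exact_mod_cast this
  · right
    refine ⟨by omega, by omega, ?_⟩
    subst hc hd
    push_cast at h2
    have : (e' : ℝ) = -e := by linarith
    exact_mod_cast this

theorem cd_data_unique (ω : R2) (h : IrrationalVec ω) (c d p q c' d' p' q' : ℤ)
    (H : IsCharData ω c d p q) (H' : IsCharData ω c' d' p' q') :
    q' = q ∧ ((c' = c ∧ d' = d) ∨ (c' = -c ∧ d' = -d)) := by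
  obtain ⟨hg, hpq, hq, he⟩ := H
  obtain ⟨hg', hpq', hq', he'⟩ := H'
  have hu := cd_unique ω h c d c' d' ((p : ℚ) / q) ((p' : ℚ) / q') hg hg'
    (by push_cast; exact he) (by push_cast; exact he')
  rcases hu with ⟨h1, h2, h3⟩ | ⟨h1, h2, h3⟩
  · exact ⟨(Rat.div_int_inj hq' hq hpq' hpq h3).2, Or.inl ⟨h1, h2⟩⟩
  · have h3' : (p' : ℚ) / q' = ((-p : ℤ) : ℚ) / q := by rw [h3]; push_cast; ring
    have hpq2 : Nat.Coprime (-p).natAbs q.natAbs := by rw [Int.natAbs_neg]; exact hpq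
    exact ⟨(Rat.div_int_inj hq' hq hpq' hpq2 h3').2, Or.inr ⟨h1, h2⟩⟩

theorem cd_charVec_shift (ω : R2) (k : ℤ × ℤ) (v : R2) (H : IsCharacterVector ω v) :
    IsCharacterVector (ω + intVec k) v := by
  obtain ⟨c, d, hg, ⟨e, he⟩, hv⟩ := H
  refine ⟨c, d, hg, ⟨e - c * k.1 - d * k.2, ?_⟩, hv⟩
  simp only [intVec, Prod.fst_add, Prod.snd_add]
  push_cast
  linarith

theorem cd_alpha (ω : R2) (c d p q a b a' b' : ℤ) (H : IsCharData ω c d p q)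
    (h1 : a * d - b * c = 1) (h2 : a' * d - b' * c = 1) :
    ∃ m : ℤ, (q : ℝ) * ((a : ℝ) * ω.1 + (b : ℝ) * ω.2)
            - (q : ℝ) * ((a' : ℝ) * ω.1 + (b' : ℝ) * ω.2) = (m : ℝ) := by
  obtain ⟨hg, hpq, hq, he⟩ := H
  have hq0 : (q : ℝ) ≠ 0 := by exact_mod_cast hq.ne'
  have he2 : (q : ℝ) * ((c : ℝ) * ω.1 + (d : ℝ) * ω.2) = -p := by
    field_simp at he
    linarith
  have ha : a - a' = (a' * b - a * b') * c := by
    linear_combination a' * h1 - a * h2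
  have hb : b - b' = (a' * b - a * b') * d := by
    linear_combination b' * h1 - b * h2
  have ha' : (a : ℝ) - a' = (a' * b - a * b') * c := by exact_mod_cast ha
  have hb' : (b : ℝ) - b' = (a' * b - a * b') * d := by exact_mod_cast hb
  refine ⟨-((a' * b - a * b') * p), ?_⟩
  push_cast
  linear_combination (q : ℝ) * ω.1 * ha' + q * ω.2 * hb' + (a' * b - a * b' : ℝ) * he2

theorem cd_dT (x : ℝ) : dT x = ‖(x : UnitAddCircle)‖ := by
  rw [UnitAddCircle.norm_eq]; rfl

theorem cd_dT_add (x y : ℝ) (m : ℤ) (h : x - y = m) : dT x = dT y := by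
  have : x = y + m := by linarith
  rw [this, dT, dT, round_add_intCast]
  push_cast
  congr 1
  ring

theorem cd_dT_neg (x : ℝ) : dT (-x) = dT x := by
  rw [cd_dT, cd_dT, AddCircle.coe_neg, norm_neg]

/-- **Section 2.3.** For a semi-irrational ω ∈ ℝ²: (i) the data (c,d,e) with gcd(c,d)=1 and
c ω₁ + d ω₂ + e = 0 is unique up to sign; the character vectors and the character number only
depend on ω mod ℤ²; (ii) given a character vector, α mod ℤ does not depend on the completion
(a,b) to a matrix in SL(2,ℤ); (iii) the character frequency ‖α‖_𝕋 does not depend on any of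
the choices, and α is irrational. -/
theorem character_data_of_semi_irrational_vector
    (ω : R2) (hsemi : SemiIrrationalVec ω) :
    (∀ c d c' d' : ℤ, ∀ e e' : ℚ, Int.gcd c d = 1 → Int.gcd c' d' = 1 →
        (c : ℝ) * ω.1 + (d : ℝ) * ω.2 + (e : ℝ) = 0 →
        (c' : ℝ) * ω.1 + (d' : ℝ) * ω.2 + (e' : ℝ) = 0 →
        (c' = c ∧ d' = d ∧ e' = e) ∨ (c' = -c ∧ d' = -d ∧ e' = -e)) ∧
    (∀ k : ℤ × ℤ, ∀ v : R2, IsCharacterVector ω v ↔ IsCharacterVector (ω + intVec k) v) ∧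
    (∀ k : ℤ × ℤ, ∀ c d p q c' d' p' q' : ℤ, IsCharData ω c d p q →
        IsCharData (ω + intVec k) c' d' p' q' → q' = q) ∧
    (∀ c d p q a b a' b' : ℤ, IsCharData ω c d p q → a * d - b * c = 1 → a' * d - b' * c = 1 →
        ∃ m : ℤ, (q : ℝ) * ((a : ℝ) * ω.1 + (b : ℝ) * ω.2)
            - (q : ℝ) * ((a' : ℝ) * ω.1 + (b' : ℝ) * ω.2) = (m : ℝ)) ∧
    (∀ c d p q a b c' d' p' q' a' b' : ℤ, IsCharData ω c d p q → IsCharData ω c' d' p' q' →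
        a * d - b * c = 1 → a' * d' - b' * c' = 1 →
        dT ((q : ℝ) * ((a : ℝ) * ω.1 + (b : ℝ) * ω.2)) =
          dT ((q' : ℝ) * ((a' : ℝ) * ω.1 + (b' : ℝ) * ω.2))) ∧
    (∀ c d p q a b : ℤ, IsCharData ω c d p q → a * d - b * c = 1 →
        Irrational ((q : ℝ) * ((a : ℝ) * ω.1 + (b : ℝ) * ω.2))) := by
  have hI := hsemi.1
  refine ⟨fun c d c' d' e e' => cd_unique ω hI c d c' d' e e', ?_, ?_, ?_, ?_, ?_⟩
  · intro k v
    refine ⟨cd_charVec_shift ω k v, fun H => ?_⟩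
    have := cd_charVec_shift _ (-k) v H
    have e : ω + intVec k + intVec (-k) = ω := by
      ext <;> simp [intVec]
    rwa [e] at this
  · intro k c d p q c' d' p' q' H H'
    refine (cd_data_unique ω hI c d p q c' d' (p' + q' * (c' * k.1 + d' * k.2)) q' H ?_).1
    obtain ⟨hg, hpq, hq, he⟩ := H'
    have hq0 : (q' : ℝ) ≠ 0 := by exact_mod_cast hq.ne'
    refine ⟨hg, ?_, hq, ?_⟩
    · rw [← Int.isCoprime_iff_gcd_eq_one] at hpq ⊢
      exact hpq.add_mul_left_left _
    · simp only [intVec, Prod.fst_add, Prod.snd_add] at he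
      push_cast
      rw [add_div, mul_div_cancel_left₀ _ hq0]
      linarith
  · intro c d p q a b a' b' H h1 h2
    exact cd_alpha ω c d p q a b a' b' H h1 h2
  · intro c d p q a b c' d' p' q' a' b' H H' h1 h2
    obtain ⟨rfl, ⟨rfl, rfl⟩ | ⟨rfl, rfl⟩⟩ := cd_data_unique ω hI c d p q c' d' p' q' H H'
    · obtain ⟨m, hm⟩ := cd_alpha ω _ _ _ _ a b a' b' H h1 h2
      exact cd_dT_add _ _ m hm
    · obtain ⟨m, hm⟩ := cd_alpha ω _ _ _ _ a b (-a') (-b') H h1 (by linarith)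
      rw [cd_dT_add _ _ m hm, ← cd_dT_neg]
      congr 1
      push_cast
      ring
  · rintro c d p q a b ⟨hg, hpq, hq, he⟩ h1 ⟨r, hr⟩
    have hq0 : (q : ℝ) ≠ 0 := by exact_mod_cast hq.ne'
    have := cd_rational ω hI a b c d (r / q) (-(p / q))
      (by push_cast; rw [hr]; field_simp) (by push_cast; linarith)
    omega
end
end
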